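/- arXiv:2004.10903 — 3 statements merged into one kernel-verified Lean document; each statement's English description precedes it below -/
import Mathlib

section
/- Let n = 5, ω = exp(2πi/5), let A₅ ∈ M₅(ℂ) be the diagonal matrix with (A₅)_{jj} = ω^j for j = 0,…,4, and let B̂₅ ∈ M₅(ℂ) be the cyclic shift matrix with (B̂₅)_{jk} = 1 if j ≡ k+1 (mod 5) and 0 otherwise. Let A, B ∈ M₅(ℂ) be such that A is normal, the operator norm of B on Euclidean ℂ⁵ equals 1, and {(x,y,z) ∈ ℂ³ : det(x·A + y·B + z·AB − I) = 0} = {(x,y,z) ∈ ℂ³ : x⁵ + y⁵ + z⁵ = 1}. Then there exist a 5×5 permutation matrix P and a unitary U ∈ M₅(ℂ) such that either (U A Uᴴ, U B Uᴴ) = (Pᵀ A₅ P, B̂₅) or (U A Uᴴ, U B Uᴴ) = (B̂₅, Pᵀ A₅ P). -/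
open Matrix Complex

noncomputable section

/-- A permutation matrix: the matrix of a permutation `σ`, sending the standard
basis vector `e j` to `e (σ j)`. -/
def IsPermMatrix {n : ℕ} (P : Matrix (Fin n) (Fin n) ℂ) : Prop :=
  ∃ σ : Equiv.Perm (Fin n),
    P = Matrix.of fun i j : Fin n => if i = σ j then 1 else 0


lemma aux_poly (c0 c1 c2 c3 : ℂ) (h : ∀ s : ℂ, s * (c0 + c1 * s + c2 * s^2 + c3 * s^3) = 0) :
    c0 = 0 ∧ c1 = 0 ∧ c2 = 0 ∧ c3 = 0 := by
  have h1 := h 1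
  have h2 := h (-1)
  have h3 := h 2
  have h4 := h (-2)
  refine ⟨?_, ?_, ?_, ?_⟩
  · linear_combination (2/3) * h1 - (2/3) * h2 - (1/12) * h3 + (1/12) * h4
  · linear_combination (2/3) * h1 + (2/3) * h2 - (1/24) * h3 - (1/24) * h4
  · linear_combination -(1/6) * h1 + (1/6) * h2 + (1/12) * h3 - (1/12) * h4
  · linear_combination -(1/6) * h1 - (1/6) * h2 + (1/24) * h3 + (1/24) * h4

/-- the relabelling of the five indices -/
lemma exists_label (i j k l m : Fin 5) (h : [i, j, k, l, m].Nodup) :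
    ∃ e : Equiv.Perm (Fin 5), e 0 = i ∧ e 1 = j ∧ e 2 = k ∧ e 3 = l ∧ e 4 = m := by
  have hinj : Function.Injective (![i, j, k, l, m] : Fin 5 → Fin 5) := by
    have h2 := h
    simp only [List.nodup_cons, List.mem_cons, List.not_mem_nil, not_or, or_false] at h2
    obtain ⟨⟨h1, h2, h3, h4⟩, ⟨h5, h6, h7⟩, ⟨h8, h9⟩, h10, _⟩ := h2
    intro x y hxy
    fin_cases x <;> fin_cases y <;> simp_all [eq_comm]
  exact ⟨Equiv.ofBijective _ (Finite.injective_iff_bijective.mp hinj), rfl, rfl, rfl, rfl, rfl⟩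

lemma sum_label {M : Type*} [AddCommMonoid M] (F : Fin 5 → M) (i j k l m : Fin 5) (h : [i, j, k, l, m].Nodup) :
    ∑ x, F x = F i + F j + F k + F l + F m := by
  obtain ⟨e, rfl, rfl, rfl, rfl, rfl⟩ := exists_label i j k l m h
  rw [← Equiv.sum_comp e, Fin.sum_univ_five]

lemma cases_label (i j k l m : Fin 5) (h : [i, j, k, l, m].Nodup) (x : Fin 5) :
    x = i ∨ x = j ∨ x = k ∨ x = l ∨ x = m := by
  obtain ⟨e, rfl, rfl, rfl, rfl, rfl⟩ := exists_label i j k l m h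
  obtain ⟨y, rfl⟩ := e.surjective x
  fin_cases y <;> simp

/-- the pencil hypothesis -/
def Pencil (a : Fin 5 → ℂ) (B : Matrix (Fin 5) (Fin 5) ℂ) : Prop :=
  ∀ i j, ∀ s : ℂ, (Matrix.of fun x y => (if x = y then a x - a i else 0) + s * ((a x - a j) * B x y)).det = 0

lemma pencil_det (a : Fin 5 → ℂ) (ha : Function.Injective a) (B : Matrix (Fin 5) (Fin 5) ℂ)
    (hp : Pencil a B) (i j k l m : Fin 5) (h : [j, i, k, l, m].Nodup) (s : ℂ) :
    s * (Matrix.det !![B i i, B i k, B i l, B i m;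
      s * (a k - a j) * B k i, (a k - a i) + s * (a k - a j) * B k k,
         s * (a k - a j) * B k l, s * (a k - a j) * B k m;
      s * (a l - a j) * B l i,  s * (a l - a j) * B l k,
       (a l - a i) + s * (a l - a j) * B l l, s * (a l - a j) * B l m;
      s * (a m - a j) * B m i,  s * (a m - a j) * B m k,
        s * (a m - a j) * B m l, (a m - a i) + s * (a m - a j) * B m m]) = 0 := by
  have h0 := hp i j s
  obtain ⟨e, h1, h2, h3, h4, h5⟩ := exists_label j i k l m h
  rw [← Matrix.det_submatrix_equiv_self e] at h0
  have hij : a i - a j ≠ 0 := by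
    rw [sub_ne_zero]; intro hh; have := ha hh; subst this; simp at h
  rw [Matrix.det_succ_row_zero] at h0
  rw [Fin.sum_univ_succ] at h0
  have hz : ∀ x : Fin 4, ((Matrix.of fun x y => (if x = y then a x - a i else 0) + s * ((a x - a j) * B x y)).submatrix e e) 0 x.succ = 0 := by
    intro x
    have : e 0 ≠ e x.succ := fun hh => by
      have := e.injective hh
      exact absurd this (Fin.succ_ne_zero x).symm
    rw [h1] at this
    simp only [submatrix_apply, of_apply, if_neg this, h1]; ring
  simp only [hz] at h0
  have hd : (((Matrix.of fun x y => (if x = y then a x - a i else 0) + s * ((a x - a j) * B x y)).submatrix e e).submatrix Fin.succ (Fin.succAbove 0)) =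
    !![s * (a i - a j) * B i i, s * (a i - a j) *B i k, s * (a i - a j) *B i l, s * (a i - a j) *B i m;
      s * (a k - a j) * B k i, (a k - a i) + s * (a k - a j) * B k k,
         s * (a k - a j) * B k l, s * (a k - a j) * B k m;
      s * (a l - a j) * B l i,  s * (a l - a j) * B l k,
       (a l - a i) + s * (a l - a j) * B l l, s * (a l - a j) * B l m;
      s * (a m - a j) * B m i,  s * (a m - a j) * B m k,
        s * (a m - a j) * B m l, (a m - a i) + s * (a m - a j) * B m m] := by
    have e1 : e (Fin.succ (0 : Fin 4)) = i := h2
    have e2 : e (Fin.succ (1 : Fin 4)) = k := h3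
    have e3 : e (Fin.succ (2 : Fin 4)) = l := h4
    have e4 : e (Fin.succ (3 : Fin 4)) = m := h5
    simp only [List.nodup_cons, List.mem_cons, List.not_mem_nil, not_or, or_false] at h
    obtain ⟨⟨n1, n2, n3, n4⟩, ⟨n5, n6, n7⟩, ⟨n8, n9⟩, n10, _⟩ := h
    have n5' := Ne.symm n5
    have n6' := Ne.symm n6
    have n7' := Ne.symm n7
    have n8' := Ne.symm n8
    have n9' := Ne.symm n9
    have n10' := Ne.symm n10
    ext x y
    fin_cases x <;> fin_cases y <;>
      simp [e1, e2, e3, e4, *] <;> ring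
  rw [hd] at h0
  simp [Matrix.det_succ_row_zero, Fin.sum_univ_succ, h1, Fin.succAbove, hij] at h0 ⊢
  have hij' : a j - a i ≠ 0 := fun hh => hij (by linear_combination -hh)
  rcases h0 with h0 | h0
  · exact absurd h0 hij'
  · by_cases hs : s = 0
    · simp [hs]
    · right
      have : (a i - a j) * s ≠ 0 := mul_ne_zero hij hs
      apply (mul_eq_zero.mp _).resolve_left this
      linear_combination h0


lemma nodup5 {i j k l m : Fin 5} (h : [i, j, k, l, m].Nodup) :
    (i ≠ j ∧ i ≠ k ∧ i ≠ l ∧ i ≠ m) ∧ (j ≠ k ∧ j ≠ l ∧ j ≠ m) ∧ (k ≠ l ∧ k ≠ m) ∧ l ≠ m := by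
  simp only [List.nodup_cons, List.mem_cons, List.not_mem_nil, not_or, or_false] at h
  tauto

lemma exists_rest (i j : Fin 5) (h : i ≠ j) : ∃ k l m : Fin 5, [j, i, k, l, m].Nodup := by
  revert i j; decide

lemma pencil_diag (a : Fin 5 → ℂ) (ha : Function.Injective a) (B : Matrix (Fin 5) (Fin 5) ℂ)
    (hp : Pencil a B) (i : Fin 5) : B i i = 0 := by
  obtain ⟨j, hj⟩ : ∃ j, i ≠ j := exists_ne i |>.imp fun _ h => h.symm
  obtain ⟨k, l, m, h⟩ := exists_rest i j hj
  have h1 := pencil_det a ha B hp i j k l m h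
  obtain ⟨⟨n1, n2, n3, n4⟩, ⟨n5, n6, n7⟩, ⟨n8, n9⟩, n10⟩ := nodup5 h
  have hk : a k - a i ≠ 0 := sub_ne_zero.mpr (ha.ne n5.symm)
  have hl : a l - a i ≠ 0 := sub_ne_zero.mpr (ha.ne n6.symm)
  have hm : a m - a i ≠ 0 := sub_ne_zero.mpr (ha.ne n7.symm)
  generalize a k - a i = Ek at *
  generalize a l - a i = El at *
  generalize a m - a i = Em at *
  generalize a k - a j = dk at *
  generalize a l - a j = dl at *
  generalize a m - a j = dm at *
  have h2 : B i i * (Ek * El * Em) = 0 := by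
    simp only [Matrix.det_succ_row_zero, Fin.sum_univ_succ] at h1
    simp [Fin.succAbove] at h1
    have h3 := Continuous.ext_on (dense_compl_singleton (0:ℂ)) (f := fun s : ℂ => _) (g := fun _ => (0:ℂ))
      ?_ continuous_const (fun s hs => (h1 s).resolve_left hs)
    · have := congrFun h3 0
      simp at this
      rcases this with h | h | h | h <;> simp [h]
    · fun_prop
  simpa [hk, hl, hm] using h2

lemma aux3 (E : ℂ) (hE : E ≠ 0) (P Q R : ℂ) (h : ∀ s : ℂ, s * (-E * P * s + E * Q * s^2 - E * R * s^3) = 0) :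
    P = 0 ∧ Q = 0 ∧ R = 0 := by
  obtain ⟨-, h1, h2, h3⟩ := aux_poly 0 (-E * P) (E * Q) (-E * R) (fun s => by linear_combination h s)
  simp [hE] at h1 h2 h3
  exact ⟨h1, h2, h3⟩

/-- the ratios -/
def rr (a : Fin 5 → ℂ) (i j k : Fin 5) : ℂ := (a k - a j) / (a k - a i)

lemma pencil_cond (a : Fin 5 → ℂ) (ha : Function.Injective a) (B : Matrix (Fin 5) (Fin 5) ℂ)
    (hp : Pencil a B) (i j k l m : Fin 5) (h : [j, i, k, l, m].Nodup) :
    (B i k * (rr a i j k * B k i) + B i l * (rr a i j l * B l i) + B i m * (rr a i j m * B m i) = 0) ∧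
    (B i k * rr a i j k * (B k l * (rr a i j l * B l i) + B k m * (rr a i j m * B m i))
      + B i l * rr a i j l * (B l k * (rr a i j k * B k i) + B l m * (rr a i j m * B m i))
      + B i m * rr a i j m * (B m k * (rr a i j k * B k i) + B m l * (rr a i j l * B l i)) = 0) ∧
    (B i k * ((rr a i j k * B k l * (rr a i j l * B l m) * (rr a i j m * B m i)
        + rr a i j k * B k m * (rr a i j m * B m l) * (rr a i j l * B l i)
        - (rr a i j l * B l m) * (rr a i j m * B m l) * (rr a i j k * B k i)))
     + B i l * ((rr a i j l * B l k * (rr a i j k * B k m) * (rr a i j m * B m i)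
        + rr a i j l * B l m * (rr a i j m * B m k) * (rr a i j k * B k i)
        - (rr a i j k * B k m) * (rr a i j m * B m k) * (rr a i j l * B l i)))
     + B i m * ((rr a i j m * B m k * (rr a i j k * B k l) * (rr a i j l * B l i)
        + rr a i j m * B m l * (rr a i j l * B l k) * (rr a i j k * B k i)
        - (rr a i j k * B k l) * (rr a i j l * B l k) * (rr a i j m * B m i))) = 0) := by
  have h1 := pencil_det a ha B hp i j k l m h
  obtain ⟨⟨n1, n2, n3, n4⟩, ⟨n5, n6, n7⟩, ⟨n8, n9⟩, n10⟩ := nodup5 h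
  have hk : a k - a i ≠ 0 := sub_ne_zero.mpr (ha.ne n5.symm)
  have hl : a l - a i ≠ 0 := sub_ne_zero.mpr (ha.ne n6.symm)
  have hm : a m - a i ≠ 0 := sub_ne_zero.mpr (ha.ne n7.symm)
  have e1 : a k - a j = rr a i j k * (a k - a i) := by unfold rr; field_simp
  have e2 : a l - a j = rr a i j l * (a l - a i) := by unfold rr; field_simp
  have e3 : a m - a j = rr a i j m * (a m - a i) := by unfold rr; field_simp
  rw [e1, e2, e3] at h1
  simp only [pencil_diag a ha B hp] at h1
  generalize a k - a i = Ek at *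
  generalize a l - a i = El at *
  generalize a m - a i = Em at *
  generalize rr a i j k = rk at *
  generalize rr a i j l = rl at *
  generalize rr a i j m = rm at *
  clear e1 e2 e3 n1 n2 n3 n4 n5 n6 n7 n8 n9 n10 hp ha h
  simp only [Matrix.det_succ_row_zero, Fin.sum_univ_succ] at h1
  simp [Fin.succAbove] at h1
  have hE : Ek * El * Em ≠ 0 := mul_ne_zero (mul_ne_zero hk hl) hm
  refine aux3 (Ek * El * Em) hE _ _ _ fun s => ?_
  have := h1 s
  rw [← mul_eq_zero] at this
  linear_combination this


open scoped ComplexConjugate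

/-- the standing hypotheses after diagonalising `A` -/
structure Good (a : Fin 5 → ℂ) (B : Matrix (Fin 5) (Fin 5) ℂ) : Prop where
  inj : Function.Injective a
  nrm : ∀ x, a x * conj (a x) = 1
  pen : Pencil a B
  hu1 : B * Bᴴ = 1
  hu2 : Bᴴ * B = 1

namespace Good
variable {a : Fin 5 → ℂ} {B : Matrix (Fin 5) (Fin 5) ℂ}

lemma diag (h : Good a B) (i : Fin 5) : B i i = 0 := pencil_diag a h.inj B h.pen i

lemma row (h : Good a B) (i j : Fin 5) : ∑ k, B i k * conj (B j k) = if i = j then 1 else 0 := by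
  have := congrFun (congrFun h.hu1 i) j
  simpa [Matrix.mul_apply, Matrix.one_apply] using this

lemma col (h : Good a B) (i j : Fin 5) : ∑ k, conj (B k i) * B k j = if i = j then 1 else 0 := by
  have := congrFun (congrFun h.hu2 i) j
  simpa [Matrix.mul_apply, Matrix.one_apply] using this

lemma col_of_row (h : Good a B) {i j : Fin 5} (hr : ∀ k, k ≠ j → B i k = 0) :
    ∀ k, k ≠ i → B k j = 0 := by
  intro k hk
  have h1 := h.row i i
  have h2 := h.row i k
  rw [Finset.sum_eq_single j (fun b _ hb => by simp [hr b hb]) (by simp)] at h1 h2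
  simp [hk.symm] at h2
  rcases h2 with h2 | h2
  · simp [h2] at h1
  · exact h2

lemma row_of_col (h : Good a B) {i j : Fin 5} (hr : ∀ k, k ≠ j → B k i = 0) :
    ∀ k, k ≠ i → B j k = 0 := by
  intro k hk
  have h1 := h.col i i
  have h2 := h.col i k
  rw [Finset.sum_eq_single j (fun b _ hb => by simp [hr b hb]) (by simp)] at h1 h2
  simp [hk.symm] at h2
  rcases h2 with h2 | h2
  · simp [h2] at h1
  · exact h2

/-- solve `B v = μ e_j` -/
lemma solve_col (h : Good a B) (v : Fin 5 → ℂ) (j : Fin 5) (hv : ∀ n, n ≠ j → ∑ k, B n k * v k = 0) (k : Fin 5) :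
    v k = (∑ k, B j k * v k) * conj (B j k) := by
  have e : B.mulVec v = Pi.single j (∑ k, B j k * v k) := by
    ext n
    by_cases hn : n = j
    · subst hn; simp [Matrix.mulVec, dotProduct]
    · simp [hn, Matrix.mulVec, dotProduct, hv n hn]
  have e2 : v = Bᴴ.mulVec (Pi.single j (∑ k, B j k * v k)) := by
    rw [← e, Matrix.mulVec_mulVec, h.hu2, Matrix.one_mulVec]
  conv_lhs => rw [e2]
  simp [mul_comm]

lemma solve_row (h : Good a B) (v : Fin 5 → ℂ) (j : Fin 5) (hv : ∀ n, n ≠ j → ∑ k, v k * B k n = 0) (k : Fin 5) :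
    v k = (∑ k, v k * B k j) * conj (B k j) := by
  have e : B.vecMul v = Pi.single j (∑ k, v k * B k j) := by
    ext n
    by_cases hn : n = j
    · subst hn; simp [Matrix.vecMul, dotProduct]
    · simp [hn, Matrix.vecMul, dotProduct, hv n hn]
  have e2 : v = Bᴴ.vecMul (Pi.single j (∑ k, v k * B k j)) := by
    rw [← e, Matrix.vecMul_vecMul, h.hu1, Matrix.vecMul_one]
  conv_lhs => rw [e2]
  simp

end Good

/-- some column is monomial -/
def Mono (B : Matrix (Fin 5) (Fin 5) ℂ) : Prop := ∃ i j, ∀ k, k ≠ j → B k i = 0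

/-- the key relation -/
def Rc (a : Fin 5 → ℂ) (B : Matrix (Fin 5) (Fin 5) ℂ) (i j : Fin 5) : Prop :=
  ∃ μ : ℂ, μ ≠ 0 ∧ ∀ k, k ≠ i → rr a i j k * B k i = μ * conj (B j k)

lemma cross_aux (x1 x2 x3 w1 w2 w3 y1 y2 y3 u1 u2 u3 : ℂ)
    (h1 : y1 * x1 + y2 * x2 + y3 * x3 = 0) (h2 : y1 * w1 + y2 * w2 + y3 * w3 = 0)
    (h3 : u1 * x1 + u2 * x2 + u3 * x3 = 0) (h4 : u1 * w1 + u2 * w2 + u3 * w3 = 0) :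
    (x1 * w2 = x2 * w1 ∧ x1 * w3 = x3 * w1 ∧ x2 * w3 = x3 * w2) ∨
    (y1 * u2 = y2 * u1 ∧ y1 * u3 = y3 * u1 ∧ y2 * u3 = y3 * u2) := by
  by_contra hcon
  rw [not_or] at hcon
  obtain ⟨ha, hb⟩ := hcon
  apply hb
  have key : ∀ z : ℂ, z * (x1 * w2 - x2 * w1) = 0 → z * (x1 * w3 - x3 * w1) = 0 →
     z * (x2 * w3 - x3 * w2) = 0 → z = 0 := by
    intro z z1 z2 z3
    by_contra hz
    apply ha
    simp [hz, sub_eq_zero] at z1 z2 z3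
    exact ⟨z1, z2, z3⟩
  -- n = (n1,n2,n3) = x × w
  refine ⟨sub_eq_zero.mp (key _ ?_ ?_ ?_), sub_eq_zero.mp (key _ ?_ ?_ ?_), sub_eq_zero.mp (key _ ?_ ?_ ?_)⟩
  all_goals grind

lemma par_aux (x1 x2 x3 w1 w2 w3 : ℂ) (hx : ¬ (x1 = 0 ∧ x2 = 0 ∧ x3 = 0))
    (h : x1 * w2 = x2 * w1 ∧ x1 * w3 = x3 * w1 ∧ x2 * w3 = x3 * w2) :
    ∃ c : ℂ, w1 = c * x1 ∧ w2 = c * x2 ∧ w3 = c * x3 := by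
  obtain ⟨h1, h2, h3⟩ := h
  by_cases a1 : x1 = 0
  · by_cases a2 : x2 = 0
    · have a3 : x3 ≠ 0 := fun h => hx ⟨a1, a2, h⟩
      refine ⟨w3 / x3, ?_, ?_, ?_⟩ <;> field_simp <;> grind
    · refine ⟨w2 / x2, ?_, ?_, ?_⟩ <;> field_simp <;> grind
  · refine ⟨w1 / x1, ?_, ?_, ?_⟩ <;> field_simp <;> grind


lemma rr_ne {a : Fin 5 → ℂ} (ha : Function.Injective a) {i j k : Fin 5} (h1 : k ≠ i) (h2 : k ≠ j) :
    rr a i j k ≠ 0 :=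
  div_ne_zero (sub_ne_zero.mpr (ha.ne h2)) (sub_ne_zero.mpr (ha.ne h1))

lemma rc_of_x {a : Fin 5 → ℂ} {B : Matrix (Fin 5) (Fin 5) ℂ} (h : Good a B) (i j k l m : Fin 5)
    (hd : [j, i, k, l, m].Nodup) (hx : ¬ (B k i = 0 ∧ B l i = 0 ∧ B m i = 0)) (c : ℂ)
    (h0 : B i k * (rr a i j k * B k i) + B i l * (rr a i j l * B l i) + B i m * (rr a i j m * B m i) = 0)
    (hk : B k l * (rr a i j l * B l i) + B k m * (rr a i j m * B m i) = c * B k i)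
    (hl : B l k * (rr a i j k * B k i) + B l m * (rr a i j m * B m i) = c * B l i)
    (hm : B m k * (rr a i j k * B k i) + B m l * (rr a i j l * B l i) = c * B m i) : Rc a B i j := by
  obtain ⟨⟨n1, n2, n3, n4⟩, ⟨n5, n6, n7⟩, ⟨n8, n9⟩, n10⟩ := nodup5 hd
  have hrj : rr a i j j = 0 := by simp [rr]
  have hs := h.solve_col (fun t => if t = i then -c else rr a i j t * B t i) j (by
    intro n hn
    rw [sum_label _ j i k l m hd]
    rcases cases_label j i k l m hd n with rfl | rfl | rfl | rfl | rfl
    · exact absurd rfl hn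
    all_goals simp [n1, n1.symm, n2, n2.symm, n3, n3.symm, n4, n4.symm, n5, n5.symm, n6, n6.symm, n7, n7.symm, h.diag, hrj]
    · linear_combination h0
    · linear_combination hk
    · linear_combination hl
    · linear_combination hm)
  generalize (∑ k, B j k * (fun t => if t = i then -c else rr a i j t * B t i) k) = μ at hs
  refine ⟨μ, ?_, ?_⟩
  · rintro rfl
    apply hx
    have s1 := hs k
    have s2 := hs l
    have s3 := hs m
    simp [n5.symm, n6.symm, n7.symm, rr_ne h.inj n5.symm n2.symm, rr_ne h.inj n6.symm n3.symm, rr_ne h.inj n7.symm n4.symm] at s1 s2 s3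
    exact ⟨s1, s2, s3⟩
  · intro t ht
    have := hs t
    simpa [ht] using this

lemma rc_of_y {a : Fin 5 → ℂ} {B : Matrix (Fin 5) (Fin 5) ℂ} (h : Good a B) (i j k l m : Fin 5)
    (hd : [j, i, k, l, m].Nodup) (hx : ¬ (B i k = 0 ∧ B i l = 0 ∧ B i m = 0)) (c : ℂ)
    (h0 : B i k * (rr a i j k * B k i) + B i l * (rr a i j l * B l i) + B i m * (rr a i j m * B m i) = 0)
    (hk : B i l * rr a i j l * B l k + B i m * rr a i j m * B m k = c * B i k)
    (hl : B i k * rr a i j k * B k l + B i m * rr a i j m * B m l = c * B i l)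
    (hm : B i k * rr a i j k * B k m + B i l * rr a i j l * B l m = c * B i m) : Rc a B j i := by
  obtain ⟨⟨n1, n2, n3, n4⟩, ⟨n5, n6, n7⟩, ⟨n8, n9⟩, n10⟩ := nodup5 hd
  have hrj : rr a i j j = 0 := by simp [rr]
  have hs := h.solve_row (fun t => if t = i then -c else rr a i j t * B i t) j (by
    intro n hn
    rw [sum_label _ j i k l m hd]
    rcases cases_label j i k l m hd n with rfl | rfl | rfl | rfl | rfl
    · exact absurd rfl hn
    all_goals simp [n1, n1.symm, n2, n2.symm, n3, n3.symm, n4, n4.symm, n5, n5.symm, n6, n6.symm, n7, n7.symm, h.diag, hrj]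
    · linear_combination h0
    · linear_combination hk
    · linear_combination hl
    · linear_combination hm)
  generalize (∑ k, (fun t => if t = i then -c else rr a i j t * B i t) k * B k j) = μ at hs
  have hμ : μ ≠ 0 := by
    rintro rfl
    apply hx
    have s1 := hs k
    have s2 := hs l
    have s3 := hs m
    simp [n5.symm, n6.symm, n7.symm, rr_ne h.inj n5.symm n2.symm, rr_ne h.inj n6.symm n3.symm, rr_ne h.inj n7.symm n4.symm] at s1 s2 s3
    exact ⟨s1, s2, s3⟩
  have hne : ∀ x, a x ≠ 0 := fun x hx => by have := h.nrm x; simp [hx] at this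
  have hcj : ∀ x, conj (a x) = (a x)⁻¹ := fun x => by
    exact eq_inv_of_mul_eq_one_right (h.nrm x)
  refine ⟨a i / a j / conj μ, div_ne_zero (div_ne_zero (hne i) (hne j)) (by simpa using hμ), ?_⟩
  intro t ht
  by_cases hti : t = i
  · subst hti; simp [rr, h.diag]
  have := congrArg conj (hs t)
  simp [hti, rr, hcj] at this
  have d1 : a t - a i ≠ 0 := sub_ne_zero.mpr (h.inj.ne hti)
  have d2 : a t - a j ≠ 0 := sub_ne_zero.mpr (h.inj.ne ht)
  have d3 := hne t
  have d4 := hne i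
  have d5 := hne j
  have d1' : a i - a t ≠ 0 := sub_ne_zero.mpr (h.inj.ne (Ne.symm hti))
  have e1 : ((a t)⁻¹ - (a j)⁻¹) / ((a t)⁻¹ - (a i)⁻¹) = (a t - a j) / (a t - a i) * (a i / a j) := by
    field_simp
    ring
  rw [e1] at this
  have hμ' : conj μ ≠ 0 := by simpa using hμ
  unfold rr
  field_simp at this ⊢
  linear_combination -this

lemma rc_or {a : Fin 5 → ℂ} {B : Matrix (Fin 5) (Fin 5) ℂ} (h : Good a B) (hM : ¬ Mono B) (i j : Fin 5)
    (hij : i ≠ j) : Rc a B i j ∨ Rc a B j i := by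
  obtain ⟨k, l, m, hd⟩ := exists_rest i j hij
  obtain ⟨c1, c2, c3⟩ := pencil_cond a h.inj B h.pen i j k l m hd
  obtain ⟨⟨n1, n2, n3, n4⟩, ⟨n5, n6, n7⟩, ⟨n8, n9⟩, n10⟩ := nodup5 hd
  have rk := rr_ne h.inj n5.symm n2.symm
  have rl := rr_ne h.inj n6.symm n3.symm
  have rm := rr_ne h.inj n7.symm n4.symm
  have hx : ¬ (B k i = 0 ∧ B l i = 0 ∧ B m i = 0) := by
    rintro ⟨x1, x2, x3⟩
    apply hM
    refine ⟨i, j, fun t ht => ?_⟩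
    rcases cases_label j i k l m hd t with rfl | rfl | rfl | rfl | rfl
    · exact absurd rfl ht
    · exact h.diag _
    all_goals assumption
  have hy : ¬ (B i k = 0 ∧ B i l = 0 ∧ B i m = 0) := by
    rintro ⟨x1, x2, x3⟩
    apply hM
    refine ⟨j, i, h.col_of_row fun t ht => ?_⟩
    rcases cases_label j i k l m hd t with rfl | rfl | rfl | rfl | rfl
    · exact absurd rfl ht
    · exact h.diag _
    all_goals assumption
  rcases cross_aux (rr a i j k * B k i) (rr a i j l * B l i) (rr a i j m * B m i)
    (rr a i j k * (B k l * (rr a i j l * B l i) + B k m * (rr a i j m * B m i)))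
    (rr a i j l * (B l k * (rr a i j k * B k i) + B l m * (rr a i j m * B m i)))
    (rr a i j m * (B m k * (rr a i j k * B k i) + B m l * (rr a i j l * B l i)))
    (B i k) (B i l) (B i m)
    (B i l * rr a i j l * B l k + B i m * rr a i j m * B m k)
    (B i k * rr a i j k * B k l + B i m * rr a i j m * B m l)
    (B i k * rr a i j k * B k m + B i l * rr a i j l * B l m)
    c1 (by linear_combination c2) (by linear_combination c2)
    (by linear_combination c3 + (rr a i j k * B k l * (rr a i j l * B l k) + rr a i j k * B k m * (rr a i j m * B m k) + rr a i j l * B l m * (rr a i j m * B m l)) * c1) with hc | hc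
  · left
    obtain ⟨c, d1, d2, d3⟩ := par_aux _ _ _ _ _ _ (by simpa [rk, rl, rm] using hx) hc
    refine rc_of_x h i j k l m hd hx c c1 ?_ ?_ ?_
    · apply mul_left_cancel₀ rk; linear_combination d1
    · apply mul_left_cancel₀ rl; linear_combination d2
    · apply mul_left_cancel₀ rm; linear_combination d3
  · right
    obtain ⟨c, d1, d2, d3⟩ := par_aux _ _ _ _ _ _ hy hc
    exact rc_of_y h i j k l m hd hy c c1 d1 d2 d3


lemma rc_row {a : Fin 5 → ℂ} {B : Matrix (Fin 5) (Fin 5) ℂ} (h : Good a B) {i j : Fin 5}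
    (hr : Rc a B i j) : ∃ c μ : ℂ, μ ≠ 0 ∧ (∀ k, k ≠ i → rr a i j k * B k i = μ * conj (B j k)) ∧
      ∀ n, c * B n i + (∑ t, B n t * B t i) + (a i - a j) * (∑ t, B n t * B t i * (a t - a i)⁻¹) =
        if n = j then μ else 0 := by
  obtain ⟨μ, hμ, hk⟩ := hr
  refine ⟨μ * conj (B j i), μ, hμ, hk, fun n => ?_⟩
  have h1 := h.row n j
  have h2 : ∑ t, (B n t * B t i + (a i - a j) * (B n t * B t i * (a t - a i)⁻¹)) =
      ∑ t, (μ * (B n t * conj (B j t)) - if t = i then μ * (B n t * conj (B j t)) else 0) := by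
    refine Finset.sum_congr rfl fun t _ => ?_
    by_cases ht : t = i
    · subst ht; simp [h.diag]
    · have := hk t ht
      have d : a t - a i ≠ 0 := sub_ne_zero.mpr (h.inj.ne ht)
      simp only [ht, if_false, sub_zero]
      rw [show μ * (B n t * conj (B j t)) = B n t * (μ * conj (B j t)) by ring, ← this]
      unfold rr
      field_simp
      ring
  rw [Finset.sum_add_distrib, Finset.sum_sub_distrib, ← Finset.mul_sum, ← Finset.mul_sum, h1] at h2
  simp at h2
  rw [add_assoc, h2]
  split_ifs <;> ring

lemma rc_out {a : Fin 5 → ℂ} {B : Matrix (Fin 5) (Fin 5) ℂ} (h : Good a B) (hM : ¬ Mono B)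
    (m i j k l : Fin 5) (hd : [m, i, j, k, l].Nodup) (hj : Rc a B i j) (hk : Rc a B i k) (hl : Rc a B i l) :
    False := by
  obtain ⟨⟨n1, n2, n3, n4⟩, ⟨n5, n6, n7⟩, ⟨n8, n9⟩, n10⟩ := nodup5 hd
  obtain ⟨cj, μj, zj, rj, ej⟩ := rc_row h hj
  obtain ⟨ck, μk, zk, rk, ek⟩ := rc_row h hk
  obtain ⟨cl, μl, zl, rl, el⟩ := rc_row h hl
  have hkl : a l - a k ≠ 0 := sub_ne_zero.mpr (h.inj.ne n10.symm)
  have key : ∀ n, ((a l - a k) * cj + (a j - a l) * ck + (a k - a j) * cl) * B n i =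
    (a l - a k) * (if n = j then μj else 0) + (a j - a l) * (if n = k then μk else 0)
      + (a k - a j) * (if n = l then μl else 0) := by
    intro n
    rw [← ej, ← ek, ← el]
    ring
  have k1 := key j
  have k2 := key m
  simp [n8, n9, n2, n3, n4] at k1 k2
  have hb : B m i = 0 := by
    rcases k2 with k2 | k2
    · rw [k2, zero_mul] at k1
      simp [hkl, zj] at k1
    · exact k2
  have sj := rj m n1
  have sk := rk m n1
  have sl := rl m n1
  simp [hb, zj, zk, zl] at sj sk sl
  apply hM
  refine ⟨m, i, fun t ht => ?_⟩
  rcases cases_label m i j k l hd t with rfl | rfl | rfl | rfl | rfl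
  · exact h.diag _
  · exact absurd rfl ht
  all_goals assumption

lemma sw1 {i j k l m : Fin 5} (h : [i, j, k, l, m].Nodup) : [j, i, k, l, m].Nodup := by
  obtain ⟨⟨n1, n2, n3, n4⟩, ⟨n5, n6, n7⟩, ⟨n8, n9⟩, n10⟩ := nodup5 h
  have := n1.symm
  have := n5.symm
  have := n8.symm
  have := n10.symm
  simp [*]

lemma sw2 {i j k l m : Fin 5} (h : [i, j, k, l, m].Nodup) : [i, k, j, l, m].Nodup := by
  obtain ⟨⟨n1, n2, n3, n4⟩, ⟨n5, n6, n7⟩, ⟨n8, n9⟩, n10⟩ := nodup5 h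
  have := n1.symm
  have := n5.symm
  have := n8.symm
  have := n10.symm
  simp [*]

lemma sw3 {i j k l m : Fin 5} (h : [i, j, k, l, m].Nodup) : [i, j, l, k, m].Nodup := by
  obtain ⟨⟨n1, n2, n3, n4⟩, ⟨n5, n6, n7⟩, ⟨n8, n9⟩, n10⟩ := nodup5 h
  have := n1.symm
  have := n5.symm
  have := n8.symm
  have := n10.symm
  simp [*]

lemma sw4 {i j k l m : Fin 5} (h : [i, j, k, l, m].Nodup) : [i, j, k, m, l].Nodup := by
  obtain ⟨⟨n1, n2, n3, n4⟩, ⟨n5, n6, n7⟩, ⟨n8, n9⟩, n10⟩ := nodup5 h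
  have := n1.symm
  have := n5.symm
  have := n8.symm
  have := n10.symm
  simp [*]

open Classical in
lemma ind_aux (P Q S T : Prop) (h1 : P → Q → S → False) (h2 : P → Q → T → False)
    (h3 : P → S → T → False) (h4 : Q → S → T → False) :
    (if P then 1 else 0) + (if Q then 1 else 0) + (if S then 1 else 0) + (if T then 1 else 0) ≤ (2 : ℕ) := by
  split_ifs <;> simp_all

set_option maxHeartbeats 1000000 in
lemma tournament (R : Fin 5 → Fin 5 → Prop) (h1 : ∀ i j, i ≠ j → R i j ∨ R j i)
    (h2 : ∀ m i j k l, [m, i, j, k, l].Nodup → R i j → R i k → R i l → False) :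
    ∃ e : Equiv.Perm (Fin 5), ∀ i, R (e i) (e (i + 1)) ∧ R (e i) (e (i + 2)) := by
  classical
  let f : Fin 5 → Fin 5 → ℕ := fun x y => if R x y then 1 else 0
  have f1 : ∀ x y, f x y ≤ 1 := fun x y => by dsimp only [f]; split_ifs <;> simp
  have fR : ∀ x y, f x y = 1 → R x y := fun x y hh => by
    by_contra hc; simp [f, hc] at hh
  have fR' : ∀ x y, R x y → f x y = 1 := fun x y hh => by simp [f, hh]
  have a1 : ∀ x y, x ≠ y → 1 ≤ f x y + f y x := by
    intro x y hxy
    rcases h1 x y hxy with hh | hh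
    · rw [fR' _ _ hh]; omega
    · rw [fR' _ _ hh]; omega
  have a2 : ∀ v w x y z, [v, w, x, y, z].Nodup → f v w + f v x + f v y + f v z ≤ 2 := by
    intro v w x y z hd
    have perm1 : [w, v, x, y, z].Nodup := sw1 hd
    have perm2 : [x, v, w, y, z].Nodup := sw1 (sw2 hd)
    have perm3 : [y, v, w, x, z].Nodup := sw1 (sw2 (sw3 hd))
    have perm4 : [z, v, w, x, y].Nodup := sw1 (sw2 (sw3 (sw4 hd)))
    have q1 := h2 _ _ _ _ _ perm1
    have q2 := h2 _ _ _ _ _ perm2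
    have q3 := h2 _ _ _ _ _ perm3
    have q4 := h2 _ _ _ _ _ perm4
    exact ind_aux _ _ _ _ q4 q3 q2 q1
  have b0 := a2 0 1 2 3 4 (by decide)
  have b1 := a2 1 0 2 3 4 (by decide)
  have b2 := a2 2 0 1 3 4 (by decide)
  have b3 := a2 3 0 1 2 4 (by decide)
  have b4 := a2 4 0 1 2 3 (by decide)
  have c01 := a1 0 1 (by decide)
  have c02 := a1 0 2 (by decide)
  have c03 := a1 0 3 (by decide)
  have c04 := a1 0 4 (by decide)
  have c12 := a1 1 2 (by decide)
  have c13 := a1 1 3 (by decide)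
  have c14 := a1 1 4 (by decide)
  have c23 := a1 2 3 (by decide)
  have c24 := a1 2 4 (by decide)
  have c34 := a1 3 4 (by decide)
  clear_value f
  have e01 : f 0 1 + f 1 0 = 1 := by linarith
  have e02 : f 0 2 + f 2 0 = 1 := by linarith
  have e03 : f 0 3 + f 3 0 = 1 := by linarith
  have e04 : f 0 4 + f 4 0 = 1 := by linarith
  have e12 : f 1 2 + f 2 1 = 1 := by linarith
  have e13 : f 1 3 + f 3 1 = 1 := by linarith
  have e14 : f 1 4 + f 4 1 = 1 := by linarith
  have e23 : f 2 3 + f 3 2 = 1 := by linarith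
  have e24 : f 2 4 + f 4 2 = 1 := by linarith
  have e34 : f 3 4 + f 4 3 = 1 := by linarith
  have d1 : ∀ x y, x ≠ y → f x y + f y x = 1 := by
    have q : ∀ x y : Fin 5, x < y → f x y + f y x = 1 := by
      intro x y hxy
      fin_cases x <;> fin_cases y <;> first | exact absurd hxy (by decide) | exact e01 | exact e02 | exact e03 | exact e04 | exact e12 | exact e13 | exact e14 | exact e23 | exact e24 | exact e34
    intro x y hxy
    rcases lt_or_gt_of_ne hxy with hh | hh
    · exact q x y hh
    · rw [add_comm]; exact q y x hh
  have d2 : ∀ v w x y z, [v, w, x, y, z].Nodup → f v w + f v x + f v y + f v z = 2 := by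
    have hs : ∀ v, f v v + 2 = f v 0 + f v 1 + f v 2 + f v 3 + f v 4 := by
      intro v; fin_cases v
      · show f 0 0 + 2 = f 0 0 + f 0 1 + f 0 2 + f 0 3 + f 0 4; linarith
      · show f 1 1 + 2 = f 1 0 + f 1 1 + f 1 2 + f 1 3 + f 1 4; linarith
      · show f 2 2 + 2 = f 2 0 + f 2 1 + f 2 2 + f 2 3 + f 2 4; linarith
      · show f 3 3 + 2 = f 3 0 + f 3 1 + f 3 2 + f 3 3 + f 3 4; linarith
      · show f 4 4 + 2 = f 4 0 + f 4 1 + f 4 2 + f 4 3 + f 4 4; linarith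
    intro v w x y z hd
    have e1 := hs v
    have e2 := sum_label (f v) v w x y z hd
    rw [Fin.sum_univ_five] at e2
    omega
  have final : ∀ z p q r s, [z, p, q, r, s].Nodup → f z p = 1 → f z q = 1 → f p q = 1 → f p r = 1 →
      ∃ e : Equiv.Perm (Fin 5), ∀ i, R (e i) (e (i + 1)) ∧ R (e i) (e (i + 2)) := by
    intro z p q r s hd g1 g2 g3 g4
    obtain ⟨⟨n1, n2, n3, n4⟩, ⟨n5, n6, n7⟩, ⟨n8, n9⟩, n10⟩ := nodup5 hd
    have hz := d2 z p q r s hd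
    have hp := d2 p z q r s (sw1 hd)
    have hq := d2 q z p r s (sw1 (sw2 hd))
    have hr := d2 r z p q s (sw1 (sw2 (sw3 hd)))
    have hs := d2 s z p q r (sw1 (sw2 (sw3 (sw4 hd))))
    have i1 := d1 _ _ n1
    have i2 := d1 _ _ n2
    have i3 := d1 _ _ n3
    have i4 := d1 _ _ n4
    have i5 := d1 _ _ n5
    have i6 := d1 _ _ n6
    have i7 := d1 _ _ n7
    have i8 := d1 _ _ n8
    have i9 := d1 _ _ n9
    have i10 := d1 _ _ n10
    obtain ⟨e, e0, e1, e2, e3, e4⟩ := exists_label z p q r s hd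
    refine ⟨e, fun i => ?_⟩
    have s1 : (4 : Fin 5) + 1 = 0 := rfl
    have s2 : (4 : Fin 5) + 2 = 1 := rfl
    have s3 : (3 : Fin 5) + 2 = 0 := rfl
    fin_cases i <;> simp [e0, e1, e2, e3, e4, s1, s2, s3] <;> constructor <;> apply fR <;> omega
  have final2 : ∀ z p q r s, [z, p, q, r, s].Nodup → f z p = 1 → f z q = 1 → 
      ∃ e : Equiv.Perm (Fin 5), ∀ i, R (e i) (e (i + 1)) ∧ R (e i) (e (i + 2)) := by
    intro z p q r s hd g1 g2
    obtain ⟨⟨n1, n2, n3, n4⟩, ⟨n5, n6, n7⟩, ⟨n8, n9⟩, n10⟩ := nodup5 hd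
    have hp := d2 p z q r s (sw1 hd)
    have hq := d2 q z p r s (sw1 (sw2 hd))
    have i1 := d1 _ _ n1
    have i2 := d1 _ _ n2
    have i5 := d1 _ _ n5
    have := f1 p q
    have := f1 p r
    have := f1 q r
    by_cases g3 : f p q = 1
    · by_cases g4 : f p r = 1
      · exact final z p q r s hd g1 g2 g3 g4
      · exact final z p q s r (sw4 hd) g1 g2 g3 (by omega)
    · have g3' : f q p = 1 := by omega
      by_cases g4 : f q r = 1
      · exact final z q p r s (sw2 hd) g2 g1 g3' g4
      · exact final z q p s r (sw4 (sw2 hd)) g2 g1 g3' (by omega)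
  have z0 := d2 0 1 2 3 4 (by decide)
  have y1 := f1 0 1
  have y2 := f1 0 2
  have y3 := f1 0 3
  have y4 := f1 0 4
  by_cases x1 : f 0 1 = 1
  · by_cases x2 : f 0 2 = 1
    · exact final2 0 1 2 3 4 (by decide) x1 x2
    · by_cases x3 : f 0 3 = 1
      · exact final2 0 1 3 2 4 (by decide) x1 x3
      · exact final2 0 1 4 2 3 (by decide) x1 (by omega)
  · by_cases x2 : f 0 2 = 1
    · by_cases x3 : f 0 3 = 1
      · exact final2 0 2 3 1 4 (by decide) x2 x3
      · exact final2 0 2 4 1 3 (by decide) x2 (by omega)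
    · exact final2 0 3 4 1 2 (by decide) (by omega) (by omega)

lemma rc_cycle {a : Fin 5 → ℂ} {B : Matrix (Fin 5) (Fin 5) ℂ} (h : Good a B) (hM : ¬ Mono B) :
    ∃ e : Equiv.Perm (Fin 5), ∀ i, Rc a B (e i) (e (i + 1)) ∧ Rc a B (e i) (e (i + 2)) :=
  tournament (Rc a B) (fun i j hij => rc_or h hM i j hij) (rc_out h hM)


/-- the basic facts about the fifth root of unity -/
structure Om (ω : ℂ) : Prop where
  p5 : ω ^ 5 = 1
  cyc : 1 + ω + ω ^ 2 + ω ^ 3 + ω ^ 4 = 0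
  gold : 1 + ω + ω ^ 4 = ((Real.goldenRatio : ℝ) : ℂ)
  cj : conj ω = ω ^ 4
  ne1 : ω ≠ 1

lemma om_of_exp (ω : ℂ) (hω : ω = Complex.exp (2 * Real.pi * Complex.I / 5)) : Om ω := by
  have hp : IsPrimitiveRoot ω 5 := by
    rw [hω]; exact_mod_cast Complex.isPrimitiveRoot_exp 5 (by norm_num)
  have p5 := hp.pow_eq_one
  have ne1 : ω ≠ 1 := hp.ne_one (by norm_num)
  have cyc : 1 + ω + ω ^ 2 + ω ^ 3 + ω ^ 4 = 0 := by
    have : (ω - 1) * (1 + ω + ω ^ 2 + ω ^ 3 + ω ^ 4) = 0 := by linear_combination p5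
    exact (mul_eq_zero.mp this).resolve_left (sub_ne_zero.mpr ne1)
  have hω' : ω = Complex.exp (((2 * Real.pi / 5 : ℝ) : ℂ) * Complex.I) := by
    rw [hω]; congr 1; push_cast; ring
  have cj : conj ω = ω ^ 4 := by
    have h1 : conj ω * ω = 1 := by
      rw [Complex.conj_mul', hω', Complex.norm_exp_ofReal_mul_I]; simp
    have h0 : ω ≠ 0 := by rw [hω]; exact Complex.exp_ne_zero _
    apply mul_right_cancel₀ h0
    rw [h1]; linear_combination -p5
  refine ⟨p5, cyc, ?_, cj, ne1⟩
  have h2 : 1 + ω + ω ^ 4 = 1 + 2 * ((ω.re : ℝ) : ℂ) := by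
    rw [← cj, add_assoc, Complex.add_conj]; push_cast; ring
  have h3 : ω.re = Real.cos (2 * (Real.pi / 5)) := by
    rw [hω', Complex.exp_ofReal_mul_I_re]; congr 1; ring
  rw [h2, h3, Real.cos_two_mul, Real.cos_pi_div_five, Real.goldenRatio]
  rw [← Complex.ofReal_ofNat, ← Complex.ofReal_one, ← Complex.ofReal_mul, ← Complex.ofReal_add]
  congr 1
  have := Real.sq_sqrt (show (0:ℝ) ≤ 5 by norm_num)
  linear_combination (1/4) * this

lemma Om.ne0 {ω : ℂ} (h : Om ω) : ω ≠ 0 := by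
  rintro rfl; have := h.p5; norm_num at this

/-- the eigenvalue list -/
def ev (ω : ℂ) : Fin 5 → ℂ := fun j => ω ^ (j : ℕ)

lemma ev_add {ω : ℂ} (h : Om ω) (i d : Fin 5) : ev ω (i + d) = ev ω i * ω ^ (d : ℕ) := by
  unfold ev
  rw [← pow_add, Fin.val_add]
  exact (pow_eq_pow_mod _ h.p5).symm

lemma cond_sums {a : Fin 5 → ℂ} {B : Matrix (Fin 5) (Fin 5) ℂ} (h : Good a B) (i : Fin 5) :
    (∑ k, B i k * B k i = 0) ∧ (∑ k, B i k * B k i * (a k - a i)⁻¹ = 0) := by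
  have key : ∀ j, j ≠ i → (∑ k, B i k * B k i) + (a i - a j) * (∑ k, B i k * B k i * (a k - a i)⁻¹) = 0 := by
    intro j hj
    obtain ⟨k, l, m, hd⟩ := exists_rest i j hj.symm
    have c1 := (pencil_cond a h.inj B h.pen i j k l m hd).1
    obtain ⟨⟨n1, n2, n3, n4⟩, ⟨n5, n6, n7⟩, ⟨n8, n9⟩, n10⟩ := nodup5 hd
    have hk : a k - a i ≠ 0 := sub_ne_zero.mpr (h.inj.ne n5.symm)
    have hl : a l - a i ≠ 0 := sub_ne_zero.mpr (h.inj.ne n6.symm)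
    have hm : a m - a i ≠ 0 := sub_ne_zero.mpr (h.inj.ne n7.symm)
    have hj' : a j - a i ≠ 0 := sub_ne_zero.mpr (h.inj.ne n1)
    rw [sum_label _ j i k l m hd, sum_label _ j i k l m hd]
    have ej : (a i - a j) * (a j - a i)⁻¹ = -1 := by field_simp; ring
    have ek : rr a i j k = 1 + (a i - a j) * (a k - a i)⁻¹ := by unfold rr; field_simp; ring
    have el : rr a i j l = 1 + (a i - a j) * (a l - a i)⁻¹ := by unfold rr; field_simp; ring
    have em : rr a i j m = 1 + (a i - a j) * (a m - a i)⁻¹ := by unfold rr; field_simp; ring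
    have hb := h.diag i
    rw [ek, el, em] at c1
    linear_combination c1 + (B i j * B j i) * ej + (1 + (a i - a j) * (a i - a i)⁻¹) * B i i * hb
  obtain ⟨j, k, l, m, hd⟩ : ∃ j k l m, [i, j, k, l, m].Nodup := by
    clear key; revert i; decide
  obtain ⟨⟨n1, n2, n3, n4⟩, ⟨n5, n6, n7⟩, ⟨n8, n9⟩, n10⟩ := nodup5 hd
  have k1 := key j n1.symm
  have k2 := key k n2.symm
  have hne : a k - a j ≠ 0 := sub_ne_zero.mpr (h.inj.ne n5.symm)
  have hT : ∑ k, B i k * B k i * (a k - a i)⁻¹ = 0 := by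
    apply (mul_eq_zero.mp _).resolve_left hne
    linear_combination k1 - k2
  refine ⟨?_, hT⟩
  rw [hT] at k1
  linear_combination k1

lemma gold_solve {ω : ℂ} (h : Om ω) (F1 F2 F3 F4 : ℂ) (S : F1 + F2 + F3 + F4 = 0)
    (T0 : F1 * (ω - 1)⁻¹ + F2 * (ω ^ 2 - 1)⁻¹ + F3 * (ω ^ 3 - 1)⁻¹ + F4 * (ω ^ 4 - 1)⁻¹ = 0) :
    F2 = - (1 + ω + ω ^ 4) ^ 2 * F1 + (1 + ω + ω ^ 4) * F4 ∧
    F3 = (1 + ω + ω ^ 4) * F1 - (1 + ω + ω ^ 4) ^ 2 * F4 := by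
  have hω := h.cyc
  have inv : ∀ z : ℂ, 1 + z + z ^ 2 + z ^ 3 + z ^ 4 = 0 → (z - 1)⁻¹ = (z + 2 * z ^ 2 + 3 * z ^ 3 + 4 * z ^ 4) / 5 := by
    intro z hz
    apply inv_eq_of_mul_eq_one_right
    linear_combination ((4 * z - 5) / 5) * hz
  have T : F1 * ((ω + 2 * ω ^ 2 + 3 * ω ^ 3 + 4 * ω ^ 4) / 5)
      + F2 * ((ω ^ 2 + 2 * (ω ^ 2) ^ 2 + 3 * (ω ^ 2) ^ 3 + 4 * (ω ^ 2) ^ 4) / 5)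
      + F3 * ((ω ^ 3 + 2 * (ω ^ 3) ^ 2 + 3 * (ω ^ 3) ^ 3 + 4 * (ω ^ 3) ^ 4) / 5)
      + F4 * ((ω ^ 4 + 2 * (ω ^ 4) ^ 2 + 3 * (ω ^ 4) ^ 3 + 4 * (ω ^ 4) ^ 4) / 5) = 0 := by
    rw [← inv ω hω, ← inv (ω ^ 2), ← inv (ω ^ 3), ← inv (ω ^ 4), T0]
    · have := h.p5; grind
    · have := h.p5; grind
    · have := h.p5; grind
  constructor
  · linear_combination ((1/5)*ω^4 + (2/5)*ω^5 + (2/5)*ω^6 + (1/5)*ω^7 + (-1)*ω^8 + (-6/5)*ω^9 + (-2/5)*ω^10 + (3/5)*ω^11 + (4/5)*ω^12) * T - ((1/25)*ω^7 + (2/25)*ω^8 + (2/25)*ω^9 + (3/25)*ω^10 + (-1/25)*ω^11 + (-2/25)*ω^12 + (3/25)*ω^13 + (-1/25)*ω^14 + (-2/25)*ω^15 + (3/25)*ω^16 + (-1/25)*ω^17 + (-2/25)*ω^18 + (-2/25)*ω^19 + (-11/25)*ω^20 + (-12/25)*ω^21 + (-8/25)*ω^22 + (12/25)*ω^23 + (16/25)*ω^24)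 * S + (F1 * ((1)*ω^0 + (1)*ω^1 + (-1)*ω^2 + (-1)*ω^3 + (2)*ω^4 + (24/25)*ω^5 + (-28/25)*ω^6 + (-29/25)*ω^7 + (-1/5)*ω^8 + (29/25)*ω^9 + (41/25)*ω^10 + (-12/25)*ω^11 + (-16/25)*ω^12 + (-19/25)*ω^13 + (-4/25)*ω^14 + (1)*ω^15 + (1/25)*ω^16 + (-4/25)*ω^17 + (-4/5)*ω^18 + (-4/25)*ω^19 + (16/25)*ω^20) + F2 * ((1)*ω^0 + (-1)*ω^1 + (1)*ω^5 + (-26/25)*ω^6 + (-1/25)*ω^8 + (-1/25)*ω^9 + (29/25)*ω^10 + (-6/5)*ω^11 + (3/25)*ω^12 + (4/25)*ω^14 + (29/25)*ω^15 + (-3/5)*ω^16 + (-4/25)*ω^17 + (-4/5)*ω^18 + (-4/25)*ω^19 + (16/25)*ω^20) + F3 * 0 + F4 * ((-1)*ω^0 + (1)*ω^2 + (-1)*ω^4 + (26/25)*ω^7 + (-26/25)*ω^9 + (1/25)*ω^10 + (-3/25)*ω^11 + (29/25)*ω^12 + (4/25)*ω^13 + (-34/25)*ω^14 + (-3/25)*ω^15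 + (2/5)*ω^16 + (28/25)*ω^17 + (-1/5)*ω^18 + (-41/25)*ω^19 + (16/25)*ω^21 + (4/5)*ω^22 + (4/25)*ω^23 + (-16/25)*ω^24)) * hω
  · linear_combination ((-1/5)*ω^4 + (-2/5)*ω^5 + (-2/5)*ω^6 + (-1/5)*ω^7 + (1)*ω^8 + (6/5)*ω^9 + (2/5)*ω^10 + (-3/5)*ω^11 + (-4/5)*ω^12) * T - ((-1/25)*ω^6 + (-2/25)*ω^7 + (-4/25)*ω^8 + (-1/5)*ω^9 + (-2/25)*ω^10 + (-2/25)*ω^11 + (2/25)*ω^12 + (-2/25)*ω^13 + (7/25)*ω^14 + (8/25)*ω^15 + (18/25)*ω^16 + (3/5)*ω^17 + (-4/25)*ω^18 + (-12/25)*ω^19 + (-16/25)*ω^20) * S + (F1 * ((-1)*ω^0 + (1)*ω^2 + (-1)*ω^4 + (1/25)*ω^5 + (2/25)*ω^6 + (29/25)*ω^7 + (4/25)*ω^8 + (-6/5)*ω^9 + (-12/25)*ω^10 + (-18/25)*ω^11 + (19/25)*ω^12 + (19/25)*ω^13 + (8/25)*ω^14 + (4/25)*ω^15 + (-16/25)*ω^16)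 + F2 * 0 + F3 * ((1)*ω^0 + (-1)*ω^1 + (1)*ω^5 + (-26/25)*ω^6 + (-1/25)*ω^8 + (-1/25)*ω^9 + (29/25)*ω^10 + (-6/5)*ω^11 + (3/25)*ω^12 + (4/25)*ω^14 + (29/25)*ω^15 + (-3/5)*ω^16 + (-4/25)*ω^17 + (-4/5)*ω^18 + (-4/25)*ω^19 + (16/25)*ω^20) + F4 * ((1)*ω^0 + (1)*ω^1 + (-1)*ω^2 + (-1)*ω^3 + (2)*ω^4 + (1)*ω^5 + (-26/25)*ω^6 + (-26/25)*ω^7 + (-1/25)*ω^8 + (1)*ω^9 + (28/25)*ω^10 + (-27/25)*ω^11 + (-26/25)*ω^12 + (-4/25)*ω^13 + (38/25)*ω^14 + (32/25)*ω^15 + (-1)*ω^16 + (-32/25)*ω^17 + (-3/5)*ω^18 + (37/25)*ω^19 + (16/25)*ω^20 + (-16/25)*ω^21 + (-4/5)*ω^22 + (-4/25)*ω^23 + (16/25)*ω^24)) * hω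

/-- the vertex function -/
def vf (B : Matrix (Fin 5) (Fin 5) ℂ) (x y : Fin 5) : ℂ := B x y * B y x

lemma vf_comm (B : Matrix (Fin 5) (Fin 5) ℂ) (x y : Fin 5) : vf B x y = vf B y x := mul_comm _ _

lemma vertex {ω : ℂ} (ho : Om ω) {B : Matrix (Fin 5) (Fin 5) ℂ} (h : Good (ev ω) B) (i : Fin 5) :
    vf B i (i + 2) = - (Real.goldenRatio : ℂ) ^ 2 * vf B i (i + 1) + (Real.goldenRatio : ℂ) * vf B i (i + 4) ∧
    vf B i (i + 3) = (Real.goldenRatio : ℂ) * vf B i (i + 1) - (Real.goldenRatio : ℂ) ^ 2 * vf B i (i + 4) := by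
  obtain ⟨S, T⟩ := cond_sums h i
  rw [← Equiv.sum_comp (Equiv.addLeft i), Fin.sum_univ_five] at S T
  simp only [Equiv.coe_addLeft, add_zero, h.diag, ev_add ho] at S T
  have hi : ev ω i ≠ 0 := pow_ne_zero _ ho.ne0
  rw [← ho.gold]
  apply gold_solve ho
  · simpa [vf] using S
  · have e : ∀ z : ℂ, (ev ω i * z - ev ω i)⁻¹ = (ev ω i)⁻¹ * (z - 1)⁻¹ := fun z => by
      rw [← mul_inv]; congr 1; ring
    simp only [e] at T
    have T2 : (ev ω i)⁻¹ * (vf B i (i + 1) * (ω - 1)⁻¹ + vf B i (i + 2) * (ω ^ 2 - 1)⁻¹ + vf B i (i + 3) * (ω ^ 3 - 1)⁻¹ + vf B i (i + 4) * (ω ^ 4 - 1)⁻¹) = 0 := by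
      rw [← T]
      simp [vf]
      ring
    exact (mul_eq_zero.mp T2).resolve_left (inv_ne_zero hi)

/-- two zeros at a vertex force all to vanish -/
lemma vertex_zero {ω : ℂ} (ho : Om ω) {B : Matrix (Fin 5) (Fin 5) ℂ} (h : Good (ev ω) B) (i j k : Fin 5)
    (hij : i ≠ j) (hik : i ≠ k) (hjk : j ≠ k) (hj : vf B i j = 0) (hk : vf B i k = 0) (x : Fin 5) : vf B i x = 0 := by
  obtain ⟨v1, v2⟩ := vertex ho h i
  have hp : (Real.goldenRatio : ℂ) ≠ 0 := by exact_mod_cast Real.goldenRatio_ne_zero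
  have hsq : (Real.goldenRatio : ℂ) ^ 2 = (Real.goldenRatio : ℂ) + 1 := by exact_mod_cast Real.goldenRatio_sq
  have h0 : vf B i i = 0 := by simp [vf, h.diag]
  obtain ⟨d, rfl⟩ : ∃ d, j = i + d := ⟨j - i, by simp⟩
  obtain ⟨e, rfl⟩ : ∃ e, k = i + e := ⟨k - i, by simp⟩
  obtain ⟨y, rfl⟩ : ∃ y, x = i + y := ⟨x - i, by simp⟩
  have hd : d ≠ 0 := by rintro rfl; simp at hij
  have he : e ≠ 0 := by rintro rfl; simp at hik
  have hde : d ≠ e := by rintro rfl; exact hjk rfl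
  have both : vf B i (i + 1) = 0 ∧ vf B i (i + 2) = 0 ∧ vf B i (i + 3) = 0 ∧ vf B i (i + 4) = 0 := by
    clear hij hik hjk h0 ho h
    generalize (Real.goldenRatio : ℂ) = φ at *
    generalize hF : (fun d => vf B i (i + d)) = F at *
    have hF' : ∀ d, vf B i (i + d) = F d := fun d => congrFun hF d
    simp only [hF'] at *
    clear hF hF'
    have z12 : F 1 = 0 → F 2 = 0 → F 3 = 0 ∧ F 4 = 0 := by grind
    have z13 : F 1 = 0 → F 3 = 0 → F 2 = 0 ∧ F 4 = 0 := by grind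
    have z14 : F 1 = 0 → F 4 = 0 → F 2 = 0 ∧ F 3 = 0 := by grind
    have z23 : F 2 = 0 → F 3 = 0 → F 1 = 0 ∧ F 4 = 0 := by grind
    have z24 : F 2 = 0 → F 4 = 0 → F 1 = 0 ∧ F 3 = 0 := by grind
    have z34 : F 3 = 0 → F 4 = 0 → F 1 = 0 ∧ F 2 = 0 := by grind
    clear v1 v2
    fin_cases d <;> fin_cases e <;> first
      | exact absurd rfl hd
      | exact absurd rfl he
      | exact absurd rfl hde
      | exact ⟨hj, hk, (z12 hj hk).1, (z12 hj hk).2⟩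
      | exact ⟨hj, (z13 hj hk).1, hk, (z13 hj hk).2⟩
      | exact ⟨hj, (z14 hj hk).1, (z14 hj hk).2, hk⟩
      | exact ⟨hk, hj, (z12 hk hj).1, (z12 hk hj).2⟩
      | exact ⟨(z23 hj hk).1, hj, hk, (z23 hj hk).2⟩
      | exact ⟨(z24 hj hk).1, hj, (z24 hj hk).2, hk⟩
      | exact ⟨hk, (z13 hk hj).1, hj, (z13 hk hj).2⟩
      | exact ⟨(z23 hk hj).1, hk, hj, (z23 hk hj).2⟩
      | exact ⟨(z34 hj hk).1, (z34 hj hk).2, hj, hk⟩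
      | exact ⟨hk, (z14 hk hj).1, (z14 hk hj).2, hj⟩
      | exact ⟨(z24 hk hj).1, hk, (z24 hk hj).2, hj⟩
      | exact ⟨(z34 hk hj).1, (z34 hk hj).2, hk, hj⟩
  obtain ⟨b1, b2, b3, b4⟩ := both
  fin_cases y
  · simpa using h0
  · exact b1
  · exact b2
  · exact b3
  · exact b4


/-- column `x` is supported in row `y` -/
def Arr (B : Matrix (Fin 5) (Fin 5) ℂ) (x y : Fin 5) : Prop := ∀ k, k ≠ y → B k x = 0

lemma arr_ne0 {a : Fin 5 → ℂ} {B : Matrix (Fin 5) (Fin 5) ℂ} (h : Good a B) {x y : Fin 5}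
    (hA : Arr B x y) : B y x ≠ 0 := by
  intro h0
  have h1 := h.col x x
  rw [Finset.sum_eq_single y (fun b _ hb => by simp [hA b hb]) (by simp)] at h1
  simp [h0] at h1

lemma arr_ne {a : Fin 5 → ℂ} {B : Matrix (Fin 5) (Fin 5) ℂ} (h : Good a B) {x y : Fin 5}
    (hA : Arr B x y) : x ≠ y := by
  rintro rfl
  exact arr_ne0 h hA (h.diag x)

lemma arr_inj {a : Fin 5 → ℂ} {B : Matrix (Fin 5) (Fin 5) ℂ} (h : Good a B) {x x' y : Fin 5}
    (hA : Arr B x y) (hA' : Arr B x' y) : x = x' := by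
  by_contra hne
  exact arr_ne0 h hA (h.row_of_col hA' x hne)

lemma exists_two (i j : Fin 5) : ∃ k l, i ≠ k ∧ i ≠ l ∧ j ≠ k ∧ j ≠ l ∧ k ≠ l := by
  revert i j; decide

lemma arr_vf {ω : ℂ} (ho : Om ω) {B : Matrix (Fin 5) (Fin 5) ℂ} (h : Good (ev ω) B) {i j : Fin 5}
    (hA : Arr B i j) (x y : Fin 5) : vf B x y = 0 := by
  have hij := arr_ne h hA
  have hr := h.row_of_col hA
  obtain ⟨k, l, n1, n2, n3, n4, n5⟩ := exists_two i j
  have hi : ∀ x, vf B i x = 0 := vertex_zero ho h i k l n1 n2 n5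
    (by simp [vf, hA k n3.symm]) (by simp [vf, hA l n4.symm])
  have hj : ∀ x, vf B j x = 0 := vertex_zero ho h j k l n3 n4 n5
    (by simp [vf, hr k n1.symm]) (by simp [vf, hr l n2.symm])
  by_cases hxi : x = i
  · rw [hxi]; exact hi y
  by_cases hxj : x = j
  · rw [hxj]; exact hj y
  exact vertex_zero ho h x i j hxi hxj hij (by rw [vf_comm]; exact hi x) (by rw [vf_comm]; exact hj x) y

lemma arr_prod {a : Fin 5 → ℂ} {B : Matrix (Fin 5) (Fin 5) ℂ} (h : Good a B) {i j k l m : Fin 5}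
    (hd : [i, j, k, l, m].Nodup) (hA : Arr B i j) : B i l * B l j = 0 ∧ B i m * B m j = 0 := by
  obtain ⟨⟨n1, n2, n3, n4⟩, ⟨n5, n6, n7⟩, ⟨n8, n9⟩, n10⟩ := nodup5 hd
  have hr := h.row_of_col hA
  have h0 := arr_ne0 h hA
  have d1 : [k, j, i, l, m].Nodup := by
    simp only [List.nodup_cons, List.mem_cons, List.not_mem_nil, not_or, or_false]
    simp only [List.nodup_nil, not_false_eq_true, and_true]
    exact ⟨⟨n5.symm, n2.symm, n8, n9⟩, ⟨n1.symm, n6, n7⟩, ⟨n3, n4⟩, n10⟩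
  have d2 : [k, i, j, l, m].Nodup := by
    simp only [List.nodup_cons, List.mem_cons, List.not_mem_nil, not_or, or_false]
    simp only [List.nodup_nil, not_false_eq_true, and_true]
    exact ⟨⟨n2.symm, n5.symm, n8, n9⟩, ⟨n1, n3, n4⟩, ⟨n6, n7⟩, n10⟩
  have c1 := (pencil_cond a h.inj B h.pen j k i l m d1).2.1
  have c2 := (pencil_cond a h.inj B h.pen i k j l m d2).2.1
  rw [hr l n3.symm, hr m n4.symm] at c1
  rw [hA l n6.symm, hA m n7.symm] at c2
  have r1 : rr a j k i ≠ 0 := rr_ne h.inj n1 n2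
  have r2 : rr a i k j ≠ 0 := rr_ne h.inj n1.symm n5
  have e1 : (B i l * B l j) * rr a j k l + (B i m * B m j) * rr a j k m = 0 := by
    apply (mul_eq_zero.mp _).resolve_left (mul_ne_zero h0 r1)
    linear_combination c1
  have e2 : (B i l * B l j) * rr a i k l + (B i m * B m j) * rr a i k m = 0 := by
    apply (mul_eq_zero.mp _).resolve_left (mul_ne_zero h0 r2)
    linear_combination c2
  generalize B i l * B l j = X at *
  generalize B i m * B m j = Y at *
  have hlj : a l - a j ≠ 0 := sub_ne_zero.mpr (h.inj.ne n6.symm)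
  have hmj : a m - a j ≠ 0 := sub_ne_zero.mpr (h.inj.ne n7.symm)
  have hli : a l - a i ≠ 0 := sub_ne_zero.mpr (h.inj.ne n3.symm)
  have hmi : a m - a i ≠ 0 := sub_ne_zero.mpr (h.inj.ne n4.symm)
  have hlk : a l - a k ≠ 0 := sub_ne_zero.mpr (h.inj.ne n8.symm)
  have hmk : a m - a k ≠ 0 := sub_ne_zero.mpr (h.inj.ne n9.symm)
  have hlm : a l - a m ≠ 0 := sub_ne_zero.mpr (h.inj.ne n10)
  have hij : a i - a j ≠ 0 := sub_ne_zero.mpr (h.inj.ne n1)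
  unfold rr at e1 e2
  have f1 : X * (a l - a k) * (a m - a j) + Y * (a m - a k) * (a l - a j) = 0 := by
    field_simp at e1; linear_combination e1
  have f2 : X * (a l - a k) * (a m - a i) + Y * (a m - a k) * (a l - a i) = 0 := by
    field_simp at e2; linear_combination e2
  constructor
  · apply (mul_eq_zero.mp _).resolve_right (mul_ne_zero hlk (mul_ne_zero hlm hij))
    linear_combination f1 * (a l - a i) - f2 * (a l - a j)
  · apply (mul_eq_zero.mp _).resolve_right (mul_ne_zero hmk (mul_ne_zero hlm hij))
    linear_combination f2 * (a m - a j) - f1 * (a m - a i)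

lemma arr_two {ω : ℂ} (ho : Om ω) {B : Matrix (Fin 5) (Fin 5) ℂ} (h : Good (ev ω) B) {i j k l m : Fin 5}
    (hd : [i, j, k, l, m].Nodup) (hA : Arr B i j) (hk : B i k = 0) (hl : B i l = 0) (hij : B i j = 0) :
    B k j = 0 ∨ B l j = 0 := by
  obtain ⟨⟨n1, n2, n3, n4⟩, ⟨n5, n6, n7⟩, ⟨n8, n9⟩, n10⟩ := nodup5 hd
  have c := h.col_of_row (i := i) (j := m) (fun x hx => by
    rcases cases_label i j k l m hd x with rfl | rfl | rfl | rfl | rfl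
    · exact h.diag _
    · exact hij
    · exact hk
    · exact hl
    · exact absurd rfl hx)
  have v : B k l = 0 ∨ B l k = 0 := mul_eq_zero.mp (arr_vf ho h hA k l)
  rcases v with v | v
  · right
    refine h.col_of_row (i := k) (j := j) (fun x hx => ?_) l n8.symm
    rcases cases_label i j k l m hd x with rfl | rfl | rfl | rfl | rfl
    · exact hA _ n5.symm
    · exact absurd rfl hx
    · exact h.diag _
    · exact v
    · exact c _ n2.symm
  · left
    refine h.col_of_row (i := l) (j := j) (fun x hx => ?_) k n8
    rcases cases_label i j k l m hd x with rfl | rfl | rfl | rfl | rfl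
    · exact hA _ n6.symm
    · exact absurd rfl hx
    · exact v
    · exact h.diag _
    · exact c _ n3.symm

lemma prop_aux {p q r x y z : Prop} (h1 : q ∨ y) (h2 : r ∨ z) (h3 : p ∨ x) (h4 : ¬ (p ∧ q ∧ r))
    (h5 : p → q → x ∨ y) (h6 : p → r → x ∨ z) (h7 : q → r → y ∨ z) :
    (x ∧ y) ∨ (x ∧ z) ∨ (y ∧ z) := by
  by_cases hp : p <;> by_cases hq : q <;> by_cases hr : r <;> simp_all <;> tauto

lemma arr_next {ω : ℂ} (ho : Om ω) {B : Matrix (Fin 5) (Fin 5) ℂ} (h : Good (ev ω) B) {i j : Fin 5}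
    (hA : Arr B i j) : ∃ k, Arr B j k := by
  have hne := arr_ne h hA
  obtain ⟨k, l, m, hd⟩ := exists_rest j i hne.symm
  obtain ⟨⟨n1, n2, n3, n4⟩, ⟨n5, n6, n7⟩, ⟨n8, n9⟩, n10⟩ := nodup5 hd
  have hij : B i j = 0 := (mul_eq_zero.mp (arr_vf ho h hA i j)).resolve_right (arr_ne0 h hA)
  have p1 := (arr_prod h hd hA)
  have p2 := (arr_prod h (sw3 hd) hA).1
  have rowne : ¬ (B i k = 0 ∧ B i l = 0 ∧ B i m = 0) := by
    rintro ⟨z1, z2, z3⟩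
    have := h.row i i
    rw [sum_label _ i j k l m hd] at this
    simp [z1, z2, z3, hij, h.diag] at this
  have t1 := arr_two ho h hd hA
  have t2 := arr_two ho h (sw4 hd) hA
  have t3 := arr_two ho h (sw4 (sw3 hd)) hA
  have key : ∀ x y z : Fin 5, [i, j, x, y, z].Nodup → B x j = 0 → B y j = 0 → Arr B j z := by
    intro x y z hd' h1 h2 w hw
    rcases cases_label i j x y z hd' w with rfl | rfl | rfl | rfl | rfl
    · exact hij
    · exact h.diag _
    · exact h1
    · exact h2
    · exact absurd rfl hw
  simp only [mul_eq_zero] at p1 p2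
  have : (B k j = 0 ∧ B l j = 0) ∨ (B k j = 0 ∧ B m j = 0) ∨ (B l j = 0 ∧ B m j = 0) :=
    prop_aux p1.1 p1.2 p2 rowne (fun x y => t1 x y hij) (fun x y => t2 x y hij) (fun x y => t3 x y hij)
  rcases this with ⟨h1, h2⟩ | ⟨h1, h2⟩ | ⟨h1, h2⟩
  · exact ⟨m, key _ _ _ hd h1 h2⟩
  · exact ⟨l, key _ _ _ (sw4 hd) h1 h2⟩
  · exact ⟨k, key _ _ _ (sw4 (sw3 hd)) h1 h2⟩

lemma rest_from (i j z : Fin 5) (h1 : i ≠ j) (h2 : i ≠ z) (h3 : j ≠ z) :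
    ∃ k m, [i, j, k, z, m].Nodup := by revert i j z; decide

lemma rest_one (i j k l : Fin 5) (h1 : i ≠ j) (h2 : i ≠ k) (h3 : i ≠ l) (h4 : j ≠ k) (h5 : j ≠ l)
    (h6 : k ≠ l) : ∃ m, [i, j, k, l, m].Nodup := by revert i j k l; decide

lemma mono_cycle {ω : ℂ} (ho : Om ω) {B : Matrix (Fin 5) (Fin 5) ℂ} (h : Good (ev ω) B)
    (hM : Mono B) : ∃ e : Equiv.Perm (Fin 5), ∀ i, Arr B (e i) (e (i + 1)) := by
  obtain ⟨v0, v1, A0⟩ := hM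
  change Arr B v0 v1 at A0
  obtain ⟨v2, A1⟩ := arr_next ho h A0
  obtain ⟨v3, A2⟩ := arr_next ho h A1
  obtain ⟨v4, A3⟩ := arr_next ho h A2
  obtain ⟨v5, A4⟩ := arr_next ho h A3
  have two : ∀ {x y z}, Arr B x y → Arr B y z → x ≠ z := by
    rintro x y _ a1 a2 rfl
    have := arr_vf ho h a1 x y
    exact mul_ne_zero (arr_ne0 h a2) (arr_ne0 h a1) this
  have three : ∀ {x y z w}, Arr B x y → Arr B y z → Arr B z w → x ≠ w := by
    rintro x y z _ a1 a2 a3 rfl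
    obtain ⟨k, m, hd⟩ := rest_from x y z (arr_ne h a1) (two a1 a2) (arr_ne h a2)
    exact mul_ne_zero (arr_ne0 h a3) (arr_ne0 h a2) (arr_prod h hd a1).1
  have n01 := arr_ne h A0
  have n12 := arr_ne h A1
  have n23 := arr_ne h A2
  have n34 := arr_ne h A3
  have n02 := two A0 A1
  have n13 := two A1 A2
  have n24 := two A2 A3
  have n03 := three A0 A1 A2
  have n14 := three A1 A2 A3
  have n04 : v0 ≠ v4 := by
    rintro rfl
    obtain ⟨m, hd⟩ := rest_one v0 v1 v2 v3 n01 n02 n03 n12 n13 n23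
    obtain ⟨⟨m1, m2, m3, m4⟩, ⟨m5, m6, m7⟩, ⟨m8, m9⟩, m10⟩ := nodup5 hd
    have := h.col m m
    rw [sum_label _ v0 v1 v2 v3 m hd] at this
    simp [h.diag, h.row_of_col A0 m m4.symm, h.row_of_col A1 m m7.symm, h.row_of_col A2 m m9.symm,
      h.row_of_col A3 m m10.symm] at this
  have hd : [v0, v1, v2, v3, v4].Nodup := by
    simp only [List.nodup_cons, List.mem_cons, List.not_mem_nil, not_or, or_false]
    simp only [List.nodup_nil, not_false_eq_true, and_true]
    exact ⟨⟨n01, n02, n03, n04⟩, ⟨n12, n13, n14⟩, ⟨n23, n24⟩, n34⟩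
  have e5 : v5 = v0 := by
    rcases cases_label v0 v1 v2 v3 v4 hd v5 with rfl | rfl | rfl | rfl | rfl
    · rfl
    · exact absurd (arr_inj h A0 A4) n04
    · exact absurd (arr_inj h A1 A4) n14
    · exact absurd (arr_inj h A2 A4) n24
    · exact absurd (arr_inj h A3 A4) n34
  rw [e5] at A4
  obtain ⟨e, e0, e1, e2, e3, e4⟩ := exists_label v0 v1 v2 v3 v4 hd
  refine ⟨e, fun i => ?_⟩
  fin_cases i
  · change Arr B (e 0) (e 1); rw [e0, e1]; exact A0
  · change Arr B (e 1) (e 2); rw [e1, e2]; exact A1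
  · change Arr B (e 2) (e 3); rw [e2, e3]; exact A2
  · change Arr B (e 3) (e 4); rw [e3, e4]; exact A3
  · change Arr B (e 4) (e 0); rw [e4, e0]; exact A4


lemma perm_diag (f : Fin 5 → ℂ) (σ : Equiv.Perm (Fin 5)) (P : Matrix (Fin 5) (Fin 5) ℂ)
    (hP : P = Matrix.of fun i j : Fin 5 => if i = σ j then 1 else 0) :
    Pᵀ * Matrix.diagonal f * P = Matrix.diagonal (fun k => f (σ k)) := by
  subst hP
  ext k l
  rw [Matrix.mul_apply]
  simp only [Matrix.mul_diagonal, Matrix.transpose_apply, Matrix.of_apply, Matrix.diagonal_apply]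
  simp [Finset.sum_ite_eq, ite_mul, mul_ite, σ.injective.eq_iff, eq_comm]
  split_ifs with h
  · rw [h]
  · rfl

lemma fin_mono {ω : ℂ} (ho : Om ω) {B : Matrix (Fin 5) (Fin 5) ℂ} (h : Good (ev ω) B)
    (h5 : B ^ 5 = 1) (hM : Mono B) :
    ∃ P U : Matrix (Fin 5) (Fin 5) ℂ, (∃ σ : Equiv.Perm (Fin 5),
      P = Matrix.of fun i j : Fin 5 => if i = σ j then 1 else 0) ∧ U * Uᴴ = 1 ∧
      U * Matrix.diagonal (ev ω) * Uᴴ = Pᵀ * Matrix.diagonal (ev ω) * P ∧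
      U * B * Uᴴ = Matrix.of fun j k : Fin 5 => if j = k + 1 then 1 else 0 := by
  obtain ⟨e, he⟩ := mono_cycle ho h hM
  have step : ∀ i c, B.mulVec (Pi.single (e i) c) = Pi.single (e (i + 1)) (B (e (i + 1)) (e i) * c) := by
    intro i c
    ext x
    by_cases hx : x = e (i + 1)
    · subst hx; simp [mul_comm]
    · simp [hx, he i x hx]
  have nb : ∀ i, B (e (i + 1)) (e i) * conj (B (e (i + 1)) (e i)) = 1 := by
    intro i
    have := h.col (e i) (e i)
    rw [Finset.sum_eq_single (e (i + 1)) (fun b _ hb => by simp [he i b hb]) (by simp)] at this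
    rw [mul_comm]; simpa using this
  have hprod : B (e 0) (e 4) * (B (e 4) (e 3) * (B (e 3) (e 2) * (B (e 2) (e 1) * B (e 1) (e 0)))) = 1 := by
    have e1 : (B ^ 5).mulVec (Pi.single (e 0) 1) = Pi.single (e 0) 1 := by rw [h5, Matrix.one_mulVec]
    have e2 : B ^ 5 = B * (B * (B * (B * B))) := by noncomm_ring
    rw [e2] at e1
    simp only [← Matrix.mulVec_mulVec] at e1
    rw [step, step, step, step, step] at e1
    have := congrFun e1 (e 0)
    simp only [show (0 : Fin 5) + 1 = 1 from rfl, show (1 : Fin 5) + 1 = 2 from rfl,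
      show (2 : Fin 5) + 1 = 3 from rfl, show (3 : Fin 5) + 1 = 4 from rfl,
      show (4 : Fin 5) + 1 = 0 from rfl, Pi.single_eq_same, mul_one] at this
    exact this
  obtain ⟨p, hp, hn⟩ : ∃ p : Fin 5 → ℂ, (∀ i, p (i + 1) = B (e (i + 1)) (e i) * p i) ∧
      ∀ i, p i * conj (p i) = 1 := by
    let p : Fin 5 → ℂ := ![1, B (e 1) (e 0), B (e 2) (e 1) * B (e 1) (e 0),
      B (e 3) (e 2) * (B (e 2) (e 1) * B (e 1) (e 0)),
      B (e 4) (e 3) * (B (e 3) (e 2) * (B (e 2) (e 1) * B (e 1) (e 0)))]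
    have hp : ∀ i, p (i + 1) = B (e (i + 1)) (e i) * p i := by
      intro i
      fin_cases i
      · change B (e 1) (e 0) = B (e 1) (e 0) * 1
        rw [mul_one]
      · rfl
      · rfl
      · rfl
      · exact hprod.symm
    have hs : ∀ i, p i * conj (p i) = 1 → p (i + 1) * conj (p (i + 1)) = 1 := by
      intro i hi
      rw [hp, map_mul]
      linear_combination (p i * conj (p i)) * nb i + hi
    refine ⟨p, hp, ?_⟩
    have h0 : p 0 * conj (p 0) = 1 := by simp [p]
    have h1 := hs _ h0
    have h2 := hs _ h1
    have h3 := hs _ h2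
    have h4 := hs _ h3
    intro i
    fin_cases i
    · exact h0
    · exact h1
    · exact h2
    · exact h3
    · exact h4
  let U : Matrix (Fin 5) (Fin 5) ℂ := Matrix.of fun k x => if x = e k then conj (p k) else 0
  have conjU : ∀ M : Matrix (Fin 5) (Fin 5) ℂ, ∀ k l, (U * M * Uᴴ) k l = conj (p k) * M (e k) (e l) * p l := by
    intro M k l
    rw [Matrix.mul_apply]
    simp only [Matrix.mul_apply, U, Matrix.of_apply, Matrix.conjTranspose_apply]
    simp [apply_ite]
  refine ⟨_, U, ⟨e, rfl⟩, ?_, ?_, ?_⟩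
  · have := conjU 1
    rw [mul_one] at this
    ext k l
    rw [this]
    by_cases hkl : k = l
    · subst hkl; simp [mul_comm (conj (p k)), hn]
    · simp [Matrix.one_apply, hkl]
  · rw [perm_diag _ e _ rfl]
    ext k l
    rw [conjU]
    by_cases hkl : k = l
    · subst hkl; simp
      linear_combination ev ω (e k) * hn k
    · simp [Matrix.diagonal_apply, hkl]
  · ext k l
    rw [conjU]
    by_cases hkl : k = l + 1
    · subst hkl
      simp
      rw [mul_assoc, ← hp, mul_comm, hn]
    · simp [hkl, he l (e k) (by simpa using hkl)]


lemma rc_zero {a : Fin 5 → ℂ} (ha : Function.Injective a) {B : Matrix (Fin 5) (Fin 5) ℂ} {i j : Fin 5} (h : Rc a B i j)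
    (k : Fin 5) (h1 : k ≠ i) (h2 : k ≠ j) : B k i = 0 ↔ B j k = 0 := by
  obtain ⟨μ, hμ, hk⟩ := h
  have := hk k h1
  have hr := rr_ne ha h1 h2
  constructor
  · intro h0
    rw [h0, mul_zero] at this
    simpa [hμ] using this.symm
  · intro h0
    rw [h0, map_zero, mul_zero] at this
    simpa [hr] using this

lemma offdiag_ne {ω : ℂ} (ho : Om ω) {B : Matrix (Fin 5) (Fin 5) ℂ} (h : Good (ev ω) B) (hM : ¬ Mono B)
    (e : Equiv.Perm (Fin 5)) (he : ∀ i, Rc (ev ω) B (e i) (e (i + 1)) ∧ Rc (ev ω) B (e i) (e (i + 2))) :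
    ∀ i j, i ≠ j → B (e i) (e j) ≠ 0 := by
  have H1 : ∀ i k, k ≠ i → k ≠ i + 1 → (B (e k) (e i) = 0 ↔ B (e (i + 1)) (e k) = 0) :=
    fun i k h1 h2 => rc_zero h.inj (he i).1 (e k) (e.injective.ne h1) (e.injective.ne h2)
  have H2 : ∀ i k, k ≠ i → k ≠ i + 2 → (B (e k) (e i) = 0 ↔ B (e (i + 2)) (e k) = 0) :=
    fun i k h1 h2 => rc_zero h.inj (he i).2 (e k) (e.injective.ne h1) (e.injective.ne h2)
  have hD : ∀ i, B (e i) (e i) = 0 := fun i => h.diag _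
  have a12 : ∀ x : Fin 5, x + 1 + 1 = x + 2 := by decide
  have ne1 : ∀ i j : Fin 5, i ≠ j → j = i + 1 ∨ j = i + 2 ∨ j = i + 3 ∨ j = i + 4 := by decide
  have d4 : ∀ j, B (e (j + 1)) (e (j + 1 + 4)) = 0 ↔ B (e j) (e (j + 4)) = 0 := by
    intro j
    have := H2 (j + 4) j (by revert j; decide) (by revert j; decide)
    rw [this, show j + 4 + 2 = j + 1 by clear this; revert j; decide, show j + 1 + 4 = j by clear this; revert j; decide]
  have d2 : ∀ j, B (e (j + 2)) (e (j + 2 + 2)) = 0 ↔ B (e j) (e (j + 2)) = 0 := by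
    intro j
    have := H1 (j + 4) (j + 2) (by revert j; decide) (by revert j; decide)
    rw [show j + 2 + 2 = j + 4 by clear this; revert j; decide, this, show j + 4 + 1 = j by clear this; revert j; decide]
  have d12 : ∀ j, B (e j) (e (j + 1)) = 0 ↔ B (e (j + 1)) (e (j + 1 + 2)) = 0 := by
    intro j
    have := H2 (j + 3) (j + 1) (by revert j; decide) (by revert j; decide)
    rw [show j + 1 + 2 = j + 3 by clear this; revert j; decide, this, show j + 3 + 2 = j by clear this; revert j; decide]
  have d31 : ∀ j, B (e j) (e (j + 3)) = 0 ↔ B (e (j + 4)) (e (j + 4 + 1)) = 0 := by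
    intro j
    have := H1 (j + 3) j (by revert j; decide) (by revert j; decide)
    rw [this, show j + 3 + 1 = j + 4 by clear this; revert j; decide, show j + 4 + 1 = j by clear this; revert j; decide]
  have q4 : ∀ j, B (e j) (e (j + 4)) = 0 ↔ B (e 0) (e 4) = 0 := by
    have t0 := d4 0
    have t1 := d4 1
    have t2 := d4 2
    have t3 := d4 3
    intro j
    fin_cases j
    · exact Iff.rfl
    · exact t0
    · exact t1.trans t0
    · exact t2.trans (t1.trans t0)
    · exact t3.trans (t2.trans (t1.trans t0))
  have q2 : ∀ j, B (e j) (e (j + 2)) = 0 ↔ B (e 0) (e 2) = 0 := by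
    have t0 := d2 0
    have t1 := d2 2
    have t2 := d2 4
    have t3 := d2 1
    intro j
    fin_cases j
    · exact Iff.rfl
    · exact t2.trans (t1.trans t0)
    · exact t0
    · exact t3.trans (t2.trans (t1.trans t0))
    · exact t1.trans t0
  have q1 : ∀ j, B (e j) (e (j + 1)) = 0 ↔ B (e 0) (e 2) = 0 := fun j => (d12 j).trans (q2 _)
  have q3 : ∀ j, B (e j) (e (j + 3)) = 0 ↔ B (e 0) (e 2) = 0 := fun j => (d31 j).trans (q1 _)
  have n2 : B (e 0) (e 2) ≠ 0 := by
    intro h0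
    apply hM
    refine ⟨e 4, e 0, h.col_of_row (fun k hk => ?_)⟩
    obtain ⟨k, rfl⟩ := e.surjective k
    have hk4 : k ≠ 4 := fun hh => hk (by rw [hh])
    by_cases hk0 : 0 = k
    · rw [← hk0]; exact hD 0
    rcases ne1 0 k hk0 with r | r | r | r
    · rw [r]; exact (q1 0).mpr h0
    · rw [r]; exact (q2 0).mpr h0
    · rw [r]; exact (q3 0).mpr h0
    · exact absurd r hk4
  have n4 : B (e 0) (e 4) ≠ 0 := by
    intro h0
    have vz : vf B (e 0) (e 2) = 0 := by
      refine vertex_zero ho h (e 0) (e 1) (e 4) ?_ ?_ ?_ ?_ ?_ _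
      · exact e.injective.ne (by decide)
      · exact e.injective.ne (by decide)
      · exact e.injective.ne (by decide)
      · unfold vf
        have := (q4 1).mpr h0
        rw [show (1 : Fin 5) + 4 = 0 from rfl] at this
        rw [this, mul_zero]
      · unfold vf
        rw [h0, zero_mul]
    unfold vf at vz
    rcases mul_eq_zero.mp vz with r | r
    · exact n2 r
    · exact n2 ((q3 2).mp r)
  intro i j hij
  rcases ne1 i j hij with r | r | r | r
  · rw [r]; exact fun hh => n2 ((q1 i).mp hh)
  · rw [r]; exact fun hh => n2 ((q2 i).mp hh)
  · rw [r]; exact fun hh => n2 ((q3 i).mp hh)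
  · rw [r]; exact fun hh => n4 ((q4 i).mp hh)

/-- the normalising factor -/
def ss (ω : ℂ) (x y : Fin 5) : ℂ := (ev ω x - ev ω y) * ev ω x ^ 2 * ev ω y ^ 2

lemma ev_ne0 {ω : ℂ} (ho : Om ω) (x : Fin 5) : ev ω x ≠ 0 := pow_ne_zero _ ho.ne0

lemma ev_p5 {ω : ℂ} (ho : Om ω) (x : Fin 5) : ev ω x ^ 5 = 1 := by
  unfold ev; rw [← pow_mul, mul_comm, pow_mul, ho.p5, one_pow]

lemma ev_conj {ω : ℂ} (ho : Om ω) (x : Fin 5) : conj (ev ω x) = ev ω x ^ 4 := by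
  unfold ev; rw [map_pow, ho.cj, ← pow_mul, ← pow_mul, mul_comm]

lemma ss_conj {ω : ℂ} (ho : Om ω) (x y : Fin 5) : conj (ss ω x y) = - ss ω x y := by
  unfold ss
  simp only [map_mul, map_sub, map_pow, ev_conj ho]
  have hx := ev_p5 ho x
  have hy := ev_p5 ho y
  generalize ev ω x = X at *
  generalize ev ω y = Y at *
  linear_combination (X^2 * (X^5 + 1) * Y^8 - X^3 * Y^12) * hx + (X^2 * Y^3 - X^3 * Y^2 * (Y^5 + 1)) * hy

lemma ss_ne {ω : ℂ} (ho : Om ω) (hi : Function.Injective (ev ω)) {x y : Fin 5} (h : x ≠ y) : ss ω x y ≠ 0 := by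
  unfold ss
  exact mul_ne_zero (mul_ne_zero (sub_ne_zero.mpr (hi.ne h)) (pow_ne_zero _ (ev_ne0 ho x))) (pow_ne_zero _ (ev_ne0 ho y))

lemma ss_anti (ω : ℂ) (x y : Fin 5) : ss ω y x = - ss ω x y := by
  unfold ss; ring

lemma ss_shift {ω : ℂ} (ho : Om ω) (x y t : Fin 5) : ss ω (x + t) (y + t) = ss ω x y := by
  unfold ss
  rw [add_comm x t, add_comm y t, ev_add ho, ev_add ho]
  change (ev ω t * ev ω x - ev ω t * ev ω y) * (ev ω t * ev ω x) ^ 2 * (ev ω t * ev ω y) ^ 2 = _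
  have := ev_p5 ho t
  linear_combination ((ev ω x - ev ω y) * ev ω x ^ 2 * ev ω y ^ 2) * this

/-- normalised entries -/
def cc (ω : ℂ) (B : Matrix (Fin 5) (Fin 5) ℂ) (x y : Fin 5) : ℂ := B x y / ss ω x y

lemma rc_c {ω : ℂ} (ho : Om ω) {B : Matrix (Fin 5) (Fin 5) ℂ} (h : Good (ev ω) B) {i j : Fin 5}
    (hij : i ≠ j) (hr : Rc (ev ω) B i j) :
    ∃ μ : ℂ, μ ≠ 0 ∧ ∀ k, k ≠ i → k ≠ j → cc ω B k i = μ * conj (cc ω B j k) := by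
  obtain ⟨μ, hμ, hk⟩ := hr
  have hi0 := ev_ne0 ho i
  have hj0 := ev_ne0 ho j
  refine ⟨μ * ev ω j ^ 2 / ev ω i ^ 2, by positivity, fun k h1 h2 => ?_⟩
  have e := hk k h1
  unfold cc
  have hk0 := ev_ne0 ho k
  have s1 := ss_ne ho h.inj h1
  have s2 := ss_ne ho h.inj h2
  have d1 : ev ω k - ev ω i ≠ 0 := sub_ne_zero.mpr (h.inj.ne h1)
  have d2 : ev ω k - ev ω j ≠ 0 := sub_ne_zero.mpr (h.inj.ne h2)
  rw [map_div₀, ss_conj ho, ss_anti ω k j, neg_neg]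
  unfold rr at e
  unfold ss
  field_simp at e ⊢
  linear_combination e


lemma fin_aux1 (i : Fin 5) : i + 1 + 1 = i + 2 := by revert i; decide
lemma fin_aux2 (i : Fin 5) : i + 4 + 1 = i := by revert i; decide
lemma fin_aux3 (i : Fin 5) : i + 2 + 1 = i + 3 := by revert i; decide
lemma fin_ne (i j : Fin 5) (h : i ≠ j) : j = i + 1 ∨ j = i + 2 ∨ j = i + 3 ∨ j = i + 4 := by revert i j; decide
lemma fn0 (i a : Fin 5) (h : a ≠ 0) : i + a ≠ i := by simpa using h
lemma fna (i a b : Fin 5) (h : a ≠ b) : i + a ≠ i + b := by simpa using h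
lemma fa : (((0 : Fin 5) + 1) = 1) ∧ (((0 : Fin 5) + 2) = 2) ∧ (((0 : Fin 5) + 3) = 3) ∧ (((0 : Fin 5) + 4) = 4) ∧ (((1 : Fin 5) + 1) = 2) ∧ (((1 : Fin 5) + 2) = 3) ∧ (((1 : Fin 5) + 3) = 4) ∧ (((1 : Fin 5) + 4) = 0) ∧ (((2 : Fin 5) + 1) = 3) ∧ (((2 : Fin 5) + 2) = 4) ∧ (((2 : Fin 5) + 3) = 0) ∧ (((2 : Fin 5) + 4) = 1) ∧ (((3 : Fin 5) + 1) = 4) ∧ (((3 : Fin 5) + 2) = 0) ∧ (((3 : Fin 5) + 3) = 1) ∧ (((3 : Fin 5) + 4) = 2) ∧ (((4 : Fin 5) + 1) = 0) ∧ (((4 : Fin 5) + 2) = 1) ∧ (((4 : Fin 5) + 3) = 2) ∧ (((4 : Fin 5) + 4) = 3) := by decide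

lemma solve_mod (L : Fin 5 → Fin 5 → ℝ)
    (h1 : ∀ i, ∃ m, ∀ k, k ≠ i → k ≠ i + 1 → L k i = m + L (i + 1) k)
    (h2 : ∀ i, ∃ m, ∀ k, k ≠ i → k ≠ i + 2 → L k i = m + L (i + 2) k) :
    ∃ g γ : Fin 5 → ℝ, ∀ i j, i ≠ j → L i j = g i + g j + γ (j - i) := by
  let g : Fin 5 → ℝ := fun i => (L i (i+1) - L (i+1) (i+2) + L (i+2) (i+3) - L (i+3) (i+4) + L (i+4) i) / 2
  let F : Fin 5 → Fin 5 → ℝ := fun i j => L i j - g i - g j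
  have r1 : ∀ i, ∃ m, ∀ k, k ≠ i → k ≠ i + 1 → F k i = m + F (i + 1) k := by
    intro i
    obtain ⟨m, hm⟩ := h1 i
    refine ⟨m - g i + g (i + 1), fun k a1 a2 => ?_⟩
    simp only [F]; rw [hm k a1 a2]; ring
  have r2 : ∀ i, ∃ m, ∀ k, k ≠ i → k ≠ i + 2 → F k i = m + F (i + 2) k := by
    intro i
    obtain ⟨m, hm⟩ := h2 i
    refine ⟨m - g i + g (i + 2), fun k a1 a2 => ?_⟩
    simp only [F]; rw [hm k a1 a2]; ring
  have f1 : ∀ i, F i (i + 1) = 0 := by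
    intro i
    have : g i + g (i + 1) = L i (i + 1) := by
      simp only [g]
      rw [show i + 1 + 1 = i + 2 by revert i; decide, show i + 1 + 2 = i + 3 by revert i; decide,
        show i + 1 + 3 = i + 4 by revert i; decide, show i + 1 + 4 = i by revert i; decide]
      ring
    simp only [F]; linarith
  have key : ∃ γ : Fin 5 → ℝ, ∀ i j, i ≠ j → F i j = γ (j - i) := by
    clear_value F
    clear h1 h2
    choose m hm using r1
    choose m' hm' using r2
    -- the relations
    have e3 : ∀ i, F (i + 2) i + F (i + 1) (i + 4) = 0 := by
      intro i
      have a1 := hm i (i + 2) (fn0 i _ (by decide)) (fna i _ _ (by decide))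
      have a2 := hm i (i + 4) (fn0 i _ (by decide)) (fna i _ _ (by decide))
      have b1 := f1 (i + 1)
      have b2 := f1 (i + 4)
      rw [show i + 1 + 1 = i + 2 from fin_aux1 i] at b1
      rw [show i + 4 + 1 = i from fin_aux2 i] at b2
      linarith
    have e2 : ∀ i, F (i + 3) i + F (i + 2) (i + 4) = 0 := by
      intro i
      have a1 := hm' i (i + 3) (fn0 i _ (by decide)) (fna i _ _ (by decide))
      have a2 := hm' i (i + 4) (fn0 i _ (by decide)) (fna i _ _ (by decide))
      have b1 := f1 (i + 2)
      have b2 := f1 (i + 4)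
      rw [show i + 2 + 1 = i + 3 from fin_aux3 i] at b1
      rw [show i + 4 + 1 = i from fin_aux2 i] at b2
      linarith
    have e4 : ∀ i, F (i + 1) i - F (i + 2) (i + 1) = F (i + 3) i := by
      intro i
      have a1 := hm' i (i + 3) (fn0 i _ (by decide)) (fna i _ _ (by decide))
      have a2 := hm' i (i + 1) (fn0 i _ (by decide)) (fna i _ _ (by decide))
      have b1 := f1 (i + 2)
      rw [show i + 2 + 1 = i + 3 from fin_aux3 i] at b1
      linarith
    have c3 : ∀ i, F i (i + 3) = 0 := by
      intro i
      have x0 := e3 0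
      have x1 := e3 1
      have x2 := e3 2
      have x3 := e3 3
      have x4 := e3 4
      simp only [fa] at x0 x1 x2 x3 x4
      fin_cases i <;> simp [fa] <;> linarith
    have c2 : ∀ i, F i (i + 2) = 0 := by
      intro i
      have x0 := e2 0
      have x1 := e2 1
      have x2 := e2 2
      have x3 := e2 3
      have x4 := e2 4
      simp only [fa] at x0 x1 x2 x3 x4
      fin_cases i <;> simp [fa] <;> linarith
    refine ⟨fun d => if d = 4 then F 1 0 else 0, fun i j hij => ?_⟩
    change F i j = if j - i = 4 then F 1 0 else 0
    have x0 := e4 0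
    have x1 := e4 1
    have x2 := e4 2
    have x3 := e4 3
    have x4 := e4 4
    have y0 := c2 0
    have y1 := c2 1
    have y2 := c2 2
    have y3 := c2 3
    have y4 := c2 4
    have z := c3 i
    have z2 := c2 i
    have z1 := f1 i
    simp only [fa] at x0 x1 x2 x3 x4 y0 y1 y2 y3 y4
    rcases fin_ne i j hij with rfl | rfl | rfl | rfl
    · rw [z1, add_sub_cancel_left, if_neg (by decide)]
    · rw [z2, add_sub_cancel_left, if_neg (by decide)]
    · rw [z, add_sub_cancel_left, if_neg (by decide)]
    · rw [add_sub_cancel_left, if_pos rfl]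
      fin_cases i <;> simp [fa] <;> linarith
  obtain ⟨γ, hγ⟩ := key
  refine ⟨g, γ, fun i j hij => ?_⟩
  have := hγ i j hij
  simp only [F] at this
  linarith

lemma solve_phase {G : Type*} [AddCommGroup G] (hdiv : ∀ x : G, ∃ t : G, x = t + t + t + t + t) (L : Fin 5 → Fin 5 → G)
    (h1 : ∀ i, ∃ m, ∀ k, k ≠ i → k ≠ i + 1 → L k i = m - L (i + 1) k)
    (h2 : ∀ i, ∃ m, ∀ k, k ≠ i → k ≠ i + 2 → L k i = m - L (i + 2) k) :
    ∃ g γ : Fin 5 → G, ∀ i j, i ≠ j → L i j = g i - g j + γ (j - i) := by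
  obtain ⟨t, ht⟩ := hdiv (L 0 1 + L 1 2 + L 2 3 + L 3 4 + L 4 0)
  obtain ⟨g, hg⟩ : ∃ g : Fin 5 → G, ∀ i, g (i + 1) = g i + t - L i (i + 1) := by
    refine ⟨![0, t - L 0 1, t - L 0 1 + t - L 1 2, t - L 0 1 + t - L 1 2 + t - L 2 3,
      t - L 0 1 + t - L 1 2 + t - L 2 3 + t - L 3 4], fun i => ?_⟩
    fin_cases i
    · change t - L 0 1 = 0 + t - L 0 1
      abel
    · rfl
    · rfl
    · rfl
    · change 0 = t - L 0 1 + t - L 1 2 + t - L 2 3 + t - L 3 4 + t - L 4 0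
      rw [eq_comm, ← sub_eq_zero.mpr ht.symm]
      abel
  let F : Fin 5 → Fin 5 → G := fun i j => L i j - g i + g j
  have r1 : ∀ i, ∃ m, ∀ k, k ≠ i → k ≠ i + 1 → F k i = m - F (i + 1) k := by
    intro i
    obtain ⟨m, hm⟩ := h1 i
    refine ⟨m + g i - g (i + 1), fun k a1 a2 => ?_⟩
    simp only [F]; rw [hm k a1 a2]; abel
  have r2 : ∀ i, ∃ m, ∀ k, k ≠ i → k ≠ i + 2 → F k i = m - F (i + 2) k := by
    intro i
    obtain ⟨m, hm⟩ := h2 i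
    refine ⟨m + g i - g (i + 2), fun k a1 a2 => ?_⟩
    simp only [F]; rw [hm k a1 a2]; abel
  have f1 : ∀ i, F i (i + 1) = t := by
    intro i
    simp only [F]
    rw [hg]; abel
  have key : ∃ γ : Fin 5 → G, ∀ i j, i ≠ j → F i j = γ (j - i) := by
    clear_value F
    clear h1 h2
    choose m hm using r1
    choose m' hm' using r2
    have e3 : ∀ i, F (i + 2) i = F (i + 1) (i + 4) := by
      intro i
      have a1 := hm i (i + 2) (fn0 i _ (by decide)) (fna i _ _ (by decide))
      have a2 := hm i (i + 4) (fn0 i _ (by decide)) (fna i _ _ (by decide))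
      have b1 := f1 (i + 1)
      have b2 := f1 (i + 4)
      rw [fin_aux1 i] at b1
      rw [fin_aux2 i] at b2
      rw [b1] at a1
      rw [b2] at a2
      rw [a1, a2]; abel
    have e2 : ∀ i, F (i + 3) i = F (i + 2) (i + 4) := by
      intro i
      have a1 := hm' i (i + 3) (fn0 i _ (by decide)) (fna i _ _ (by decide))
      have a2 := hm' i (i + 4) (fn0 i _ (by decide)) (fna i _ _ (by decide))
      have b1 := f1 (i + 2)
      have b2 := f1 (i + 4)
      rw [fin_aux3 i] at b1
      rw [fin_aux2 i] at b2
      rw [b1] at a1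
      rw [b2] at a2
      rw [a1, a2]; abel
    have e4 : ∀ i, F (i + 1) i = F (i + 3) i + t - F (i + 2) (i + 1) := by
      intro i
      have a1 := hm' i (i + 3) (fn0 i _ (by decide)) (fna i _ _ (by decide))
      have a2 := hm' i (i + 1) (fn0 i _ (by decide)) (fna i _ _ (by decide))
      have b1 := f1 (i + 2)
      rw [fin_aux3 i] at b1
      rw [b1] at a1
      rw [a1, a2]; abel
    have c3 : ∀ i, F i (i + 3) = F 0 3 := by
      intro i
      have x0 := e3 0
      have x1 := e3 1
      have x2 := e3 2
      have x3 := e3 3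
      have x4 := e3 4
      simp only [fa] at x0 x1 x2 x3 x4
      fin_cases i <;> simp [fa] <;> grind
    have c2 : ∀ i, F i (i + 2) = F 0 2 := by
      intro i
      have x0 := e2 0
      have x1 := e2 1
      have x2 := e2 2
      have x3 := e2 3
      have x4 := e2 4
      simp only [fa] at x0 x1 x2 x3 x4
      fin_cases i <;> simp [fa] <;> grind
    have c4 : ∀ i, F i (i + 4) = F 1 0 := by
      have x0 := e4 0
      have x1 := e4 1
      have x2 := e4 2
      have x3 := e4 3
      have x4 := e4 4
      have y1 := c2 1
      have y2 := c2 2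
      have y3 := c2 3
      have y4 := c2 4
      simp only [fa] at x0 x1 x2 x3 x4 y1 y2 y3 y4
      rw [y3] at x0
      rw [y4] at x1
      rw [y1] at x3
      rw [y2] at x4
      have z1 : F 1 0 = F 3 2 := by rw [x0, x1]; abel
      have z2 : F 3 2 = F 0 4 := by rw [x2, x3]; abel
      have z3 : F 0 4 = F 2 1 := by rw [x4, x0]; abel
      have z4 : F 2 1 = F 4 3 := by rw [x1, x2]; abel
      intro i
      fin_cases i
      · exact (z1.trans z2).symm
      · rfl
      · exact (z1.trans (z2.trans z3)).symm
      · exact z1.symm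
      · exact (z1.trans (z2.trans (z3.trans z4))).symm
    refine ⟨![0, t, F 0 2, F 0 3, F 1 0], fun i j hij => ?_⟩
    rcases fin_ne i j hij with rfl | rfl | rfl | rfl
    · rw [f1, add_sub_cancel_left]; rfl
    · rw [c2, add_sub_cancel_left]; rfl
    · rw [c3, add_sub_cancel_left]; rfl
    · rw [c4, add_sub_cancel_left]; rfl
  obtain ⟨γ, hγ⟩ := key
  refine ⟨g, γ, fun i j hij => ?_⟩
  have := hγ i j hij
  simp only [F] at this
  rw [← this]; abel


lemma solve_C (C : Fin 5 → Fin 5 → ℂ) (hC : ∀ i j, i ≠ j → C i j ≠ 0)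
    (h1 : ∀ i, ∃ μ : ℂ, μ ≠ 0 ∧ ∀ k, k ≠ i → k ≠ i + 1 → C k i = μ * conj (C (i + 1) k))
    (h2 : ∀ i, ∃ μ : ℂ, μ ≠ 0 ∧ ∀ k, k ≠ i → k ≠ i + 2 → C k i = μ * conj (C (i + 2) k)) :
    ∃ (g : Fin 5 → ℝ) (d γ : Fin 5 → ℂ), (∀ i, 0 < g i) ∧ (∀ i, d i * conj (d i) = 1) ∧
      ∀ i j, i ≠ j → C i j = (g i : ℂ) * g j * (d i * conj (d j)) * γ (j - i) := by
  obtain ⟨l, γ, hl⟩ := solve_mod (fun i j => Real.log ‖C i j‖)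
    (fun i => by
      obtain ⟨μ, hμ, h⟩ := h1 i
      refine ⟨Real.log ‖μ‖, fun k a1 a2 => ?_⟩
      rw [h k a1 a2, norm_mul, RCLike.norm_conj, Real.log_mul (by simpa using hμ) (by simpa using hC _ _ a2.symm)])
    (fun i => by
      obtain ⟨μ, hμ, h⟩ := h2 i
      refine ⟨Real.log ‖μ‖, fun k a1 a2 => ?_⟩
      rw [h k a1 a2, norm_mul, RCLike.norm_conj, Real.log_mul (by simpa using hμ) (by simpa using hC _ _ a2.symm)])
  obtain ⟨δ, θ, hδ⟩ := solve_phase (G := Real.Angle)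
    (fun x => by
      induction x using Real.Angle.induction_on with
      | _ x =>
        refine ⟨((x / 5 : ℝ) : Real.Angle), ?_⟩
        simp only [← Real.Angle.coe_add]
        congr 1; ring)
    (fun i j => (Complex.arg (C i j) : Real.Angle))
    (fun i => by
      obtain ⟨μ, hμ, h⟩ := h1 i
      refine ⟨(Complex.arg μ : Real.Angle), fun k a1 a2 => ?_⟩
      rw [h k a1 a2, Complex.arg_mul_coe_angle hμ (by simpa using hC _ _ a2.symm), Complex.arg_conj_coe_angle,
        sub_eq_add_neg])
    (fun i => by
      obtain ⟨μ, hμ, h⟩ := h2 i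
      refine ⟨(Complex.arg μ : Real.Angle), fun k a1 a2 => ?_⟩
      rw [h k a1 a2, Complex.arg_mul_coe_angle hμ (by simpa using hC _ _ a2.symm), Complex.arg_conj_coe_angle,
        sub_eq_add_neg])
  refine ⟨fun i => Real.exp (l i), fun i => ((δ i).toCircle : ℂ),
    fun d => (Real.exp (γ d) : ℝ) * ((θ d).toCircle : ℂ), fun i => Real.exp_pos _, fun i => ?_, fun i j hij => ?_⟩
  · rw [Complex.mul_conj, Circle.normSq_coe]; simp
  · have hn := hl i j hij
    have ha := hδ i j hij
    have e1 : (‖C i j‖ : ℝ) = Real.exp (l i) * Real.exp (l j) * Real.exp (γ (j - i)) := by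
      rw [← Real.exp_add, ← Real.exp_add, ← hn, Real.exp_log (norm_pos_iff.mpr (hC i j hij))]
    have e2 : Complex.exp (Complex.arg (C i j) * I) =
        ((δ i).toCircle : ℂ) * conj ((δ j).toCircle : ℂ) * ((θ (j - i)).toCircle : ℂ) := by
      rw [← Circle.coe_exp, ← Real.Angle.toCircle_coe, ha, Real.Angle.toCircle_add, sub_eq_add_neg,
        Real.Angle.toCircle_add, Real.Angle.toCircle_neg, Circle.coe_mul, Circle.coe_mul,
        Circle.coe_inv_eq_conj]
    rw [← Complex.norm_mul_exp_arg_mul_I (C i j), e2, e1]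
    push_cast
    ring


lemma ss_sq {ω : ℂ} (ho : Om ω) (x : Fin 5) :
    ss ω x (x + 1) * ss ω (x + 1) x = 3 - (Real.goldenRatio : ℂ) ∧
    ss ω x (x + 2) * ss ω (x + 2) x = 2 + (Real.goldenRatio : ℂ) ∧
    ss ω x (x + 3) * ss ω (x + 3) x = 2 + (Real.goldenRatio : ℂ) ∧
    ss ω x (x + 4) * ss ω (x + 4) x = 3 - (Real.goldenRatio : ℂ) := by
  have key : ∀ d, ss ω x (x + d) * ss ω (x + d) x = - (ss ω 0 d) ^ 2 := by
    intro d
    rw [ss_anti ω x (x + d)]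
    have := ss_shift ho 0 d x
    rw [zero_add, add_comm d x] at this
    rw [this]; ring
  have h5 := ho.p5
  have hc := ho.cyc
  rw [key, key, key, key, ← ho.gold]
  unfold ss ev
  change -((ω ^ 0 - ω ^ 1) * (ω ^ 0) ^ 2 * (ω ^ 1) ^ 2) ^ 2 = _ ∧ -((ω ^ 0 - ω ^ 2) * (ω ^ 0) ^ 2 * (ω ^ 2) ^ 2) ^ 2 = _
    ∧ -((ω ^ 0 - ω ^ 3) * (ω ^ 0) ^ 2 * (ω ^ 3) ^ 2) ^ 2 = _ ∧ -((ω ^ 0 - ω ^ 4) * (ω ^ 0) ^ 2 * (ω ^ 4) ^ 2) ^ 2 = _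
  refine ⟨?_, ?_, ?_, ?_⟩ <;> grind

lemma vertex_c {ω : ℂ} (ho : Om ω) {B : Matrix (Fin 5) (Fin 5) ℂ} (h : Good (ev ω) B) (x : Fin 5) (W : Fin 5 → Fin 5 → ℂ)
    (hW : ∀ x y, W x y = cc ω B x y * cc ω B y x) :
    (Real.goldenRatio : ℂ) * W x (x + 2) = - (Real.goldenRatio : ℂ) * W x (x + 1) + W x (x + 4) ∧
    (Real.goldenRatio : ℂ) * W x (x + 3) = W x (x + 1) - (Real.goldenRatio : ℂ) * W x (x + 4) := by
  obtain ⟨v1, v2⟩ := vertex ho h x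
  obtain ⟨s1, s2, s3, s4⟩ := ss_sq ho x
  have hv : ∀ d, d ≠ 0 → vf B x (x + d) = (ss ω x (x + d) * ss ω (x + d) x) * W x (x + d) := by
    intro d hd
    have n1 := ss_ne ho h.inj (fn0 x d hd)
    have n2 := ss_ne ho h.inj (fn0 x d hd).symm
    rw [hW]
    unfold vf cc
    field_simp
  rw [hv 1 (by decide), hv 2 (by decide), hv 4 (by decide), s1, s2, s4] at v1
  rw [hv 1 (by decide), hv 3 (by decide), hv 4 (by decide), s1, s3, s4] at v2
  have f2 : (Real.goldenRatio : ℂ) ^ 2 = (Real.goldenRatio : ℂ) + 1 := by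
    exact_mod_cast Real.goldenRatio_sq
  have f3 : (Real.goldenRatio : ℂ) * (3 - (Real.goldenRatio : ℂ)) ≠ 0 := by
    have a1 := Real.goldenRatio_pos
    have a2 := Real.goldenRatio_lt_two
    have : Real.goldenRatio * (3 - Real.goldenRatio) ≠ 0 := by
      apply mul_ne_zero a1.ne'
      linarith
    exact_mod_cast this
  generalize (Real.goldenRatio : ℂ) = f at *
  constructor
  · apply mul_left_cancel₀ f3
    linear_combination v1 + (-W x (x+2) * f + 2 * W x (x+2)) * f2 - (f - f) * f2
  · apply mul_left_cancel₀ f3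
    linear_combination v2 + (-W x (x+3) * f + 2 * W x (x+3)) * f2

/-- either affine, or both kinds of vertices occur -/
def AffOr (t : Fin 5 → Fin 5) : Prop :=
    (∃ u, u ≠ 0 ∧ ∀ x, t (x + 1) - t x = u) ∨
    ((∃ x, ((t (x + 1) - t x = 1 ∨ t (x + 1) - t x = 4) ∧ (t (x + 2) - t x = 1 ∨ t (x + 2) - t x = 4)) ∨
       ((t (x + 3) - t x = 1 ∨ t (x + 3) - t x = 4) ∧ (t (x + 4) - t x = 1 ∨ t (x + 4) - t x = 4))) ∧
     (∃ x, ((t (x + 1) - t x = 1 ∨ t (x + 1) - t x = 4) ∧ (t (x + 4) - t x = 1 ∨ t (x + 4) - t x = 4)) ∨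
       ((t (x + 2) - t x = 1 ∨ t (x + 2) - t x = 4) ∧ (t (x + 3) - t x = 1 ∨ t (x + 3) - t x = 4))))

instance (t : Fin 5 → Fin 5) : Decidable (AffOr t) := by unfold AffOr; infer_instance

set_option maxRecDepth 100000 in
set_option maxHeartbeats 4000000 in
lemma aff_aux : ∀ a b c d : Fin 5, [0, a, b, c, d].Nodup →
    AffOr ![0, a, b, c, d] := by
  decide

lemma affine_or (t : Fin 5 → Fin 5) (ht : Function.Injective t) : AffOr t := by
  have e : ![0, t 1 - t 0, t 2 - t 0, t 3 - t 0, t 4 - t 0] = fun x => t x - t 0 := by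
    funext x
    fin_cases x
    · exact (sub_self (t 0)).symm
    all_goals rfl
  have := aff_aux (t 1 - t 0) (t 2 - t 0) (t 3 - t 0) (t 4 - t 0)
    (by
      have := List.Nodup.map (f := fun x => t x - t 0) (sub_left_injective.comp ht)
        (show [(0 : Fin 5), 1, 2, 3, 4].Nodup by decide)
      simpa using this)
  rw [e] at this
  unfold AffOr at this ⊢
  simpa only [sub_sub_sub_cancel_right] using this


lemma comp_cases : ∀ p q r s : Fin 5, [0, p, q, r, s].Nodup → (p = 1 ∨ p = 4) → (q = 1 ∨ q = 4) →
    (r = 2 ∨ r = 3) ∧ (s = 2 ∨ s = 3) := by decide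

lemma fin_m : (∀ y u : Fin 5, y + u + u - y = 2 * u) ∧ (∀ y u : Fin 5, y + u + u + u - y = 3 * u) ∧
    (∀ y u : Fin 5, y + u + u + u + u - y = 4 * u) ∧ (∀ x : Fin 5, x + 3 + 1 = x + 4) := by decide

lemma matching (K : Fin 5 → ℝ) (hK : ∀ x, 0 < K x) (Γ : Fin 5 → ℂ) (h41 : Γ 4 = Γ 1) (h32 : Γ 3 = Γ 2)
    (h1 : Γ 1 ≠ 0) (h2 : Γ 2 ≠ 0) (t : Fin 5 → Fin 5) (ht : Function.Injective t) (f : ℝ) (hf : 1 < f)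
    (E1 : ∀ x, (f : ℂ) * (K (x + 2) * Γ (t (x + 2) - t x)) =
      - (f : ℂ) * (K (x + 1) * Γ (t (x + 1) - t x)) + K (x + 4) * Γ (t (x + 4) - t x))
    (E2 : ∀ x, (f : ℂ) * (K (x + 3) * Γ (t (x + 3) - t x)) =
       (K (x + 1) * Γ (t (x + 1) - t x)) - f * (K (x + 4) * Γ (t (x + 4) - t x))) :
    (∃ u, u ≠ 0 ∧ ∀ x, t (x + 1) - t x = u) ∧ ∀ x, K x = K 0 := by
  have nd : ∀ x, [0, t (x + 1) - t x, t (x + 2) - t x, t (x + 3) - t x, t (x + 4) - t x].Nodup := by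
    intro x
    have := List.Nodup.map (f := fun y => t (x + y) - t x) (sub_left_injective.comp (ht.comp (add_right_injective x)))
        (show [(0 : Fin 5), 1, 2, 3, 4].Nodup by decide)
    simpa using this
  have G1 : ∀ p, (p = 1 ∨ p = 4) → Γ p = Γ 1 := by
    rintro p (rfl | rfl)
    · rfl
    · exact h41
  have G2 : ∀ p, (p = 2 ∨ p = 3) → Γ p = Γ 2 := by
    rintro p (rfl | rfl)
    · rfl
    · exact h32
  have aff : ∃ u, u ≠ 0 ∧ ∀ x, t (x + 1) - t x = u := by
    rcases affine_or t ht with hA | ⟨⟨x, hx⟩, ⟨y, hy⟩⟩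
    · exact hA
    exfalso
    have pos : ∃ r s : ℝ, 0 < r ∧ 0 < s ∧ (r : ℂ) * Γ 1 = s * Γ 2 := by
      have e1 := E1 x
      have e2 := E2 x
      rcases hx with ⟨a1, a2⟩ | ⟨a1, a2⟩
      · obtain ⟨b1, b2⟩ := comp_cases _ _ _ _ (nd x) a1 a2
        rw [G1 _ a1, G1 _ a2, G2 _ b2] at e1
        refine ⟨f * (K (x + 1) + K (x + 2)), K (x + 4), mul_pos (by linarith) (add_pos (hK _) (hK _)), hK _, ?_⟩
        push_cast
        linear_combination e1
      · obtain ⟨b1, b2⟩ := comp_cases _ _ _ _ (sw3 (sw4 (sw2 (sw3 (nd x))))) a1 a2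
        rw [G1 _ a1, G1 _ a2, G2 _ b1] at e2
        refine ⟨f * (K (x + 3) + K (x + 4)), K (x + 1), mul_pos (by linarith) (add_pos (hK _) (hK _)), hK _, ?_⟩
        push_cast
        linear_combination e2
    have neg : ∃ r s : ℝ, 0 < r ∧ 0 < s ∧ (r : ℂ) * Γ 1 = - (s * Γ 2) := by
      have e1 := E1 y
      have e2 := E2 y
      rcases hy with ⟨a1, a2⟩ | ⟨a1, a2⟩
      · obtain ⟨b1, b2⟩ := comp_cases _ _ _ _ (sw3 (sw4 (nd y))) a1 a2
        rw [G1 _ a1, G1 _ a2, G2 _ b1] at e1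
        rw [G1 _ a1, G1 _ a2, G2 _ b2] at e2
        refine ⟨(f - 1) * (K (y + 1) + K (y + 4)), f * (K (y + 2) + K (y + 3)), mul_pos (by linarith) (add_pos (hK _) (hK _)), mul_pos (by linarith) (add_pos (hK _) (hK _)), ?_⟩
        push_cast
        linear_combination e1 + e2
      · obtain ⟨b1, b2⟩ := comp_cases _ _ _ _ (sw3 (sw2 (nd y))) a1 a2
        rw [G1 _ a1, G2 _ b1, G2 _ b2] at e1
        rw [G1 _ a2, G2 _ b1, G2 _ b2] at e2
        refine ⟨f * (K (y + 2) + K (y + 3)), (f - 1) * (K (y + 1) + K (y + 4)), mul_pos (by linarith) (add_pos (hK _) (hK _)), mul_pos (by linarith) (add_pos (hK _) (hK _)), ?_⟩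
        push_cast
        linear_combination e1 + e2
    obtain ⟨r, s, hr, hs, hrs⟩ := pos
    obtain ⟨r', s', hr', hs', hrs'⟩ := neg
    have : ((r * s' + r' * s : ℝ) : ℂ) * Γ 1 = 0 := by
      push_cast
      linear_combination (s' : ℂ) * hrs + s * hrs'
    rcases mul_eq_zero.mp this with h0 | h0
    · have : r * s' + r' * s = 0 := by exact_mod_cast h0
      have := mul_pos hr hs'
      have := mul_pos hr' hs
      linarith
    · exact h1 h0
  refine ⟨aff, ?_⟩
  obtain ⟨u, hu, hA⟩ := aff
  have t1 : ∀ x, t (x + 1) = t x + u := fun x => by rw [← hA x]; abel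
  have t2 : ∀ x, t (x + 2) - t x = 2 * u := fun x => by
    rw [← fin_aux1, t1, t1]; exact fin_m.1 _ _
  have t3 : ∀ x, t (x + 3) - t x = 3 * u := fun x => by
    rw [← fin_aux3, ← fin_aux1, t1, t1, t1]; exact fin_m.2.1 _ _
  have t4 : ∀ x, t (x + 4) - t x = 4 * u := fun x => by
    rw [show x + 4 = x + 3 + 1 from (fin_m.2.2.2 x).symm, ← fin_aux3, ← fin_aux1, t1, t1, t1, t1]; exact fin_m.2.2.1 _ _
  have g4 : Γ (4 * u) = Γ u := by
    clear E1 E2 t1 t2 t3 t4 hA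
    fin_cases u
    · exact absurd rfl hu
    · exact h41
    · exact h32
    · exact h32.symm
    · exact h41.symm
  have g3 : Γ (3 * u) = Γ (2 * u) := by
    clear E1 E2 t1 t2 t3 t4 hA g4
    fin_cases u
    · exact absurd rfl hu
    · exact h32
    · exact h41.symm
    · exact h41
    · exact h32.symm
  have g0 : Γ u ≠ 0 := by
    clear E1 E2 t1 t2 t3 t4 hA g4 g3
    fin_cases u
    · exact absurd rfl hu
    · exact h1
    · exact h2
    · exact h32 ▸ h2
    · exact h41 ▸ h1
  simp only [t2, hA, t4, g4, t3, g3] at E1 E2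
  generalize Γ u = a at *
  generalize Γ (2 * u) = b at *
  have hb : (f : ℂ) * b = (1 - f) * a := by
    have S : ((K 0 + K 1 + K 2 + K 3 + K 4 : ℝ) : ℂ) ≠ 0 := by
      have := hK 0
      have := hK 1
      have := hK 2
      have := hK 3
      have := hK 4
      have : K 0 + K 1 + K 2 + K 3 + K 4 ≠ 0 := by positivity
      exact_mod_cast this
    apply mul_left_cancel₀ S
    have x0 := E1 0
    have x1 := E1 1
    have x2 := E1 2
    have x3 := E1 3
    have x4 := E1 4
    simp only [fa] at x0 x1 x2 x3 x4
    push_cast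
    linear_combination x0 + x1 + x2 + x3 + x4
  have K1 : ∀ x, K (x + 2) + K (x + 3) = K (x + 1) + K (x + 4) := by
    intro x
    have hc : (((1 - f : ℝ) : ℂ) * a) ≠ 0 := by
      apply mul_ne_zero _ g0
      have : (1 - f) ≠ 0 := by linarith
      exact_mod_cast this
    have : ((K (x + 2) + K (x + 3) : ℝ) : ℂ) = ((K (x + 1) + K (x + 4) : ℝ) : ℂ) := by
      apply mul_left_cancel₀ hc
      push_cast
      linear_combination E1 x + E2 x - (K (x + 2) + K (x + 3)) * hb
    exact_mod_cast this
  have x0 := K1 0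
  have x1 := K1 1
  have x2 := K1 2
  have x3 := K1 3
  have x4 := K1 4
  simp only [fa] at x0 x1 x2 x3 x4
  intro x
  fin_cases x <;> simp <;> linarith


lemma fin_mulu : ∀ (t : Fin 5 → Fin 5) (u : Fin 5), (∀ x, t (x + 1) - t x = u) → ∀ x y, t y - t x = u * (y - x) := by
  intro t u h
  have t1 : ∀ x, t (x + 1) = t x + u := fun x => by rw [← h x]; abel
  have key : ∀ x, t x = t 0 + u * x := by
    have a0 := t1 0
    have a1 := t1 1
    have a2 := t1 2
    have a3 := t1 3
    simp only [fa] at a0 a1 a2 a3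
    have c : ∀ a u : Fin 5, a = a + u * 0 ∧ a + u = a + u * 1 ∧ a + u + u = a + u * 2 ∧ a + u + u + u = a + u * 3 ∧
      a + u + u + u + u = a + u * 4 := by decide
    obtain ⟨c0, c1, c2, c3, c4⟩ := c (t 0) u
    intro x
    fin_cases x
    · exact c0
    · exact a0.trans c1
    · exact (a1.trans (by rw [a0])).trans c2
    · exact (a2.trans (by rw [a1, a0])).trans c3
    · exact (a3.trans (by rw [a2, a1, a0])).trans c4
  have c : ∀ a u x y : Fin 5, a + u * y - (a + u * x) = u * (y - x) := by decide
  intro x y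
  rw [key x, key y]
  exact c _ _ _ _

lemma circ_form {ω : ℂ} (ho : Om ω) {B : Matrix (Fin 5) (Fin 5) ℂ} (h : Good (ev ω) B) (hM : ¬ Mono B) :
    ∃ D β : Fin 5 → ℂ, (∀ x, D x * conj (D x) = 1) ∧ ∀ x y, B x y = D x * conj (D y) * β (y - x) := by
  obtain ⟨e, he⟩ := rc_cycle h hM
  have hne := offdiag_ne ho h hM e he
  have hCne : ∀ i j, i ≠ j → cc ω B (e i) (e j) ≠ 0 := fun i j hij =>
    div_ne_zero (hne i j hij) (ss_ne ho h.inj (e.injective.ne hij))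
  obtain ⟨g, d, γ, hg, hd, hC⟩ := solve_C (fun i j => cc ω B (e i) (e j)) hCne
    (fun i => by
      obtain ⟨μ, hμ, hk⟩ := rc_c ho h (e.injective.ne (fn0 i 1 (by decide)).symm) (he i).1
      exact ⟨μ, hμ, fun k a1 a2 => hk _ (e.injective.ne a1) (e.injective.ne a2)⟩)
    (fun i => by
      obtain ⟨μ, hμ, hk⟩ := rc_c ho h (e.injective.ne (fn0 i 2 (by decide)).symm) (he i).2
      exact ⟨μ, hμ, fun k a1 a2 => hk _ (e.injective.ne a1) (e.injective.ne a2)⟩)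
  let t : Fin 5 → Fin 5 := e.symm
  have ht : Function.Injective t := e.symm.injective
  have hcc : ∀ x y, x ≠ y → cc ω B x y = (g (t x) : ℂ) * g (t y) * (d (t x) * conj (d (t y))) * γ (t y - t x) := by
    intro x y hxy
    have := hC (t x) (t y) (ht.ne hxy)
    simpa [t] using this
  let K : Fin 5 → ℝ := fun x => g (t x) ^ 2
  have hK : ∀ x, 0 < K x := fun x => pow_pos (hg _) 2
  let Γ : Fin 5 → ℂ := fun δ => γ δ * γ (-δ)
  have hγ : ∀ δ, δ ≠ 0 → γ δ ≠ 0 := by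
    intro δ hδ h0
    have h1 := hC 0 δ hδ.symm
    rw [sub_zero, h0, mul_zero] at h1
    exact hCne 0 δ hδ.symm h1
  have hΓ : ∀ δ, δ ≠ 0 → Γ δ ≠ 0 := fun δ hδ => mul_ne_zero (hγ _ hδ) (hγ _ (neg_ne_zero.mpr hδ))
  let W : Fin 5 → Fin 5 → ℂ := fun x y => cc ω B x y * cc ω B y x
  have hW : ∀ x y, x ≠ y → W x y = K x * (K y * Γ (t y - t x)) := by
    intro x y hxy
    simp only [W, K, Γ]
    rw [hcc x y hxy, hcc y x hxy.symm, neg_sub]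
    push_cast
    linear_combination ((g (t x) : ℂ) ^ 2 * g (t y) ^ 2 * γ (t y - t x) * γ (t x - t y)) *
      ((d (t y) * conj (d (t y))) * hd (t x) + hd (t y))
  have hv := fun x => vertex_c ho h x W (fun _ _ => rfl)
  have hm := matching K hK Γ (mul_comm _ _) (mul_comm _ _) (hΓ 1 (by decide)) (hΓ 2 (by decide)) t ht
    Real.goldenRatio Real.one_lt_goldenRatio
    (fun x => by
      have := (hv x).1
      rw [hW _ _ (fn0 x 1 (by decide)).symm, hW _ _ (fn0 x 2 (by decide)).symm, hW _ _ (fn0 x 4 (by decide)).symm] at this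
      have hKx : (K x : ℂ) ≠ 0 := by exact_mod_cast (hK x).ne'
      apply mul_left_cancel₀ hKx
      linear_combination this)
    (fun x => by
      have := (hv x).2
      rw [hW _ _ (fn0 x 1 (by decide)).symm, hW _ _ (fn0 x 3 (by decide)).symm, hW _ _ (fn0 x 4 (by decide)).symm] at this
      have hKx : (K x : ℂ) ≠ 0 := by exact_mod_cast (hK x).ne'
      apply mul_left_cancel₀ hKx
      linear_combination this)
  obtain ⟨⟨u, hu, hA⟩, hKc⟩ := hm
  have hgc : ∀ x, g (t x) = g (t 0) := by
    intro x
    have := hKc x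
    exact (pow_left_inj₀ (hg _).le (hg _).le two_ne_zero).mp this
  have hlin := fin_mulu t u hA
  refine ⟨fun x => d (t x), fun δ => if δ = 0 then 0 else ss ω 0 δ * ((g (t 0) : ℂ) ^ 2 * γ (u * δ)),
    fun x => hd _, fun x y => ?_⟩
  by_cases hxy : x = y
  · subst hxy; simp [h.diag]
  · have hs := ss_ne ho h.inj hxy
    have hB : B x y = ss ω x y * cc ω B x y := by unfold cc; field_simp
    have e1 : ss ω x y = ss ω 0 (y - x) := by
      have := ss_shift ho 0 (y - x) x
      rw [zero_add, sub_add_cancel] at this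
      exact this
    have e2 : y - x ≠ 0 := sub_ne_zero.mpr (Ne.symm hxy)
    simp only [if_neg e2]
    rw [hB, hcc x y hxy, hgc x, hgc y, hlin, e1]
    ring

lemma ev_add2 {ω : ℂ} (ho : Om ω) (i d : Fin 5) : ev ω (i + d) = ev ω i * ev ω d := ev_add ho i d

lemma ev_conj_mul {ω : ℂ} (ho : Om ω) (a b : Fin 5) : conj (ev ω a) * ev ω b = ev ω (b - a) := by
  have h1 : ev ω b = ev ω (b - a) * ev ω a := by rw [← ev_add2 ho, sub_add_cancel]
  rw [h1, ev_conj ho]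
  linear_combination ev ω (b - a) * ev_p5 ho a

lemma ev_inj {ω : ℂ} (ho : Om ω) : Function.Injective (ev ω) := by
  have key : ∀ d : Fin 5, ev ω d = 1 → d = 0 := by
    intro d hd
    by_contra hne
    apply ho.ne1
    have p5 := ho.p5
    fin_cases d
    · exact absurd rfl hne
    · change ω ^ 1 = 1 at hd; simpa using hd
    · change ω ^ 2 = 1 at hd; linear_combination p5 - ω * (ω ^ 2 + 1) * hd
    · change ω ^ 3 = 1 at hd; linear_combination (-(ω : ℂ)) * p5 + (ω ^ 3 + 1) * hd
    · change ω ^ 4 = 1 at hd; linear_combination p5 - ω * hd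
  intro a b hab
  have h1 := ev_conj_mul ho a b
  have h2 := ev_conj_mul ho a a
  rw [← hab, h2, sub_self] at h1
  have := key (b - a) (by rw [← h1]; simp [ev])
  exact (sub_eq_zero.mp this).symm

lemma ev_sum {ω : ℂ} (ho : Om ω) (d : Fin 5) : ∑ x : Fin 5, ev ω (x * d) = if d = 0 then 5 else 0 := by
  have c := ho.cyc
  have key : ∑ x : Fin 5, ev ω x = 0 := by
    rw [Fin.sum_univ_five]; simp only [ev]; 
    change ω ^ 0 + ω ^ 1 + ω ^ 2 + ω ^ 3 + ω ^ 4 = 0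
    linear_combination c
  split_ifs with h
  · subst h; simp [ev]
  · rw [← key]
    have hb : Function.Injective (fun x : Fin 5 => x * d) := by
      revert h; revert d; decide
    exact Function.Bijective.sum_comp (Finite.injective_iff_bijective.mp hb) (ev ω)

lemma fin_circ {ω : ℂ} (ho : Om ω) {B : Matrix (Fin 5) (Fin 5) ℂ} (D β : Fin 5 → ℂ)
    (hD : ∀ x, D x * conj (D x) = 1) (hB : ∀ x y, B x y = D x * conj (D y) * β (y - x))
    (hdet : ∀ j, (B - ev ω j • (1 : Matrix (Fin 5) (Fin 5) ℂ)).det = 0) :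
    ∃ P U : Matrix (Fin 5) (Fin 5) ℂ, (∃ σ : Equiv.Perm (Fin 5),
      P = Matrix.of fun i j : Fin 5 => if i = σ j then 1 else 0) ∧ U * Uᴴ = 1 ∧
      U * Matrix.diagonal (ev ω) * Uᴴ = (Matrix.of fun j k : Fin 5 => if j = k + 1 then 1 else 0) ∧
      U * B * Uᴴ = Pᵀ * Matrix.diagonal (ev ω) * P := by
  obtain ⟨r, hr, hrc⟩ : ∃ r : ℂ, r * r * 5 = 1 ∧ conj r = r := by
    refine ⟨((1 / Real.sqrt 5 : ℝ) : ℂ), ?_, Complex.conj_ofReal _⟩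
    have : (1 / Real.sqrt 5 : ℝ) * (1 / Real.sqrt 5) * 5 = 1 := by
      have := Real.mul_self_sqrt (show (0:ℝ) ≤ 5 by norm_num)
      have h0 : Real.sqrt 5 ≠ 0 := by positivity
      field_simp; nlinarith
    exact_mod_cast this
  let V : Matrix (Fin 5) (Fin 5) ℂ := Matrix.of fun x k => r * D x * ev ω (x * k)
  let ε : Fin 5 → ℂ := fun k => ∑ d, β d * ev ω (d * k)
  have hVV : Vᴴ * V = 1 := by
    ext k l
    rw [Matrix.mul_apply]
    have : ∀ x, Vᴴ k x * V x l = r * r * ev ω (x * (l - k)) := by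
      intro x
      rw [mul_sub, ← ev_conj_mul ho]
      simp only [V, Matrix.conjTranspose_apply, Matrix.of_apply, star_def, map_mul, hrc]
      linear_combination r * r * conj (ev ω (x * k)) * ev ω (x * l) * hD x
    simp only [this]
    rw [← Finset.mul_sum, ev_sum ho, Matrix.one_apply]
    by_cases h : k = l
    · subst h; simp [hr]
    · rw [if_neg h, if_neg (fun h' => h (sub_eq_zero.mp h').symm), mul_zero]
  have hVA : Vᴴ * Matrix.diagonal (ev ω) * V = Matrix.of fun j k : Fin 5 => if j = k + 1 then 1 else 0 := by
    ext k l
    rw [Matrix.mul_apply]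
    have : ∀ x, (Vᴴ * Matrix.diagonal (ev ω)) k x * V x l = r * r * ev ω (x * (l + 1 - k)) := by
      intro x
      rw [mul_sub, ← ev_conj_mul ho, mul_add, ev_add2 ho, mul_one]
      simp only [V, Matrix.mul_diagonal, Matrix.conjTranspose_apply, Matrix.of_apply, star_def, map_mul, hrc]
      linear_combination r * r * conj (ev ω (x * k)) * ev ω (x * l) * ev ω x * hD x
    simp only [this]
    rw [← Finset.mul_sum, ev_sum ho, Matrix.of_apply]
    by_cases h : k = l + 1
    · subst h; simp [hr]
    · rw [if_neg h, if_neg (fun h' => h (sub_eq_zero.mp h').symm), mul_zero]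
  have hBV : B * V = V * Matrix.diagonal ε := by
    ext x k
    rw [Matrix.mul_apply, Matrix.mul_diagonal, ← Equiv.sum_comp (Equiv.addLeft x)]
    simp only [ε, Finset.mul_sum]
    apply Finset.sum_congr rfl
    intro d _
    simp only [Equiv.coe_addLeft, hB, V, Matrix.of_apply, add_sub_cancel_left]
    rw [add_mul, ev_add2 ho]
    linear_combination D x * r * β d * ev ω (x * k) * ev ω (d * k) * hD (x + d)
  have hVB : Vᴴ * B * V = Matrix.diagonal ε := by
    rw [Matrix.mul_assoc, hBV, ← Matrix.mul_assoc, hVV, Matrix.one_mul]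
  have hroot : ∀ j, ∃ k, ε k = ev ω j := by
    intro j
    have h1 : Vᴴ * (B - ev ω j • (1 : Matrix (Fin 5) (Fin 5) ℂ)) * V = Matrix.diagonal (fun k => ε k - ev ω j) := by
      rw [Matrix.mul_sub, Matrix.sub_mul, hVB, Matrix.mul_smul, Matrix.mul_one, Matrix.smul_mul, hVV,
        ← Matrix.diagonal_one, ← Matrix.diagonal_smul, Matrix.diagonal_sub]
      congr 1; ext k; simp
    have h2 := congrArg Matrix.det h1
    rw [Matrix.det_mul, Matrix.det_mul, hdet, Matrix.det_diagonal, mul_zero, zero_mul] at h2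
    obtain ⟨k, _, hk⟩ := Finset.prod_eq_zero_iff.mp h2.symm
    exact ⟨k, sub_eq_zero.mp hk⟩
  choose τ hτ using hroot
  have hτi : Function.Injective τ := by
    intro a b hab
    apply ev_inj ho
    rw [← hτ a, ← hτ b, hab]
  let e : Equiv.Perm (Fin 5) := Equiv.ofBijective τ (Finite.injective_iff_bijective.mp hτi)
  refine ⟨Matrix.of fun i j : Fin 5 => if i = e.symm j then 1 else 0, Vᴴ, ⟨e.symm, rfl⟩, ?_, ?_, ?_⟩
  · rw [Matrix.conjTranspose_conjTranspose, hVV]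
  · rw [Matrix.conjTranspose_conjTranspose, hVA]
  · rw [Matrix.conjTranspose_conjTranspose, hVB, perm_diag (ev ω) e.symm _ rfl]
    congr 1; ext k
    rw [← hτ (e.symm k)]
    congr 1
    exact (e.apply_symm_apply k).symm

abbrev M5 := Matrix (Fin 5) (Fin 5) ℂ

open scoped ComplexOrder in
lemma normal_eig (A : M5) (hA : A * Aᴴ = Aᴴ * A) (l : ℂ) (v : Fin 5 → ℂ) (h : A.mulVec v = l • v) :
    Aᴴ.mulVec v = conj l • v := by
  have hN : (Aᴴ - conj l • (1 : M5)).mulVec v = 0 := by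
    rw [← dotProduct_star_self_eq_zero]
    have e1 : (A - l • (1 : M5)).mulVec v = 0 := by
      rw [Matrix.sub_mulVec, Matrix.smul_mulVec, Matrix.one_mulVec, h, sub_self]
    have e2 : (Aᴴ - conj l • (1 : M5))ᴴ = A - l • (1 : M5) := by
      simp [Matrix.conjTranspose_sub, Matrix.conjTranspose_smul]
    have e3 : (A - l • (1 : M5)) * (Aᴴ - conj l • (1 : M5)) = (Aᴴ - conj l • (1 : M5)) * (A - l • (1 : M5)) := by
      simp only [Matrix.mul_sub, Matrix.sub_mul, Matrix.mul_smul, Matrix.smul_mul, Matrix.mul_one, Matrix.one_mul, hA, smul_sub,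
        smul_comm l (conj l)]
      abel
    rw [Matrix.star_mulVec, e2, ← Matrix.dotProduct_mulVec, Matrix.mulVec_mulVec, e3, ← Matrix.mulVec_mulVec, e1,
      Matrix.mulVec_zero, dotProduct_zero]
  rw [Matrix.sub_mulVec, Matrix.smul_mulVec, Matrix.one_mulVec] at hN
  exact sub_eq_zero.mp hN

lemma normal_diag {ω : ℂ} (ho : Om ω) (A : M5) (hA : A * Aᴴ = Aᴴ * A)
    (hdet : ∀ j, (A - ev ω j • (1 : M5)).det = 0) :
    ∃ V : M5, Vᴴ * V = 1 ∧ V * Vᴴ = 1 ∧ Vᴴ * A * V = Matrix.diagonal (ev ω) := by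
  have h1 : ∀ j, ∃ v : Fin 5 → ℂ, star v ⬝ᵥ v = 1 ∧ A.mulVec v = ev ω j • v := by
    intro j
    obtain ⟨v, hv, he⟩ := Matrix.exists_mulVec_eq_zero_iff.mpr (hdet j)
    rw [Matrix.sub_mulVec, Matrix.smul_mulVec, Matrix.one_mulVec, sub_eq_zero] at he
    have hr : star v ⬝ᵥ v = ((∑ i, ‖v i‖ ^ 2 : ℝ) : ℂ) := by
      simp only [dotProduct, Pi.star_apply, star_def, Complex.conj_mul']
      push_cast; rfl
    have hpos : 0 < ∑ i, ‖v i‖ ^ 2 := by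
      obtain ⟨i, hi⟩ := Function.ne_iff.mp hv
      apply Finset.sum_pos' (fun i _ => by positivity)
      refine ⟨i, Finset.mem_univ _, ?_⟩
      have : 0 < ‖v i‖ := norm_pos_iff.mpr hi
      positivity
    set S := ∑ i, ‖v i‖ ^ 2
    refine ⟨((1 / Real.sqrt S : ℝ) : ℂ) • v, ?_, ?_⟩
    · rw [star_smul, smul_dotProduct, dotProduct_smul, hr, star_def, Complex.conj_ofReal, smul_eq_mul, smul_eq_mul]
      have h0 : Real.sqrt S ≠ 0 := by positivity
      have := Real.mul_self_sqrt hpos.le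
      have : (1 / Real.sqrt S) * ((1 / Real.sqrt S) * S) = 1 := by
        field_simp; nlinarith
      exact_mod_cast this
    · rw [Matrix.mulVec_smul, he, smul_comm]
  choose v hn he using h1
  have horth : ∀ i j, i ≠ j → star (v i) ⬝ᵥ v j = 0 := by
    intro i j hij
    have e1 := normal_eig A hA _ _ (he i)
    have e2 : star (v i) ⬝ᵥ A.mulVec (v j) = ev ω j * (star (v i) ⬝ᵥ v j) := by
      rw [he j, dotProduct_smul, smul_eq_mul]
    have e3 : star (v i) ⬝ᵥ A.mulVec (v j) = ev ω i * (star (v i) ⬝ᵥ v j) := by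
      rw [Matrix.dotProduct_mulVec]
      have : star (v i) ᵥ* A = star (Aᴴ.mulVec (v i)) := by
        rw [Matrix.star_mulVec, Matrix.conjTranspose_conjTranspose]
      rw [this, e1, star_smul, smul_dotProduct, smul_eq_mul, star_def, Complex.conj_conj]
    rw [e2] at e3
    have : (ev ω j - ev ω i) * (star (v i) ⬝ᵥ v j) = 0 := by linear_combination e3
    rcases mul_eq_zero.mp this with h | h
    · exact absurd (ev_inj ho (sub_eq_zero.mp h)).symm hij
    · exact h
  let V : M5 := Matrix.of fun x k => v k x
  have hVV : Vᴴ * V = 1 := by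
    ext k l
    have : (Vᴴ * V) k l = star (v k) ⬝ᵥ v l := rfl
    rw [this, Matrix.one_apply]
    split_ifs with h
    · subst h; exact hn k
    · exact horth k l h
  refine ⟨V, hVV, mul_eq_one_comm.mp hVV, ?_⟩
  have hAV : A * V = V * Matrix.diagonal (ev ω) := by
    ext x k
    have : (A * V) x k = (A.mulVec (v k)) x := rfl
    rw [this, he, Matrix.mul_diagonal]
    simp [V, mul_comm]
  rw [Matrix.mul_assoc, hAV, ← Matrix.mul_assoc, hVV, Matrix.one_mul]

lemma pow5_one {ω : ℂ} (ho : Om ω) (B : M5) (hdet : ∀ j, (B - ev ω j • (1 : M5)).det = 0) : B ^ 5 = 1 := by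
  have hc : B.charpoly = Polynomial.X ^ 5 - 1 := by
    have hd : B.charpoly.degree = 5 := by simp [B.charpoly_degree_eq_dim]
    have hd2 : (Polynomial.X ^ 5 - 1 : Polynomial ℂ).degree = 5 := by
      have := Polynomial.degree_X_pow_sub_C (R := ℂ) (n := 5) (by norm_num) 1
      simpa using this
    refine Polynomial.eq_of_degree_sub_lt_of_eval_index_eq (s := (Finset.univ : Finset (Fin 5))) (v := ev ω)
      (fun a _ b _ hab => ev_inj ho hab) ?_ ?_
    · have hm : (Polynomial.X ^ 5 - 1 : Polynomial ℂ).Monic := by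
        have := Polynomial.monic_X_pow_sub_C (R := ℂ) (n := 5) 1 (by norm_num)
        simpa using this
      have := Polynomial.degree_sub_lt_left (hd.trans hd2.symm) B.charpoly_monic.ne_zero
        (by rw [B.charpoly_monic.leadingCoeff, hm.leadingCoeff])
      rw [hd] at this
      simpa using this
    · intro i _
      rw [Matrix.eval_charpoly]
      have h1 : Matrix.scalar (Fin 5) (ev ω i) - B = -(B - ev ω i • (1 : M5)) := by
        have h2 : Matrix.scalar (Fin 5) (ev ω i) = ev ω i • (1 : M5) := by
          rw [Matrix.scalar_apply, Matrix.smul_one_eq_diagonal]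
        rw [neg_sub, h2]
      rw [h1, Matrix.det_neg, hdet, mul_zero]
      simp [ev_p5 ho i]
  have := Matrix.aeval_self_charpoly B
  rw [hc] at this
  simpa [sub_eq_zero] using this

lemma unit_of_norm (B : M5) (h5 : B ^ 5 = 1) (hB : ‖Matrix.toEuclideanCLM (𝕜 := ℂ) B‖ = 1) : Bᴴ * B = 1 := by
  set T := Matrix.toEuclideanCLM (n := Fin 5) (𝕜 := ℂ) B with hT
  have hT5 : T ^ 5 = 1 := by rw [hT, ← map_pow, h5, map_one]
  have hle : ∀ x, ‖T x‖ ≤ ‖x‖ := by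
    intro x
    have := T.le_opNorm x
    rwa [hB, one_mul] at this
  have hiso : ∀ x, ‖T x‖ = ‖x‖ := by
    intro x
    apply le_antisymm (hle x)
    have e : T (T (T (T (T x)))) = x := by
      have := congrArg (fun S : EuclideanSpace ℂ (Fin 5) →L[ℂ] EuclideanSpace ℂ (Fin 5) => S x) hT5
      simpa [pow_succ] using this
    calc ‖x‖ = ‖T (T (T (T (T x))))‖ := by rw [e]
      _ ≤ _ := (hle _).trans ((hle _).trans ((hle _).trans (hle _)))
  have h1 := (T.norm_map_iff_adjoint_comp_self).mp hiso
  have h2 : Matrix.toEuclideanCLM (n := Fin 5) (𝕜 := ℂ) (Bᴴ * B) = Matrix.toEuclideanCLM (n := Fin 5) (𝕜 := ℂ) 1 := by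
    rw [map_mul, map_one, ← Matrix.star_eq_conjTranspose, map_star]
    exact h1
  exact (Matrix.toEuclideanCLM (n := Fin 5) (𝕜 := ℂ)).injective h2

lemma main_red {ω : ℂ} (ho : Om ω) (A B : M5) (hA : A * Aᴴ = Aᴴ * A)
    (hB : ‖Matrix.toEuclideanCLM (𝕜 := ℂ) B‖ = 1)
    (hs : ∀ x y z : ℂ, x ^ 5 + y ^ 5 + z ^ 5 = 1 → (x • A + y • B + z • (A * B) - 1).det = 0) :
    ∃ P U : M5, (∃ σ : Equiv.Perm (Fin 5),
      P = Matrix.of fun i j : Fin 5 => if i = σ j then 1 else 0) ∧ U * Uᴴ = 1 ∧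
      ((U * A * Uᴴ = Pᵀ * Matrix.diagonal (ev ω) * P ∧
        U * B * Uᴴ = Matrix.of fun j k : Fin 5 => if j = k + 1 then 1 else 0) ∨
       (U * A * Uᴴ = (Matrix.of fun j k : Fin 5 => if j = k + 1 then 1 else 0) ∧
        U * B * Uᴴ = Pᵀ * Matrix.diagonal (ev ω) * P)) := by
  have hdA : ∀ j, (A - ev ω j • (1 : M5)).det = 0 := by
    intro j
    have e := hs (ev ω j ^ 4) 0 0 (by linear_combination (ev ω j ^ 15 + ev ω j ^ 10 + ev ω j ^ 5 + 1) * ev_p5 ho j)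
    have : A - ev ω j • (1 : M5) = ev ω j • (ev ω j ^ 4 • A + (0 : ℂ) • B + (0 : ℂ) • (A * B) - 1) := by
      rw [smul_sub, zero_smul, zero_smul, add_zero, add_zero, smul_smul,
        show ev ω j * ev ω j ^ 4 = 1 by linear_combination ev_p5 ho j, one_smul]
    rw [this, Matrix.det_smul, e, mul_zero]
  have hdB : ∀ j, (B - ev ω j • (1 : M5)).det = 0 := by
    intro j
    have e := hs 0 (ev ω j ^ 4) 0 (by linear_combination (ev ω j ^ 15 + ev ω j ^ 10 + ev ω j ^ 5 + 1) * ev_p5 ho j)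
    have : B - ev ω j • (1 : M5) = ev ω j • ((0 : ℂ) • A + ev ω j ^ 4 • B + (0 : ℂ) • (A * B) - 1) := by
      rw [smul_sub, zero_smul, zero_smul, add_zero, zero_add, smul_smul,
        show ev ω j * ev ω j ^ 4 = 1 by linear_combination ev_p5 ho j, one_smul]
    rw [this, Matrix.det_smul, e, mul_zero]
  have h5 := pow5_one ho B hdB
  have hBu := unit_of_norm B h5 hB
  have hBu2 := mul_eq_one_comm.mp hBu
  obtain ⟨V, hV1, hV2, hVA⟩ := normal_diag ho A hA hdA
  set B' : M5 := Vᴴ * B * V with hB'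
  have hB'H : B'ᴴ = Vᴴ * Bᴴ * V := by
    rw [hB', Matrix.conjTranspose_mul, Matrix.conjTranspose_mul, Matrix.conjTranspose_conjTranspose, Matrix.mul_assoc]
  have hconj : ∀ X Y : M5, (Vᴴ * X * V) * (Vᴴ * Y * V) = Vᴴ * (X * Y) * V := by
    intro X Y
    calc (Vᴴ * X * V) * (Vᴴ * Y * V) = Vᴴ * X * (V * Vᴴ) * Y * V := by simp only [Matrix.mul_assoc]
      _ = _ := by rw [hV2, Matrix.mul_one]; simp only [Matrix.mul_assoc]
  have hone : Vᴴ * 1 * V = 1 := by rw [Matrix.mul_one, hV1]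
  have hu2 : B'ᴴ * B' = 1 := by rw [hB'H, hB', hconj, hBu, hone]
  have hdB' : ∀ j, (B' - ev ω j • (1 : M5)).det = 0 := by
    intro j
    have : B' - ev ω j • (1 : M5) = Vᴴ * (B - ev ω j • (1 : M5)) * V := by
      rw [Matrix.mul_sub, Matrix.sub_mul, Matrix.mul_smul, Matrix.smul_mul, hone]
    rw [this, Matrix.det_mul, Matrix.det_mul, hdB, mul_zero, zero_mul]
  have hpen : Pencil (ev ω) B' := by
    intro i j s
    have e := hs (ev ω i ^ 4) (-(ev ω j * s * ev ω i ^ 4)) (s * ev ω i ^ 4) (by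
      linear_combination (ev ω i ^ 15 + ev ω i ^ 10 + ev ω i ^ 5 + 1) * ev_p5 ho i
        - s ^ 5 * ev ω i ^ 20 * ev_p5 ho j)
    have k4 : ev ω i * ev ω i ^ 4 = 1 := by linear_combination ev_p5 ho i
    have e1 : (Matrix.of fun x y => (if x = y then ev ω x - ev ω i else 0) + s * ((ev ω x - ev ω j) * B' x y)) =
        Matrix.diagonal (ev ω) - ev ω i • (1 : M5) + s • (Matrix.diagonal (ev ω) * B' - ev ω j • B') := by
      ext x y
      simp only [Matrix.of_apply, Matrix.add_apply, Matrix.sub_apply, Matrix.smul_apply, Matrix.diagonal_mul, smul_eq_mul,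
        Matrix.diagonal_apply, Matrix.one_apply]
      split_ifs <;> ring
    have e2 : Matrix.diagonal (ev ω) - ev ω i • (1 : M5) + s • (Matrix.diagonal (ev ω) * B' - ev ω j • B') =
        Vᴴ * (ev ω i • (ev ω i ^ 4 • A + (-(ev ω j * s * ev ω i ^ 4)) • B + (s * ev ω i ^ 4) • (A * B) - 1)) * V := by
      have e3 : ev ω i • (ev ω i ^ 4 • A + (-(ev ω j * s * ev ω i ^ 4)) • B + (s * ev ω i ^ 4) • (A * B) - 1) =
          A - ev ω i • (1 : M5) + s • (A * B - ev ω j • B) := by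
        ext x y
        simp only [Matrix.add_apply, Matrix.sub_apply, Matrix.smul_apply, smul_eq_mul]
        linear_combination (A x y - ev ω j * s * B x y + s * (A * B) x y) * k4
      rw [e3, ← hVA, hB', hconj]
      simp only [Matrix.mul_add, Matrix.add_mul, Matrix.mul_sub, Matrix.sub_mul, Matrix.mul_smul, Matrix.smul_mul, Matrix.mul_one, hV1]
    rw [e1, e2, Matrix.det_mul, Matrix.det_mul, Matrix.det_smul, e, mul_zero, mul_zero, zero_mul]
  have hgood : Good (ev ω) B' := by
    refine ⟨ev_inj ho, ?_, hpen, mul_eq_one_comm.mp hu2, hu2⟩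
    intro x
    rw [ev_conj ho]; linear_combination ev_p5 ho x
  have back : ∀ U : M5, U * Uᴴ = 1 → (U * Vᴴ) * (U * Vᴴ)ᴴ = 1 ∧
      (U * Vᴴ) * A * (U * Vᴴ)ᴴ = U * Matrix.diagonal (ev ω) * Uᴴ ∧
      (U * Vᴴ) * B * (U * Vᴴ)ᴴ = U * B' * Uᴴ := by
    intro U hU
    rw [Matrix.conjTranspose_mul, Matrix.conjTranspose_conjTranspose]
    refine ⟨?_, ?_, ?_⟩
    · rw [Matrix.mul_assoc, ← Matrix.mul_assoc Vᴴ, hV1, Matrix.one_mul, hU]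
    · rw [← hVA]; simp only [Matrix.mul_assoc]
    · rw [hB']; simp only [Matrix.mul_assoc]
  by_cases hM : Mono B'
  · obtain ⟨P, U, hP, hU, h1, h2⟩ := fin_mono ho hgood (pow5_one ho B' hdB') hM
    obtain ⟨b1, b2, b3⟩ := back U hU
    exact ⟨P, U * Vᴴ, hP, b1, Or.inl ⟨b2.trans h1, b3.trans h2⟩⟩
  · obtain ⟨D, β, hD, hβ⟩ := circ_form ho hgood hM
    obtain ⟨P, U, hP, hU, h1, h2⟩ := fin_circ ho D β hD hβ hdB'
    obtain ⟨b1, b2, b3⟩ := back U hU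
    exact ⟨P, U * Vᴴ, hP, b1, Or.inr ⟨b2.trans h1, b3.trans h2⟩⟩

theorem stmt_6
    (ω : ℂ) (hω : ω = Complex.exp (2 * Real.pi * Complex.I / 5))
    (A₅ Bhat : Matrix (Fin 5) (Fin 5) ℂ)
    (hA₅ : A₅ = Matrix.diagonal (fun j : Fin 5 => ω ^ (j : ℕ)))
    (hBhat : Bhat = Matrix.of fun j k : Fin 5 => if j = k + 1 then 1 else 0)
    (A B : Matrix (Fin 5) (Fin 5) ℂ)
    (hA : A * Aᴴ = Aᴴ * A)
    (hB : ‖Matrix.toEuclideanCLM (𝕜 := ℂ) B‖ = 1)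
    (hspec : {p : ℂ × ℂ × ℂ |
        (p.1 • A + p.2.1 • B + p.2.2 • (A * B) - 1).det = 0} =
      {p : ℂ × ℂ × ℂ | p.1 ^ 5 + p.2.1 ^ 5 + p.2.2 ^ 5 = 1}) :
    ∃ P U : Matrix (Fin 5) (Fin 5) ℂ, IsPermMatrix P ∧ U * Uᴴ = 1 ∧
      ((U * A * Uᴴ = Pᵀ * A₅ * P ∧ U * B * Uᴴ = Bhat) ∨
       (U * A * Uᴴ = Bhat ∧ U * B * Uᴴ = Pᵀ * A₅ * P)) := by
  subst hA₅
  subst hBhat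
  have ho := om_of_exp ω hω
  refine main_red ho A B hA hB ?_
  intro x y z hxyz
  have hm : ((x, y, z) : ℂ × ℂ × ℂ) ∈ {p : ℂ × ℂ × ℂ | p.1 ^ 5 + p.2.1 ^ 5 + p.2.2 ^ 5 = 1} := hxyz
  rw [← hspec] at hm
  exact hm
end
end

section
/- Let n ≥ 2, ω = exp(2πi/n), let Aₙ ∈ Mₙ(ℂ) be the diagonal matrix with (Aₙ)_{jj} = ω^j for j = 0,…,n−1, let Fₙ be the Fourier matrix with entries (Fₙ)_{jk} = ω^{jk}, and let B̂ₙ be the cyclic shift matrix with (B̂ₙ)_{jk} = 1 if j ≡ k+1 (mod n) and 0 otherwise. Let P₁, P₂ ∈ Mₙ(ℂ) be permutation matrices and set B = (1/n)·P₂ᵀ Fₙᴴ P₁ᵀ Aₙ P₁ Fₙ P₂. Suppose P₂ is the permutation matrix of a permutation π of {0,…,n−1} for which there exist integers q, m with gcd(q,n) = 1 and π(j) ≡ qj + m (mod n) for all j. Then {(x,y,z) ∈ ℂ³ : det(x·Aₙ + y·B + z·AₙB − I) = 0} = {(x,y,z) ∈ ℂ³ : xⁿ + yⁿ + (−1)^{n−1}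 zⁿ = 1}, and there exist a permutation matrix P ∈ Mₙ(ℂ) and a unitary U ∈ Mₙ(ℂ) with U Aₙ Uᴴ = B̂ₙ and U B Uᴴ = Pᵀ Aₙ P. -/
open Matrix Complex

noncomputable section

theorem cyc_det_aux (N : ℕ) (hN : 1 ≤ N) (a b : Fin (N + 1) → ℂ)
    (M : Matrix (Fin (N + 1)) (Fin (N + 1)) ℂ)
    (hM : M = Matrix.of fun j k : Fin (N + 1) =>
      (if j = k then a k else 0) +
        (if (j : ℕ) % (N + 1) = ((k : ℕ) + 1) % (N + 1) then b k else 0)) :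
    M.det = ∏ j, a j + (-1 : ℂ) ^ N * ∏ j, b j := by
  have e1 : ∀ j k : Fin N, M j.succ k.succ =
      (if j = k then a k.succ else 0) + (if (j : ℕ) = k + 1 then b k.succ else 0) := by
    intro j k
    have hj := j.isLt
    have hk := k.isLt
    rw [hM, Matrix.of_apply]
    refine congrArg₂ (· + ·) (if_congr Fin.succ_inj rfl rfl) (if_congr ?_ rfl rfl)
    rw [Fin.val_succ, Fin.val_succ, Nat.mod_eq_of_lt (by omega : (j : ℕ) + 1 < N + 1)]
    by_cases h : (k : ℕ) + 1 < N
    · rw [Nat.mod_eq_of_lt (by omega)]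
      omega
    · have h2 : (k : ℕ) + 1 + 1 = N + 1 := by omega
      rw [h2, Nat.mod_self]
      omega
  have e2 : ∀ j k : Fin N, M j.succ k.castSucc =
      (if (j : ℕ) + 1 = k then a k.castSucc else 0) + (if j = k then b k.castSucc else 0) := by
    intro j k
    have hj := j.isLt
    have hk := k.isLt
    rw [hM, Matrix.of_apply]
    refine congrArg₂ (· + ·) (if_congr ?_ rfl rfl) (if_congr ?_ rfl rfl)
    · rw [Fin.ext_iff, Fin.val_succ, Fin.val_castSucc]
    · rw [Fin.ext_iff, Fin.val_succ, Fin.val_castSucc,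
        Nat.mod_eq_of_lt (by omega : (j : ℕ) + 1 < N + 1),
        Nat.mod_eq_of_lt (by omega : (k : ℕ) + 1 < N + 1)]
      omega
  have z1 : M 0 0 = a 0 := by
    simp only [hM, Matrix.of_apply]
    rw [Fin.val_zero, Nat.zero_mod, Nat.mod_eq_of_lt (by omega : 0 + 1 < N + 1)]
    simp
  have z2 : M 0 (Fin.last N) = b (Fin.last N) := by
    rw [hM, Matrix.of_apply, if_neg, if_pos, zero_add]
    · rw [Fin.val_zero, Fin.val_last, Nat.zero_mod, Nat.mod_self]
    · rw [Fin.ext_iff, Fin.val_zero, Fin.val_last]; omega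
  have z3 : ∀ k : Fin (N + 1), k ≠ 0 → k ≠ Fin.last N → M 0 k = 0 := by
    intro k h0 h1
    have hk := k.isLt
    simp only [ne_eq, Fin.ext_iff, Fin.val_zero, Fin.val_last] at h0 h1
    rw [hM, Matrix.of_apply, if_neg, if_neg, zero_add]
    · rw [Fin.val_zero, Nat.zero_mod, Nat.mod_eq_of_lt (by omega : (k : ℕ) + 1 < N + 1)]
      omega
    · rw [Fin.ext_iff, Fin.val_zero]; omega
  have hne : (0 : Fin (N + 1)) ≠ Fin.last N := by
    simp only [ne_eq, Fin.ext_iff, Fin.val_zero, Fin.val_last]; omega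
  rw [Matrix.det_succ_row_zero, Fintype.sum_eq_add 0 (Fin.last N) hne]
  · rw [z1, z2]
    have d1 : (M.submatrix Fin.succ (Fin.succAbove 0)).det = ∏ j : Fin N, a j.succ := by
      rw [Matrix.det_of_lowerTriangular]
      · refine Finset.prod_congr rfl fun j _ => ?_
        simp [e1]
      · intro i j hij
        have hij' : i < j := hij
        simp only [Matrix.submatrix_apply, Fin.succAbove_zero, e1]
        rw [if_neg hij'.ne, if_neg (by have := Fin.lt_def.1 hij'; omega)]
        simp
    have d2 : (M.submatrix Fin.succ (Fin.succAbove (Fin.last N))).det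
        = ∏ j : Fin N, b j.castSucc := by
      rw [Matrix.det_of_upperTriangular]
      · refine Finset.prod_congr rfl fun j _ => ?_
        simp [e2]
      · intro i j hij
        have hij' : j < i := hij
        simp only [Matrix.submatrix_apply, Fin.succAbove_last, e2]
        rw [if_neg hij'.ne', if_neg (by have := Fin.lt_def.1 hij'; omega)]
        simp
    rw [d1, d2, Fin.prod_univ_succ a, Fin.prod_univ_castSucc b]
    simp
    ring
  · rintro k ⟨h0, h1⟩
    rw [z3 k h0 h1]
    simp

theorem orth_aux (n : ℕ) (hn : 2 ≤ n) (ω : ℂ) (h : IsPrimitiveRoot ω n) (k : ℤ) :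
    ∑ a : Fin n, ω ^ (((a : ℕ) : ℤ) * k) = if (n : ℤ) ∣ k then (n : ℂ) else 0 := by
  have h1 : ∀ a : Fin n, ω ^ (((a : ℕ) : ℤ) * k) = (ω ^ k) ^ (a : ℕ) := by
    intro a
    rw [mul_comm, _root_.zpow_mul, zpow_natCast]
  simp_rw [h1]
  rw [Fin.sum_univ_eq_sum_range (fun i => (ω ^ k) ^ i) n]
  split_ifs with hd
  · rw [(h.zpow_eq_one_iff_dvd k).2 hd]; simp
  · have hne : ω ^ k ≠ 1 := fun h' => hd ((h.zpow_eq_one_iff_dvd k).1 h')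
    rw [geom_sum_eq hne, ← zpow_natCast, ← _root_.zpow_mul, mul_comm, _root_.zpow_mul, zpow_natCast, h.pow_eq_one]
    simp

theorem prod_aux (n : ℕ) (hn : 2 ≤ n) (ω : ℂ) (h : IsPrimitiveRoot ω n) (x y : ℂ) :
    ∏ j : Fin n, (x - ω ^ (j : ℕ) * y) = x ^ n - y ^ n := by
  rw [h.pow_sub_pow_eq_prod_sub_mul x y (by omega)]
  symm
  refine (Finset.prod_bij (fun (j : Fin n) _ => ω ^ (j : ℕ)) ?_ ?_ ?_ ?_).symm
  · intro j _
    rw [Polynomial.mem_nthRootsFinset (by omega)]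
    rw [← pow_mul, mul_comm, pow_mul, h.pow_eq_one, one_pow]
  · intro i _ j _ hij
    exact Fin.ext (h.pow_inj i.isLt j.isLt hij)
  · intro z hz
    rw [Polynomial.mem_nthRootsFinset (by omega)] at hz
    haveI : NeZero n := ⟨by omega⟩
    obtain ⟨i, hi, rfl⟩ := h.eq_pow_of_pow_eq_one hz
    exact ⟨⟨i, hi⟩, Finset.mem_univ _, rfl⟩
  · intro _ _; rfl

theorem fin_eq_aux (n : ℕ) (i j : Fin n) : (n : ℤ) ∣ ((i : ℕ) : ℤ) - ((j : ℕ) : ℤ) ↔ i = j := by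
  constructor
  · intro h
    have := i.isLt
    have := j.isLt
    have h2 := Int.eq_zero_of_abs_lt_dvd h (by rw [abs_lt]; omega)
    apply Fin.ext
    omega
  · rintro rfl; simp

theorem perm_aux (n : ℕ) (hn : 2 ≤ n) (q : ℤ) (hq : Int.gcd q n = 1) :
    ∃ ρ : Equiv.Perm (Fin n), ∀ j l : Fin n,
      (n : ℤ) ∣ ((l : ℕ) : ℤ) * q + ((j : ℕ) : ℤ) ↔ l = ρ j := by
  have hinj : ∀ i j : Fin n, (n : ℤ) ∣ (((i : ℕ) : ℤ) - ((j : ℕ) : ℤ)) * q → i = j := by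
    intro i j h
    rw [← fin_eq_aux]
    refine IsCoprime.dvd_of_dvd_mul_right ?_ h
    exact (Int.isCoprime_iff_gcd_eq_one.2 hq).symm
  have hn0 : (0 : ℤ) < n := by omega
  have hb : ∀ l : Fin n, ((-(((l : ℕ) : ℤ) * q)) % (n : ℤ)).toNat < n := by
    intro l
    have := Int.emod_nonneg (-(((l : ℕ) : ℤ) * q)) hn0.ne'
    have := Int.emod_lt_of_pos (-(((l : ℕ) : ℤ) * q)) hn0
    omega
  let f : Fin n → Fin n := fun l => ⟨((-(((l : ℕ) : ℤ) * q)) % (n : ℤ)).toNat, hb l⟩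
  have hf : ∀ l : Fin n, (n : ℤ) ∣ ((l : ℕ) : ℤ) * q + ((f l : ℕ) : ℤ) := by
    intro l
    have h1 := Int.emod_nonneg (-(((l : ℕ) : ℤ) * q)) hn0.ne'
    have h2 : ((f l : ℕ) : ℤ) = (-(((l : ℕ) : ℤ) * q)) % (n : ℤ) := Int.toNat_of_nonneg h1
    rw [h2]
    have h3 := Int.emod_add_mul_ediv (-(((l : ℕ) : ℤ) * q)) n
    refine ⟨-(-(((l : ℕ) : ℤ) * q) / n), ?_⟩
    linarith
  have hfi : Function.Injective f := by
    intro i j hij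
    apply hinj
    have := dvd_sub (hf i) (hf j)
    rw [hij, add_sub_add_right_eq_sub, ← sub_mul] at this
    exact this
  refine ⟨(Equiv.ofBijective f (Finite.injective_iff_bijective.1 hfi)).symm, fun j l => ?_⟩
  rw [Equiv.eq_symm_apply]
  change _ ↔ f l = j
  constructor
  · intro h
    rw [← fin_eq_aux]
    have h2 := dvd_sub (hf l) h
    rwa [add_sub_add_left_eq_sub] at h2
  · rintro rfl; exact hf l

theorem stmt_9 (n : ℕ) (hn : 2 ≤ n)
    (ω : ℂ) (hω : ω = Complex.exp (2 * Real.pi * Complex.I / n))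
    (A F Bhat : Matrix (Fin n) (Fin n) ℂ)
    (hA : A = Matrix.diagonal (fun j : Fin n => ω ^ (j : ℕ)))
    (hF : F = Matrix.of (fun j k : Fin n => ω ^ ((j : ℕ) * (k : ℕ))))
    (hBhat : Bhat = Matrix.of fun j k : Fin n =>
      if (j : ℕ) % n = ((k : ℕ) + 1) % n then 1 else 0)
    (P₁ P₂ : Matrix (Fin n) (Fin n) ℂ)
    (hP₁ : IsPermMatrix P₁)
    (π : Equiv.Perm (Fin n))
    (hP₂ : P₂ = Matrix.of fun i j : Fin n => if i = π j then 1 else 0)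
    (hπ : ∃ q m : ℤ, Int.gcd q n = 1 ∧
      ∀ j : Fin n, ((π j : ℕ) : ℤ) ≡ q * ((j : ℕ) : ℤ) + m [ZMOD (n : ℤ)])
    (B : Matrix (Fin n) (Fin n) ℂ)
    (hB : B = ((1 : ℂ) / n) • (P₂ᵀ * Fᴴ * P₁ᵀ * A * P₁ * F * P₂)) :
    ({p : ℂ × ℂ × ℂ |
        (p.1 • A + p.2.1 • B + p.2.2 • (A * B) - 1).det = 0} =
      {p : ℂ × ℂ × ℂ |
        p.1 ^ n + p.2.1 ^ n + (-1 : ℂ) ^ (n - 1) * p.2.2 ^ n = 1}) ∧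
    ∃ P U : Matrix (Fin n) (Fin n) ℂ, IsPermMatrix P ∧ U * Uᴴ = 1 ∧
      U * A * Uᴴ = Bhat ∧ U * B * Uᴴ = Pᵀ * A * P := by
  have hn0 : n ≠ 0 := by omega
  have hnC : (n : ℂ) ≠ 0 := by exact_mod_cast hn0
  have hprim : IsPrimitiveRoot ω n := by
    rw [hω]; exact Complex.isPrimitiveRoot_exp n hn0
  have hω0 : ω ≠ 0 := hprim.ne_zero hn0
  have hstar : ∀ k : ℤ, star (ω ^ k) = ω ^ (-k) := by
    intro k
    have h1 : star ω = ω⁻¹ := by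
      have hnorm : ‖ω‖ = 1 := hprim.norm'_eq_one hn0
      rw [Complex.inv_def, Complex.normSq_eq_norm_sq, hnorm]
      simp
    rw [star_zpow₀, h1, _root_.inv_zpow, _root_.zpow_neg]
  have hFe : ∀ i j : Fin n, F i j = ω ^ (((i : ℕ) : ℤ) * ((j : ℕ) : ℤ)) := by
    intro i j
    rw [hF, Matrix.of_apply, ← zpow_natCast]
    push_cast; rfl
  obtain ⟨c, hc0, hcc, hcs⟩ : ∃ c : ℂ, c ≠ 0 ∧ c * c = n ∧ star c = c := by
    refine ⟨((Real.sqrt n : ℝ) : ℂ), ?_, ?_, ?_⟩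
    · have : Real.sqrt n ≠ 0 := by positivity
      exact_mod_cast this
    · rw [← Complex.ofReal_mul, Real.mul_self_sqrt (by positivity)]; simp
    · exact Complex.conj_ofReal _
  obtain ⟨σ, hσ⟩ := hP₁
  obtain ⟨q, m, hq, hπ⟩ := hπ
  obtain ⟨ρ, hρ⟩ := perm_aux n hn q hq
  set U : Matrix (Fin n) (Fin n) ℂ := c⁻¹ • Fᴴ with hU
  have hUH : Uᴴ = c⁻¹ • F := by
    rw [hU, Matrix.conjTranspose_smul, Matrix.conjTranspose_conjTranspose, star_inv₀, hcs]
  have hcc' : c⁻¹ * c⁻¹ = (n : ℂ)⁻¹ := by rw [← mul_inv, hcc]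
  have hUU : U * Uᴴ = 1 := by
    ext i j
    rw [hUH, hU, Matrix.smul_mul, Matrix.mul_smul, smul_smul, hcc', Matrix.smul_apply,
      Matrix.mul_apply]
    have : ∀ a : Fin n, Fᴴ i a * F a j
        = ω ^ (((a : ℕ) : ℤ) * (((j : ℕ) : ℤ) - ((i : ℕ) : ℤ))) := by
      intro a
      rw [Matrix.conjTranspose_apply, hFe, hFe, hstar, ← zpow_add₀ hω0]
      congr 1; ring
    simp_rw [this]
    rw [orth_aux n hn ω hprim, Matrix.one_apply]
    simp only [fin_eq_aux, eq_comm (a := j)]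
    split_ifs <;> simp [hnC]
  have hUA : U * A * Uᴴ = Bhat := by
    ext i j
    rw [hUH, hU, Matrix.smul_mul, Matrix.smul_mul, Matrix.mul_smul, smul_smul, hcc',
      Matrix.smul_apply, Matrix.mul_apply]
    have : ∀ a : Fin n, (Fᴴ * A) i a * F a j
        = ω ^ (((a : ℕ) : ℤ) * ((((j : ℕ) : ℤ) + 1) - ((i : ℕ) : ℤ))) := by
      intro a
      rw [hA, Matrix.mul_diagonal, Matrix.conjTranspose_apply, hFe, hFe, hstar, ← zpow_natCast,
        ← zpow_add₀ hω0, ← zpow_add₀ hω0]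
      congr 1; ring
    simp_rw [this]
    rw [orth_aux n hn ω hprim, hBhat, Matrix.of_apply]
    have hiff : (n : ℤ) ∣ (((j : ℕ) : ℤ) + 1) - ((i : ℕ) : ℤ)
        ↔ (i : ℕ) % n = ((j : ℕ) + 1) % n := by
      rw [← Int.modEq_iff_dvd]
      change _ ↔ (i : ℕ) ≡ (j : ℕ) + 1 [MOD n]
      rw [← Int.natCast_modEq_iff]
      push_cast; rfl
    simp only [hiff]
    split_ifs <;> simp [hnC]
  -- the conjugated B
  set d : Fin n → ℂ := fun j => ω ^ ((σ (ρ j) : Fin n) : ℕ) with hd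
  have hE : P₁ᵀ * A * P₁ = Matrix.diagonal (fun j => ω ^ ((σ j : Fin n) : ℕ)) := by
    ext i j
    rw [Matrix.mul_apply, hA]
    simp only [Matrix.mul_diagonal, Matrix.transpose_apply, hσ, Matrix.of_apply,
      Matrix.diagonal_apply]
    simp only [ite_mul, one_mul, zero_mul, mul_ite, mul_one, mul_zero]
    simp only [Finset.sum_ite_eq', Finset.mem_univ, if_true, σ.injective.eq_iff]
    by_cases h : i = j
    · subst h; simp
    · rw [if_neg h, if_neg (Ne.symm h)]
  set V := F * P₂ with hV
  have hP₂H : P₂ᴴ = P₂ᵀ := by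
    ext i j
    rw [Matrix.conjTranspose_apply, Matrix.transpose_apply, hP₂, Matrix.of_apply]
    split_ifs <;> simp
  have hVe : ∀ i j, V i j
      = ω ^ (((i : ℕ) : ℤ) * m + ((j : ℕ) : ℤ) * (((i : ℕ) : ℤ) * q)) := by
    intro i j
    rw [hV, Matrix.mul_apply, hP₂]
    simp only [Matrix.of_apply, mul_ite, mul_one, mul_zero, Finset.sum_ite_eq', Finset.mem_univ,
      if_true]
    rw [hFe]
    obtain ⟨t, ht⟩ := (hπ j).dvd
    have : ((i : ℕ) : ℤ) * m + ((j : ℕ) : ℤ) * (((i : ℕ) : ℤ) * q)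
        = ((i : ℕ) : ℤ) * ((π j : ℕ) : ℤ) + (n : ℤ) * (t * ((i : ℕ) : ℤ)) := by
      linear_combination ((i : ℕ) : ℤ) * ht
    rw [this, zpow_add₀ hω0, _root_.zpow_mul ω (n : ℤ), zpow_natCast, hprim.pow_eq_one, _root_.one_zpow, mul_one]
  have hBV : B = ((n : ℂ)⁻¹) • (Vᴴ * (P₁ᵀ * A * P₁) * V) := by
    rw [hB, hV, Matrix.conjTranspose_mul, hP₂H, one_div]
    simp only [Matrix.mul_assoc]
  have hW : ∀ i j, (V * Uᴴ) i j
      = if i = ρ j then c * ω ^ (((i : ℕ) : ℤ) * m) else 0 := by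
    intro i j
    rw [hUH, Matrix.mul_smul, Matrix.smul_apply, Matrix.mul_apply]
    have : ∀ a : Fin n, V i a * F a j
        = ω ^ (((i : ℕ) : ℤ) * m)
          * ω ^ (((a : ℕ) : ℤ) * (((i : ℕ) : ℤ) * q + ((j : ℕ) : ℤ))) := by
      intro a
      rw [hVe, hFe, ← zpow_add₀ hω0, ← zpow_add₀ hω0]
      congr 1; ring
    simp_rw [this]
    rw [← Finset.mul_sum, orth_aux n hn ω hprim]
    simp only [hρ]
    split_ifs
    · rw [← hcc, smul_eq_mul]; field_simp
    · simp
  have hUB : U * B * Uᴴ = Matrix.diagonal d := by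
    have h1 : U * B * Uᴴ = (n : ℂ)⁻¹ • ((V * Uᴴ)ᴴ * (P₁ᵀ * A * P₁) * (V * Uᴴ)) := by
      rw [hBV, Matrix.conjTranspose_mul V, Matrix.conjTranspose_conjTranspose]
      simp only [Matrix.mul_assoc, Matrix.mul_smul, Matrix.smul_mul]
    rw [h1, hE]
    ext i j
    rw [Matrix.smul_apply, Matrix.mul_apply]
    simp only [Matrix.mul_diagonal, Matrix.conjTranspose_apply, hW]
    rw [Finset.sum_eq_single (ρ j) (by intro b _ hb; rw [if_neg hb]; simp) (by simp)]
    rw [if_pos rfl, Matrix.diagonal_apply]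
    by_cases hij : i = j
    · subst hij
      rw [if_pos rfl, if_pos rfl, star_mul, hstar, hcs, hd, smul_eq_mul, _root_.zpow_neg]
      have hz : ω ^ (((ρ i : ℕ) : ℤ) * m) ≠ 0 := zpow_ne_zero _ hω0
      generalize ω ^ (((ρ i : ℕ) : ℤ) * m) = z at hz
      rw [← hcc]
      field_simp
    · rw [if_neg (fun h => hij (ρ.injective h).symm), if_neg hij]
      simp
  have hPm : ∃ P : Matrix (Fin n) (Fin n) ℂ, IsPermMatrix P ∧ Matrix.diagonal d = Pᵀ * A * P := by
    refine ⟨Matrix.of fun i j : Fin n => if i = (ρ.trans σ) j then 1 else 0, ⟨_, rfl⟩, ?_⟩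
    ext i j
    rw [Matrix.mul_apply, hA]
    simp only [Matrix.mul_diagonal, Matrix.transpose_apply, Matrix.of_apply,
      Matrix.diagonal_apply]
    simp only [ite_mul, one_mul, zero_mul, mul_ite, mul_one, mul_zero]
    simp only [Finset.sum_ite_eq', Finset.mem_univ, if_true, (ρ.trans σ).injective.eq_iff]
    by_cases h : i = j
    · subst h; simp [hd]
    · rw [if_neg h, if_neg (Ne.symm h)]
  obtain ⟨P, hP, hPd⟩ := hPm
  refine ⟨?_, P, U, hP, hUU, hUA, hUB.trans hPd⟩
  have hUU' : Uᴴ * U = 1 := mul_eq_one_comm.1 hUU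
  ext ⟨x, y, z⟩
  simp only [Set.mem_setOf_eq]
  have hdet : (x • A + y • B + z • (A * B) - 1).det
      = (x • Bhat + y • Matrix.diagonal d + z • (Bhat * Matrix.diagonal d) - 1).det := by
    have hAB : Bhat * Matrix.diagonal d = U * (A * B) * Uᴴ := by
      rw [← hUA, ← hUB]
      calc U * A * Uᴴ * (U * B * Uᴴ) = U * A * (Uᴴ * U) * B * Uᴴ := by
            simp only [Matrix.mul_assoc]
        _ = _ := by rw [hUU']; simp only [Matrix.mul_assoc, Matrix.mul_one, Matrix.one_mul]
    have : x • Bhat + y • Matrix.diagonal d + z • (Bhat * Matrix.diagonal d) - 1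
        = U * (x • A + y • B + z • (A * B) - 1) * Uᴴ := by
      rw [hAB, ← hUA, ← hUB]
      simp only [Matrix.mul_add, Matrix.mul_sub, Matrix.add_mul, Matrix.sub_mul, Matrix.mul_smul,
        Matrix.smul_mul, Matrix.mul_one, hUU]
    rw [this, Matrix.det_mul, Matrix.det_mul, mul_right_comm, ← Matrix.det_mul, hUU,
      Matrix.det_one, one_mul]
  have hprod : ∀ u v : ℂ, ∏ j : Fin n, (u - d j * v) = u ^ n - v ^ n := by
    intro u v
    rw [← prod_aux n hn ω hprim u v]
    exact Equiv.prod_comp (ρ.trans σ) (fun j : Fin n => u - ω ^ (j : ℕ) * v)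
  have hfin : (x • A + y • B + z • (A * B) - 1).det
      = (-1 : ℂ) ^ n * (1 - (x ^ n + y ^ n + (-1 : ℂ) ^ (n - 1) * z ^ n)) := by
    rw [hdet]
    have h1 : ∏ j : Fin n, (d j * y - 1) = (-1) ^ n * (1 - y ^ n) := by
      have := hprod 1 y
      rw [one_pow] at this
      rw [← this]
      have h3 : ∀ j : Fin n, d j * y - 1 = (-1) * (1 - d j * y) := fun j => by ring
      simp_rw [h3]
      rw [Finset.prod_mul_distrib]
      simp
    have h2 : ∏ j : Fin n, (x + d j * z) = x ^ n - (-1) ^ n * z ^ n := by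
      have := hprod x (-z)
      rw [neg_pow z] at this
      rw [← this]
      refine Finset.prod_congr rfl fun j _ => by ring
    clear_value d
    clear hdet hprod hUB hPd
    obtain ⟨N, rfl⟩ : ∃ N, n = N + 1 := ⟨n - 1, by omega⟩
    rw [cyc_det_aux N (by omega) (fun j => d j * y - 1) (fun j => x + d j * z), h1, h2]
    · rw [Nat.add_sub_cancel, pow_succ (-1 : ℂ) N]
      ring
    · ext i j
      rw [hBhat]
      simp only [Matrix.sub_apply, Matrix.add_apply, Matrix.smul_apply, Matrix.mul_diagonal,
        Matrix.of_apply, Matrix.diagonal_apply, Matrix.one_apply, smul_eq_mul]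
      by_cases hij : i = j
      · subst hij
        simp only [if_true]
        split_ifs <;> ring
      · simp only [if_neg hij]
        split_ifs <;> ring
  rw [hfin, mul_eq_zero, or_iff_right (pow_ne_zero _ (by norm_num)), sub_eq_zero, eq_comm]
end
end

section
/- Let n ≥ 2 and let A, B ∈ Mₙ(ℂ) be such that A is normal, the operator norm of B on Euclidean ℂⁿ equals 1, and {(x,y,z) ∈ ℂ³ : det(x·A + y·B + z·AB − I) = 0} = {(x,y,z) ∈ ℂ³ : xⁿ + yⁿ + (−1)^{n−1} zⁿ = 1}. Let P₀ be the orthogonal projection onto ker(A − I) and let T be the reduced resolvent of A at the eigenvalue 1. For m ≥ 1 and a subset S ⊆ {1,…,m}, define C_m(S) = S₁S₂⋯S_m where S_s = ABT if s ∈ S and S_s = BT if s ∉ S for 1 ≤ s ≤ m−1, and S_m = AB if m ∈ S and S_m = B if m ∉ S; and for 0 ≤ k ≤ m set 𝒞(k,m) = Σ_{S ⊆ {1,…,m}, |S| = k} C_m(S). Then P₀·𝒞(k,m)·P₀ = 0 whenever (1 ≤ m ≤ n−1 and 0 ≤ k ≤ m) or (m = n and 1 ≤ k ≤ n−1), and P₀·𝒞(n,n)·P₀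 = (1/n)·P₀. -/
open Matrix Complex

noncomputable section

/-- The `s`-th factor of the product `C_m(S)`: for `s < m - 1` (positions `1,…,m-1`
in one-based indexing) it is `ABT` if `s ∈ S` and `BT` otherwise; the last factor
(position `m`) is `AB` if it belongs to `S` and `B` otherwise. -/
def Cfactor {n : ℕ} (A B T : Matrix (Fin n) (Fin n) ℂ) (m : ℕ)
    (S : Finset (Fin m)) (s : Fin m) : Matrix (Fin n) (Fin n) ℂ :=
  if (s : ℕ) + 1 = m then (if s ∈ S then A * B else B)
  else (if s ∈ S then A * B * T else B * T)

/-- The ordered product `C_m(S) = S₁ S₂ ⋯ S_m`. -/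
def Cm {n : ℕ} (A B T : Matrix (Fin n) (Fin n) ℂ) (m : ℕ)
    (S : Finset (Fin m)) : Matrix (Fin n) (Fin n) ℂ :=
  ((List.finRange m).map (Cfactor A B T m S)).prod

/-- `𝒞(k,m)`: the sum of `C_m(S)` over all subsets `S` of `{1,…,m}` of size `k`. -/
def Ccal {n : ℕ} (A B T : Matrix (Fin n) (Fin n) ℂ) (k m : ℕ) :
    Matrix (Fin n) (Fin n) ℂ :=
  ∑ S ∈ Finset.univ.filter (fun S : Finset (Fin m) => S.card = k), Cm A B T m S

lemma aux_det {R : Type*} [CommRing R] {n : ℕ} (K T F R' : Matrix (Fin n) (Fin n) R)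
    (U : Matrix (Fin n) (Fin 1) R) (V : Matrix (Fin 1) (Fin n) R) (s : R)
    (hKT : K * T = 1 - U * V) (hKU : K * U = 0) (hTU : T * U = 0) (hVU : V * U = 1)
    (hR : (1 + s • (F * T)) * R' = 1) :
    (K + s • F).det * (T + U * V).det
      = (1 + s • (F * T)).det * (s * (V * R' * F * U) 0 0) := by
  have hR2 : R' * (1 + s • (F * T)) = 1 := mul_eq_one_comm.mp hR
  have hRU : R' * U = U := by
    have : (1 + s • (F * T)) * U = U := by
      rw [Matrix.add_mul, Matrix.one_mul, Matrix.smul_mul, Matrix.mul_assoc, hTU]; simp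
    calc R' * U = R' * ((1 + s • (F * T)) * U) := by rw [this]
      _ = U := by rw [← Matrix.mul_assoc, hR2, Matrix.one_mul]
  have key : (K + s • F) * (T + U * V)
      = (1 + s • (F * T)) * (1 + (s • (R' * F * U) - U) * V) := by
    have h1 : (1 + s • (F * T)) * (s • (R' * F * U) - U) = s • (F * U) - U := by
      rw [Matrix.mul_sub, Matrix.mul_smul, ← Matrix.mul_assoc, ← Matrix.mul_assoc, hR,
        Matrix.one_mul, Matrix.add_mul, Matrix.one_mul, Matrix.smul_mul, Matrix.mul_assoc F T U, hTU]
      simp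
    rw [Matrix.mul_add (1 + s • (F * T)), ← Matrix.mul_assoc (1 + s • (F * T)), h1, Matrix.mul_add, Matrix.add_mul,
      Matrix.add_mul, hKT, ← Matrix.mul_assoc K, hKU, Matrix.sub_mul]
    simp only [Matrix.smul_mul, Matrix.zero_mul, Matrix.mul_one, Matrix.mul_assoc]
    abel
  rw [← det_mul, key, det_mul, det_one_add_mul_comm, Matrix.mul_sub, hVU]
  congr 1
  rw [add_sub_cancel, det_unique, Matrix.mul_smul]
  simp [Matrix.mul_assoc]

lemma aux_ps {n : ℕ} (K T F : Matrix (Fin n) (Fin n) ℂ)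
    (U : Matrix (Fin n) (Fin 1) ℂ) (V : Matrix (Fin 1) (Fin n) ℂ)
    (hKT : K * T = 1 - U * V) (hKU : K * U = 0) (hTU : T * U = 0) (hVU : V * U = 1)
    (q : Polynomial ℂ) (hq : ∀ s : ℂ, (K + s • F).det = q.eval s) :
    ∃ δ ψ : PowerSeries ℂ, PowerSeries.constantCoeff δ = 1 ∧
      (q : PowerSeries ℂ) * PowerSeries.C ((T + U * V).det) = δ * (PowerSeries.X * ψ) ∧
      ∀ k, PowerSeries.coeff k ψ = (-1) ^ k * (V * (F * T) ^ k * F * U) 0 0 := by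
  let c : ℂ →+* PowerSeries ℂ := PowerSeries.C
  set R : Matrix (Fin n) (Fin n) (PowerSeries ℂ) :=
    1 + (PowerSeries.X : PowerSeries ℂ) • (F.map c * T.map c) with hRdef
  have hδ : PowerSeries.constantCoeff R.det = 1 := by
    rw [RingHom.map_det]
    have : (PowerSeries.constantCoeff (R := ℂ)).mapMatrix R = 1 := by
      ext i j
      simp [hRdef, Matrix.one_apply]
    rw [this, det_one]
  have hu : IsUnit R.det := by
    rw [PowerSeries.isUnit_iff_constantCoeff, hδ]; exact isUnit_one
  have hRR : R * R⁻¹ = 1 := Matrix.mul_nonsing_inv _ hu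
  have hRR2 : R⁻¹ * R = 1 := Matrix.nonsing_inv_mul _ hu
  refine ⟨R.det, (V.map c * R⁻¹ * F.map c * U.map c) 0 0, hδ, ?_, ?_⟩
  · have := aux_det (K.map c) (T.map c) (F.map c) R⁻¹ (U.map c) (V.map c) PowerSeries.X
      (by rw [← Matrix.map_mul, hKT, Matrix.map_sub c (map_sub c), Matrix.map_mul]; simp)
      (by rw [← Matrix.map_mul, hKU]; simp) (by rw [← Matrix.map_mul, hTU]; simp)
      (by rw [← Matrix.map_mul, hVU]; simp) hRR
    rw [← this]
    congr 1
    · have hp : q = (K.map Polynomial.C + (Polynomial.X : Polynomial ℂ) • F.map Polynomial.C).det := by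
        apply Polynomial.funext
        intro s
        rw [← hq, ← Polynomial.coe_evalRingHom, RingHom.map_det]
        congr 1
        ext i j
        simp
        ring
      rw [hp, ← Polynomial.coeToPowerSeries.ringHom_apply, RingHom.map_det]
      congr 1
      ext1 i j
      simp [c]
      ring
    · change c _ = _
      rw [RingHom.map_det]
      congr 1
      rw [← Matrix.map_mul]
      ext1 i j
      simp [-Matrix.map_mul]
  · have gen : ∀ k j, PowerSeries.coeff k
        ((V.map c * R⁻¹ * ((F * T) ^ j * F * U).map c) 0 0)
        = (-1) ^ k * (V * (F * T) ^ (j + k) * F * U) 0 0 := by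
      intro k
      have hrec : ∀ j, (V.map c * R⁻¹ * ((F * T) ^ j * F * U).map c) 0 0
          = c ((V * (F * T) ^ j * F * U) 0 0)
            - PowerSeries.X * (V.map c * R⁻¹ * ((F * T) ^ (j+1) * F * U).map c) 0 0 := by
        intro j
        have h1 : R⁻¹ = 1 - (PowerSeries.X : PowerSeries ℂ) • (R⁻¹ * (F * T).map c) := by
          rw [eq_sub_iff_add_eq]
          conv_rhs => rw [← hRR2, hRdef]
          rw [Matrix.mul_add, Matrix.mul_one, Matrix.mul_smul, Matrix.map_mul]
        have h2 : V.map c * R⁻¹ * ((F * T) ^ j * F * U).map c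
            = (V * (F * T) ^ j * F * U).map c - (PowerSeries.X : PowerSeries ℂ) •
              (V.map c * R⁻¹ * ((F * T) ^ (j+1) * F * U).map c) := by
          conv_lhs => rw [h1]
          rw [Matrix.mul_sub, Matrix.sub_mul, Matrix.mul_one, ← Matrix.map_mul, pow_succ']
          simp only [Matrix.mul_smul, Matrix.smul_mul, Matrix.mul_assoc, Matrix.map_mul]
        rw [h2]
        simp [-Matrix.map_mul]
      induction k with
      | zero => intro j; rw [hrec]; simp [c]
      | succ k ih =>
        intro j
        rw [hrec, map_sub, PowerSeries.coeff_succ_X_mul, ih]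
        simp only [c, PowerSeries.coeff_C, Nat.succ_ne_zero, if_false]
        rw [show j + 1 + k = j + (k + 1) by ring, pow_succ]
        ring
    intro k
    have := gen k 0
    simpa [Matrix.map_mul, Matrix.mul_assoc] using this

lemma aux_poly_s12 {n : ℕ} (hn : 0 < n) (A E : Matrix (Fin n) (Fin n) ℂ) (w : ℂ) (hw : w ≠ 0)
    (h : ∀ x : ℂ, x ^ n = w → (x • A + E).det = 0) (x : ℂ) :
    (x • A + E).det = A.det * (x ^ n - w) := by
  set D : Polynomial ℂ := det ((Polynomial.X : Polynomial ℂ) • A.map Polynomial.C + E.map Polynomial.C)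
    with hD
  have hev : ∀ x, D.eval x = (x • A + E).det := by
    intro x
    rw [hD, ← Polynomial.coe_evalRingHom, RingHom.map_det]
    congr 1
    ext i j
    simp
    ring
  set Q : Polynomial ℂ := Polynomial.X ^ n - Polynomial.C w with hQ
  have hn0 : (n : ℂ) ≠ 0 := by exact_mod_cast hn.ne'
  have hsep : Q.Separable := Polynomial.separable_X_pow_sub_C w hn0 hw
  have hcard : Q.roots.toFinset.card = n := by
    rw [Multiset.toFinset_card_of_nodup (Polynomial.nodup_roots hsep),
      ← (IsAlgClosed.splits Q).natDegree_eq_card_roots, hQ, Polynomial.natDegree_X_pow_sub_C]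
  have hQ0 : Q ≠ 0 := hsep.ne_zero
  have hdeg : D.natDegree ≤ n := by
    simpa using Polynomial.natDegree_det_X_add_C_le A E
  have hco : D.coeff n = A.det := by
    simpa using Polynomial.coeff_det_X_add_C_card A E
  have hQn : Q.natDegree = n := by rw [hQ, Polynomial.natDegree_X_pow_sub_C]
  have hQc : Q.coeff n = 1 := by
    simp [hQ, Polynomial.coeff_C, hn.ne']
  have main : D = Polynomial.C A.det * Q := by
    apply Polynomial.eq_of_degree_sub_lt_of_eval_finset_eq Q.roots.toFinset
    · rw [hcard, Polynomial.degree_lt_iff_coeff_zero]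
      intro m hm
      rcases hm.eq_or_lt with rfl | hm
      · simp [hco, hQc]
      · rw [Polynomial.coeff_sub, Polynomial.coeff_C_mul,
          Polynomial.coeff_eq_zero_of_natDegree_lt (hdeg.trans_lt hm),
          Polynomial.coeff_eq_zero_of_natDegree_lt (hQn.trans_lt hm)]
        simp
    · intro y hy
      rw [Multiset.mem_toFinset, Polynomial.mem_roots hQ0, Polynomial.IsRoot.def] at hy
      rw [hev, h y, Polynomial.eval_mul, hy, mul_zero]
      simpa [hQ, sub_eq_zero] using hy
  rw [← hev, main]
  simp [hQ]

lemma aux_rank {n : ℕ} (hn : 0 < n) (A P : Matrix (Fin n) (Fin n) ℂ) (c : ℂ)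
    (h : ∀ x : ℂ, (x • A - 1).det = c * (x ^ n - 1))
    (hidem : P * P = P) (hAP : (A - 1) * P = 0)
    (hker : ∀ v : Fin n → ℂ, (A - 1).mulVec v = 0 → P.mulVec v = v) :
    ∃ (U : Matrix (Fin n) (Fin 1) ℂ) (V : Matrix (Fin 1) (Fin n) ℂ), P = U * V ∧ V * U = 1 := by
  have hn0 : (n : ℂ) ≠ 0 := by exact_mod_cast hn.ne'
  have hc : c = - (-1) ^ n := by
    have := h 0
    rw [zero_smul, zero_sub, det_neg, det_one, zero_pow hn.ne'] at this
    simp at this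
    rw [this]; ring
  have hchar : A.charpoly = Polynomial.X ^ n - Polynomial.C 1 := by
    have : Polynomial.X * (A.charpoly - (Polynomial.X ^ n - Polynomial.C 1)) = 0 := by
      apply Polynomial.funext
      intro l
      rcases eq_or_ne l 0 with rfl | hl
      · simp
      have e : (Matrix.scalar (Fin n) l - A) = (-l) • (l⁻¹ • A - 1) := by
        rw [smul_sub, smul_smul, neg_mul, mul_inv_cancel₀ hl]
        ext i j
        simp [Matrix.scalar_apply, Matrix.diagonal_apply, Matrix.one_apply]
        split_ifs <;> ring
      rw [Polynomial.eval_mul, Polynomial.eval_sub, Matrix.eval_charpoly, e, det_smul, h, hc]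
      have hl' : l ^ n ≠ 0 := pow_ne_zero _ hl
      have h1 : ((-1 : ℂ) ^ n) * (-1) ^ n = 1 := by rw [← mul_pow]; simp
      simp only [Fintype.card_fin, neg_pow l, inv_pow, Polynomial.eval_X, Polynomial.eval_sub,
        Polynomial.eval_pow, Polynomial.eval_C, Polynomial.eval_zero]
      field_simp
      linear_combination (l * (l ^ n - 1)) * h1
    rcases mul_eq_zero.mp this with h1 | h1
    · exact absurd h1 Polynomial.X_ne_zero
    · exact sub_eq_zero.mp h1
  have hdet : (A - 1).det = 0 := by simpa using h 1
  obtain ⟨u, hu0, hu⟩ := Matrix.exists_mulVec_eq_zero_iff.mpr hdet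
  have hfin : Module.finrank ℂ (Module.End.eigenspace (Matrix.toLin' A) 1) ≤ 1 := by
    refine (LinearMap.finrank_eigenspace_le _ _).trans ?_
    rw [Matrix.charpoly_toLin', hchar]
    exact Polynomial.rootMultiplicity_le_one_of_separable
      (Polynomial.separable_X_pow_sub_C _ hn0 one_ne_zero) _
  have hmem : ∀ v : Fin n → ℂ, (A - 1).mulVec v = 0 →
      v ∈ Module.End.eigenspace (Matrix.toLin' A) 1 := by
    intro v hv
    rw [Module.End.mem_eigenspace_iff, Matrix.toLin'_apply, one_smul]
    rw [Matrix.sub_mulVec, Matrix.one_mulVec, sub_eq_zero] at hv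
    exact hv
  have hmul : ∀ v : Fin n → ℂ, (A - 1).mulVec v = 0 → ∃ t : ℂ, t • u = v := by
    intro v hv
    obtain ⟨w, hw⟩ := finrank_le_one_iff.mp hfin
    obtain ⟨a, ha⟩ := hw ⟨u, hmem u hu⟩
    obtain ⟨b, hb⟩ := hw ⟨v, hmem v hv⟩
    have ha' : a • (w : Fin n → ℂ) = u := congrArg Subtype.val ha
    have hb' : b • (w : Fin n → ℂ) = v := congrArg Subtype.val hb
    have a0 : a ≠ 0 := by rintro rfl; simp at ha'; exact hu0 ha'.symm
    exact ⟨b / a, by rw [← ha', ← hb', smul_smul, div_mul_cancel₀ _ a0]⟩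
  have hcol : ∀ j, ∃ t : ℂ, t • u = fun i => P i j := by
    intro j
    apply hmul
    ext i
    exact congrFun (congrFun hAP i) j
  choose t ht using hcol
  refine ⟨Matrix.of fun i _ => u i, Matrix.of fun _ j => t j, ?_, ?_⟩
  · ext i j
    rw [Matrix.mul_apply]
    have := congrFun (ht j) i
    simp at this ⊢
    rw [← this]; ring
  · obtain ⟨i, hi⟩ := Function.ne_iff.mp hu0
    have h1 := congrFun (hker u hu) i
    have h2 : P.mulVec u i = (∑ j, t j * u j) * u i := by
      rw [Matrix.mulVec, dotProduct, Finset.sum_mul]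
      refine Finset.sum_congr rfl fun j _ => ?_
      have := congrFun (ht j) i
      simp at this
      rw [← this]; ring
    rw [h2] at h1
    have h3 : ∑ j, t j * u j = 1 := mul_right_cancel₀ hi (by rw [h1, one_mul])
    ext a b
    fin_cases a; fin_cases b
    simp [Matrix.mul_apply, h3]

lemma aux_expand {n : ℕ} (A B T : Matrix (Fin n) (Fin n) ℂ) (m : ℕ) (b : ℂ) :
    ((B + b • (A * B)) * T) ^ m * (B + b • (A * B))
      = ∑ k ∈ Finset.range (m + 2), b ^ k • Ccal A B T k (m + 1) := by
  let f := MultilinearMap.mkPiAlgebraFin ℂ (m + 1) (Matrix (Fin n) (Fin n) ℂ)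
  let X : Fin (m + 1) → Matrix (Fin n) (Fin n) ℂ := fun s =>
    if (s : ℕ) + 1 = m + 1 then A * B else A * B * T
  let Y : Fin (m + 1) → Matrix (Fin n) (Fin n) ℂ := fun s =>
    if (s : ℕ) + 1 = m + 1 then B else B * T
  have h1 : f ((fun s => b • X s) + Y)
      = ((B + b • (A * B)) * T) ^ m * (B + b • (A * B)) := by
    rw [MultilinearMap.mkPiAlgebraFin_apply, List.ofFn_succ']
    rw [List.concat_eq_append, List.prod_append]
    congr 1
    · rw [← List.prod_replicate, ← List.ofFn_const]
      congr 2
      funext i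
      have : ¬ (i : ℕ) + 1 = m + 1 := by have := i.2; omega
      simp only [Pi.add_apply, X, Y, Fin.val_castSucc, if_neg this]
      rw [Matrix.add_mul, Matrix.smul_mul, add_comm]
    · simp [X, Y, add_comm]
  rw [← h1, MultilinearMap.map_add_univ]
  have h2 : ∀ S : Finset (Fin (m + 1)), f (S.piecewise (fun s => b • X s) Y)
      = b ^ S.card • Cm A B T (m + 1) S := by
    intro S
    have : S.piecewise (fun s => b • X s) Y
        = fun s => (if s ∈ S then b else 1) • Cfactor A B T (m + 1) S s := by
      funext s
      by_cases hs : s ∈ S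
      · simp [hs, X, Cfactor]
      · simp [hs, Y, Cfactor]
    rw [this, MultilinearMap.map_smul_univ, Finset.prod_ite_mem, Finset.univ_inter,
      Finset.prod_const, MultilinearMap.mkPiAlgebraFin_apply, Cm, List.ofFn_eq_map]
  simp only [h2, Ccal, Finset.smul_sum]
  rw [← Finset.sum_fiberwise_of_maps_to (s := Finset.univ) (t := Finset.range (m + 2))
    (g := fun S : Finset (Fin (m + 1)) => S.card)]
  · refine Finset.sum_congr rfl fun k _ => Finset.sum_congr rfl fun S hS => ?_
    rw [(Finset.mem_filter.mp hS).2]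
  · intro S _
    have := Finset.card_le_univ S
    simp at this ⊢
    omega

theorem stmt_12 (n : ℕ) (hn : 2 ≤ n)
    (A B : Matrix (Fin n) (Fin n) ℂ)
    (hA : A * Aᴴ = Aᴴ * A)
    (hB : ‖Matrix.toEuclideanCLM (𝕜 := ℂ) B‖ = 1)
    (hspec : {p : ℂ × ℂ × ℂ |
        (p.1 • A + p.2.1 • B + p.2.2 • (A * B) - 1).det = 0} =
      {p : ℂ × ℂ × ℂ |
        p.1 ^ n + p.2.1 ^ n + (-1 : ℂ) ^ (n - 1) * p.2.2 ^ n = 1})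
    -- `P₀` is the orthogonal projection onto `ker (A - 1)`
    (P₀ : Matrix (Fin n) (Fin n) ℂ)
    (hP₀herm : P₀ᴴ = P₀) (hP₀idem : P₀ * P₀ = P₀)
    (hP₀range : (A - 1) * P₀ = 0)
    (hP₀ker : ∀ v : Fin n → ℂ, (A - 1).mulVec v = 0 → P₀.mulVec v = v)
    -- `T` is the reduced resolvent of `A` at the eigenvalue `1`
    (T : Matrix (Fin n) (Fin n) ℂ)
    (hTP₀ : T * P₀ = 0) (hP₀T : P₀ * T = 0)
    (hT₁ : T * (A - 1) = 1 - P₀) (hT₂ : (A - 1) * T = 1 - P₀) :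
    (∀ m k : ℕ,
      ((1 ≤ m ∧ m ≤ n - 1 ∧ k ≤ m) ∨ (m = n ∧ 1 ≤ k ∧ k ≤ n - 1)) →
        P₀ * Ccal A B T k m * P₀ = 0) ∧
    P₀ * Ccal A B T n n * P₀ = ((1 : ℂ) / n) • P₀ := by
  have hn' : 0 < n := by omega
  have hn0 : (n : ℂ) ≠ 0 := by exact_mod_cast hn'.ne'
  set c := A.det with hc
  have hdet : ∀ y z : ℂ, y ^ n + (-1 : ℂ) ^ (n - 1) * z ^ n ≠ 1 → ∀ x : ℂ,
      (x • A + y • B + z • (A * B) - 1).det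
        = c * (x ^ n - (1 - (y ^ n + (-1 : ℂ) ^ (n - 1) * z ^ n))) := by
    intro y z hyz x
    have e : ∀ x : ℂ, x • A + y • B + z • (A * B) - 1
        = x • A + (y • B + z • (A * B) - 1) := fun x => by abel
    rw [e]
    apply aux_poly_s12 hn'
    · intro h0
      exact hyz (sub_eq_zero.mp h0).symm
    · intro x hx
      rw [← e]
      have : (x, y, z) ∈ {p : ℂ × ℂ × ℂ |
        p.1 ^ n + p.2.1 ^ n + (-1 : ℂ) ^ (n - 1) * p.2.2 ^ n = 1} := by
        simp only [Set.mem_setOf_eq, hx]; ring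
      rw [← hspec] at this
      exact this
  have hdet0 : ∀ x : ℂ, (x • A - 1).det = c * (x ^ n - 1) := by
    intro x
    have := hdet 0 0 (by simp [hn'.ne']) x
    simpa [hn'.ne'] using this
  obtain ⟨U, V, hP, hVU⟩ := aux_rank hn' A P₀ c hdet0 hP₀idem hP₀range hP₀ker
  have hPU : P₀ * U = U := by rw [hP, Matrix.mul_assoc, hVU, Matrix.mul_one]
  have hKU : (A - 1) * U = 0 := by
    rw [← hPU, ← Matrix.mul_assoc, hP₀range, Matrix.zero_mul]
  have hTU : T * U = 0 := by
    rw [← hPU, ← Matrix.mul_assoc, hTP₀, Matrix.zero_mul]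
  have hAU : A * U = U := by
    rw [Matrix.sub_mul, Matrix.one_mul, sub_eq_zero] at hKU; exact hKU
  rw [hP] at hT₂
  set d := (T + U * V).det with hd
  -- the normalisation
  have hcd : c * d * n = 1 := by
    obtain ⟨δ, ψ, h1, h2, h3⟩ := aux_ps (A - 1) T A U V hT₂ hKU hTU hVU
      (Polynomial.C c * ((1 + Polynomial.X) ^ n - 1)) (by
        intro s
        have : A - 1 + s • A = (1 + s) • A - 1 := by rw [add_smul, one_smul]; abel
        rw [this, hdet0]; simp)
    have h4 := congrArg (PowerSeries.coeff (0 + 1)) h2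
    rw [mul_left_comm, PowerSeries.coeff_succ_X_mul,
      PowerSeries.coeff_mul_C, Polynomial.coeff_coe, Polynomial.coeff_C_mul,
      Polynomial.coeff_sub, Polynomial.coeff_one_add_X_pow,
      PowerSeries.coeff_zero_eq_constantCoeff_apply, map_mul, h1,
      ← PowerSeries.coeff_zero_eq_constantCoeff_apply, h3] at h4
    simp [Matrix.mul_assoc, hAU, hVU, Polynomial.coeff_one] at h4
    linear_combination h4
  -- the main expansion
  have hphi : ∀ b : ℂ, ∀ j, j ≤ n - 1 →
      (-1 : ℂ) ^ j * (V * (((B + b • (A * B)) * T) ^ j * (B + b • (A * B))) * U) 0 0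
        = if j = n - 1 then (1 + (-1 : ℂ) ^ (n - 1) * b ^ n) / n else 0 := by
    intro b j hj
    set g := 1 + (-1 : ℂ) ^ (n - 1) * b ^ n with hg
    set F := B + b • (A * B) with hF
    have hK : ∀ s : ℂ, (A - 1 + s • F).det
        = (Polynomial.C (c * g) * Polynomial.X ^ n : Polynomial ℂ).eval s := by
      set D : Polynomial ℂ :=
        ((A - 1).map Polynomial.C + (Polynomial.X : Polynomial ℂ) • F.map Polynomial.C).det with hD
      have hev : ∀ s, D.eval s = (A - 1 + s • F).det := by
        intro x
        rw [hD, ← Polynomial.coe_evalRingHom, RingHom.map_det]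
        congr 1
        ext i j
        simp
        ring
      have hz : (D - Polynomial.C (c * g) * Polynomial.X ^ n)
          * (Polynomial.C g * Polynomial.X ^ n - 1) = 0 := by
        apply Polynomial.funext
        intro s
        rw [Polynomial.eval_mul, Polynomial.eval_sub, hev]
        by_cases hs : g * s ^ n = 1
        · simp [hs]
        · have e2 : s ^ n + (-1 : ℂ) ^ (n - 1) * (s * b) ^ n = g * s ^ n := by
            rw [hg, mul_pow]; ring
          have := hdet s (s * b) (by rw [e2]; exact hs) 1
          rw [e2] at this
          have e3 : A - 1 + s • F = (1 : ℂ) • A + s • B + (s * b) • (A * B) - 1 := by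
            rw [hF, one_smul, smul_add, smul_smul]; abel
          rw [e3, this]
          simp
          left; ring
      have hne : (Polynomial.C g * Polynomial.X ^ n - 1 : Polynomial ℂ) ≠ 0 := by
        intro h
        have := congrArg (Polynomial.eval 0) h
        simp [hn'.ne'] at this
      have := sub_eq_zero.mp ((mul_eq_zero.mp hz).resolve_right hne)
      intro s
      rw [← hev, this]
    obtain ⟨δ, ψ, h1, h2, h3⟩ := aux_ps (A - 1) T F U V hT₂ hKU hTU hVU _ hK
    rw [← Matrix.mul_assoc V, ← h3]
    obtain ⟨N, rfl⟩ : ∃ N, n = N + 1 := ⟨n - 1, by omega⟩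
    have h4 : PowerSeries.C (c * g * d) * PowerSeries.X ^ N = δ * ψ := by
      apply mul_left_cancel₀ (PowerSeries.X_ne_zero (R := ℂ))
      rw [mul_left_comm _ δ ψ, ← h2]
      simp [hd]
      ring
    have hu : δ * δ⁻¹ = 1 := PowerSeries.mul_inv_cancel δ (by rw [h1]; exact one_ne_zero)
    have h5 : ψ = PowerSeries.X ^ N * (PowerSeries.C (c * g * d) * δ⁻¹) := by
      linear_combination (-ψ) * hu - δ⁻¹ * h4
    rw [h5]
    simp only [Nat.add_sub_cancel] at hj ⊢
    rw [PowerSeries.coeff_X_pow_mul']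
    by_cases hjN : j = N
    · subst hjN
      simp only [le_refl, if_true, Nat.sub_self, PowerSeries.coeff_C_mul,
        PowerSeries.coeff_zero_eq_constantCoeff_apply, PowerSeries.constantCoeff_inv, h1, inv_one]
      rw [eq_div_iff hn0]
      linear_combination g * hcd
    · rw [if_neg (by omega), if_neg hjN]
  have hPMP : ∀ M : Matrix (Fin n) (Fin n) ℂ, P₀ * M * P₀ = ((V * M * U) 0 0) • P₀ := by
    intro M
    have e : V * M * U = ((V * M * U) 0 0) • (1 : Matrix (Fin 1) (Fin 1) ℂ) := by
      ext a b
      fin_cases a; fin_cases b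
      simp
    calc P₀ * M * P₀ = U * (V * M * U) * V := by rw [hP]; simp only [Matrix.mul_assoc]
      _ = _ := by
        rw [e, Matrix.mul_smul, Matrix.mul_one, Matrix.smul_mul, hP]
        simp
  -- comparing coefficients
  have hcoef : ∀ m, 1 ≤ m → m ≤ n → ∀ k, k ≤ m → (V * Ccal A B T k m * U) 0 0
      = if m = n then (if k = 0 then (-1 : ℂ) ^ (n - 1) / n else if k = n then 1 / n else 0)
        else 0 := by
    intro m hm1 hmn k hk
    obtain ⟨j, rfl⟩ : ∃ j, m = j + 1 := ⟨m - 1, by omega⟩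
    have hsq : ∀ i : ℕ, (-1 : ℂ) ^ i * (-1) ^ i = 1 := by
      intro i; rw [← mul_pow]; simp
    have hpoly : (∑ i ∈ Finset.range (j + 2),
          Polynomial.C ((V * Ccal A B T i (j + 1) * U) 0 0) * Polynomial.X ^ i : Polynomial ℂ)
        = if j + 1 = n then Polynomial.C ((-1 : ℂ) ^ (n - 1) / n)
            + Polynomial.C (1 / (n : ℂ)) * Polynomial.X ^ n else 0 := by
      apply Polynomial.funext
      intro b
      have h := hphi b j (by omega)
      rw [aux_expand, Matrix.mul_sum, Matrix.sum_mul, Matrix.sum_apply] at h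
      simp only [Matrix.mul_smul, Matrix.smul_mul, Matrix.smul_apply, smul_eq_mul] at h
      rw [Polynomial.eval_finset_sum]
      simp only [Polynomial.eval_mul, Polynomial.eval_C, Polynomial.eval_pow, Polynomial.eval_X]
      simp only [mul_comm _ (b ^ _)]
      by_cases hj : j + 1 = n
      · rw [if_pos (by omega)] at h
        rw [if_pos hj]
        simp only [Polynomial.eval_mul, Polynomial.eval_C, Polynomial.eval_pow, Polynomial.eval_X,
          Polynomial.eval_add]
        have hj' : n - 1 = j := by omega
        rw [hj'] at h ⊢
        field_simp at h ⊢
        generalize (∑ i ∈ Finset.range (j + 2), b ^ i * (V * Ccal A B T i (j + 1) * U) 0 0) = Z at *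
        linear_combination (-1 : ℂ) ^ j * h + (b ^ n - n * Z) * hsq j
      · rw [if_neg (by omega)] at h
        rw [if_neg hj]
        simpa using h
    have hcf := congrArg (fun p => Polynomial.coeff p k) hpoly
    simp only [Polynomial.finset_sum_coeff, Polynomial.coeff_C_mul, Polynomial.coeff_X_pow] at hcf
    rw [Finset.sum_eq_single k (by intro i _ hi; simp [hi.symm])
      (by intro h; simp at h; omega)] at hcf
    simp only [if_true, mul_one] at hcf
    rw [hcf]
    split_ifs with h1 h2 h3
    · subst h2
      simp [hn'.ne]
    · subst h3
      simp [Polynomial.coeff_C, h2]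
    · simp [Polynomial.coeff_C, Polynomial.coeff_X_pow, h2, h3]
    · simp
  refine ⟨?_, ?_⟩
  · rintro m k (⟨h1, h2, h3⟩ | ⟨rfl, h1, h2⟩)
    · rw [hPMP, hcoef m h1 (by omega) k h3, if_neg (by omega), zero_smul]
    · rw [hPMP, hcoef m (by omega) le_rfl k (by omega), if_pos rfl, if_neg (by omega),
        if_neg (by omega), zero_smul]
  · rw [hPMP, hcoef n (by omega) le_rfl n le_rfl, if_pos rfl, if_neg (by omega), if_pos rfl]
end
end
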